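/- arXiv:2510.18392 — 4 statements merged into one kernel-verified Lean document; each statement's English description precedes it below -/
import Mathlib

section
/- Let d ∈ {1,2}. Let (U_k)_{k∈ℤ^d} be a stationary field of random vectors in ℝ^d (i.e. for every m ∈ ℤ^d the family (U_{k+m})_{k∈ℤ^d} has the same joint law as (U_k)_{k∈ℤ^d}) with E‖U_0‖² < ∞, and let U be uniform on [0,1]^d, independent of the field. For R > 0 let N(R) = ∑_{k∈ℤ^d} 1_{B_R}(k + U + U_k), the number of points of the perturbed lattice Z^{d,U} = {k + U + U_k : k ∈ ℤ^d} in the ball B_R (almost surely finite). Then: if d = 1, sup_{R>0} Var(N(R)) < ∞; if d = 2, Var(N(R)) = o(R²) as R → ∞, i.e. Z^{d,U} is hyperuniform. -/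
/-!
The number variance is an integral of pair correlations. Let `g_R z = |B_R ∩ (B_R - z)|` be the
covariogram of the ball (`cov`). The uniform shift `V` and stationarity give
`E N = |B_R|` and `E N² = ∑_m E g_R (m + U_m - U_0)`, while
`|B_R|² = ∫ g_R = ∑_m E g_R (m + W)` with `W` uniform on the centred unit cube. Writing both sums as
integrals over `x`, with `m = cell x` (`pairDens`, `pairDens₀`), `Var N` is the integral of
`E g_R (x + v) - E g_R (x + v₀)` (`variance_formula`), where `v` and `v₀` are the displacements
`disp` and `disp₀` that bring `x` to `m + U_m - U_0` and `m + W`. Both have mean `m - x`, by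
stationarity and since the cube is centred. So the linear part of `g_R` at `x` cancels, and only
the first-order Taylor remainder of `g_R` matters (`pairDens_sub`).

In dimension one, `g_R s = (2R - |s|)₊` is piecewise linear. The remainder vanishes unless the
displacement carries `x` across one of the three corners `0, ± 2R`, and then it is at most a
multiple of `|v|`; integrated over `x` this costs `O(E|v|²)`, uniformly in `R` (`bound_one`).

In dimension two, `g_R (R z) = R² g_1 z`. The gradient of `g_1` is explicit, and the Hessian is
dominated by a locally integrable weight, singular at the origin and on the circle of radius `2`.
Hence, by dominated convergence, `Var N / R²` differs by `o(1)` from the integral over `z` of the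
quadratic term `½ (E⟨H v, v⟩ - E⟨H v₀, v₀⟩)`, `H = D² g_1 (z)`, `x = R z`; pairs at distance at
least `4R` contribute `o(R²)` because `E‖U_0‖² < ∞` (`far_le`). In the quadratic term the second
moments of `v` and `v₀` differ by a constant minus correlations `E[U_m ⊗ U_0]` (`momDiff_eq`). The
entries of `H` have zero integral, because `∫ g_1` is invariant under translations
(`setIntegral_hessSym`). This removes the constant. A weighted mean ergodic theorem for isometric
actions of `ℤ^d` (`weighted_ergodic`) shows that the correlations, averaged against the dilated
mean-zero weight, tend to zero. This gives `tendsto_densDiff`, and `Var N = o(R²)` (`bound_two`,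
`tendsto_rate`).
-/


open MeasureTheory ProbabilityTheory Filter Asymptotics Metric
open scoped ENNReal NNReal

/-- The embedding of the lattice `ℤ^d` into `ℝ^d`. -/
noncomputable def latt {d : ℕ} (k : Fin d → ℤ) : EuclideanSpace ℝ (Fin d) :=
  (EuclideanSpace.equiv (Fin d) ℝ).symm fun i => (k i : ℝ)

/-- The unit cube `[0,1]^d` in `ℝ^d`. -/
def unitCube (d : ℕ) : Set (EuclideanSpace ℝ (Fin d)) :=
  {x | ∀ i, x i ∈ Set.Icc (0 : ℝ) 1}

/-! ### Cells and the unit cube -/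

namespace PertLattice

/-- Euclidean space `ℝ^d`. -/
abbrev Eu (d : ℕ) := EuclideanSpace ℝ (Fin d)

/-- Coordinatewise integer part, the cell of `x` in the tiling of `ℝ^d` by unit cubes. -/
noncomputable def cell {d : ℕ} (x : Eu d) : Fin d → ℤ := fun i => ⌊x i⌋

/-- The half-open unit cube `[0,1)^d`, a fundamental domain for `ℤ^d`. -/
def hCube (d : ℕ) : Set (Eu d) := {x | ∀ i, x i ∈ Set.Ico (0 : ℝ) 1}

variable {d : ℕ}

@[simp] lemma latt_apply (k : Fin d → ℤ) (i : Fin d) : latt k i = (k i : ℝ) := rfl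

lemma latt_add (k m : Fin d → ℤ) : latt (k + m) = latt k + latt m := by
  ext i; simp

lemma measurable_cell : Measurable (cell : Eu d → (Fin d → ℤ)) := by
  refine measurable_pi_lambda _ fun i => ?_
  exact Int.measurable_floor.comp (by fun_prop)

lemma measurableSet_hCube : MeasurableSet (hCube d) := by
  have : hCube d = ⋂ i, (fun x : Eu d => x i) ⁻¹' Set.Ico (0 : ℝ) 1 := by
    ext x; simp [hCube]
  rw [this]
  exact MeasurableSet.iInter fun i => (by fun_prop : Measurable fun x : Eu d => x i) measurableSet_Ico

lemma hCube_eq_preimage : hCube d =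
    (MeasurableEquiv.toLp 2 (Fin d → ℝ)).symm ⁻¹' (Set.univ.pi fun _ => Set.Ico (0 : ℝ) 1) := by
  ext x; simp [hCube, Set.mem_pi]

lemma unitCube_eq_preimage : unitCube d =
    (MeasurableEquiv.toLp 2 (Fin d → ℝ)).symm ⁻¹' (Set.univ.pi fun _ => Set.Icc (0 : ℝ) 1) := by
  ext x
  simp only [unitCube, Set.mem_ofPred_eq, Set.mem_preimage, Set.mem_pi, Set.mem_univ, true_imp_iff]
  rfl

lemma volume_hCube : volume (hCube d) = 1 := by
  rw [hCube_eq_preimage, (EuclideanSpace.volume_preserving_symm_measurableEquiv_toLp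
    (Fin d)).measure_preimage_equiv]
  rw [Real.volume_pi_Ico]
  simp

lemma restrict_unitCube :
    (volume : Measure (Eu d)).restrict (unitCube d) = volume.restrict (hCube d) := by
  apply Measure.restrict_congr_set
  rw [hCube_eq_preimage, unitCube_eq_preimage]
  apply (EuclideanSpace.volume_preserving_symm_measurableEquiv_toLp
    (Fin d)).quasiMeasurePreserving.preimage_ae_eq
  rw [Set.pi_univ_Icc]
  exact (Measure.univ_pi_Ico_ae_eq_Icc (μ := fun _ : Fin d => (volume : Measure ℝ))).symm

instance : IsProbabilityMeasure ((volume : Measure (Eu d)).restrict (hCube d)) :=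
  ⟨by rw [Measure.restrict_apply_univ, volume_hCube]⟩

lemma cell_latt_add {w : Eu d} (hw : w ∈ hCube d) (k : Fin d → ℤ) : cell (latt k + w) = k := by
  ext i
  have := hw i
  simp only [cell, PiLp.add_apply, latt_apply, Int.floor_intCast_add]
  rw [Int.floor_eq_zero_iff.2 this, add_zero]

lemma sub_cell_mem (x : Eu d) : x - latt (cell x) ∈ hCube d := by
  intro i
  simp only [PiLp.sub_apply, latt_apply, cell]
  exact ⟨sub_nonneg.2 (Int.floor_le _), by linarith [Int.lt_floor_add_one (x i)]⟩

/-- The unit cubes with integer corners tile the space. -/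
lemma lintegral_tiling (F : Eu d → ℝ≥0∞) :
    ∫⁻ x, F x = ∑' k, ∫⁻ w in hCube d, F (latt k + w) := by
  have h1 : (⋃ k : Fin d → ℤ, cell (d := d) ⁻¹' {k}) = Set.univ := by ext; simp
  rw [← setLIntegral_univ, ← h1, lintegral_iUnion
    (fun k => measurable_cell (measurableSet_singleton k))
    (fun k l hkl => Set.disjoint_left.2 fun x hx hy => hkl (by
      simp only [Set.mem_preimage, Set.mem_singleton_iff] at hx hy; rw [← hx, ← hy]))]
  refine tsum_congr fun k => ?_
  have h2 : hCube d = (fun w => latt k + w) ⁻¹' (cell ⁻¹' {k}) := by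
    ext w
    constructor
    · intro hw; exact cell_latt_add hw k
    · intro hw
      have := sub_cell_mem (latt k + w)
      simp only [Set.mem_preimage, Set.mem_singleton_iff] at hw
      rw [hw] at this
      simpa using this
  rw [h2]
  exact ((measurePreserving_add_left volume (latt k)).setLIntegral_comp_preimage_emb
    (measurableEmbedding_addLeft _) F _).symm

/-- A sum over the lattice is the integral of the function made constant on each cell. -/
lemma tsum_eq_lintegral_cell (f : (Fin d → ℤ) → ℝ≥0∞) : ∑' k, f k = ∫⁻ x, f (cell x) := by
  rw [lintegral_tiling]
  refine tsum_congr fun k => ?_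
  rw [setLIntegral_congr_fun measurableSet_hCube
    (g := fun _ => f k) (fun w hw => by simp only [cell_latt_add hw k])]
  simp

end PertLattice

/-! ### First and second moments of the counting function -/

namespace PertLattice
variable {d : ℕ}

/-- The space of displacement fields. -/
abbrev Field (d : ℕ) := (Fin d → ℤ) → Eu d

/-- Stationarity of a law on the space of displacement fields. -/
def Stationary (μ : Measure (Field d)) : Prop :=
  ∀ m : Fin d → ℤ, MeasurePreserving (fun (θ : Field d) k => θ (k + m)) μ μ

/-- The indicator function of `B`, with values in `[0,∞]`. -/
noncomputable def ind (B : Set (Eu d)) (x : Eu d) : ℝ≥0∞ := B.indicator (fun _ => 1) x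

lemma measurable_ind {B : Set (Eu d)} (hB : MeasurableSet B) : Measurable (ind B) :=
  measurable_const.indicator hB

/-- The set covariance `z ↦ |B ∩ (B - z)|`. -/
noncomputable def setCov (B : Set (Eu d)) (z : Eu d) : ℝ≥0∞ := ∫⁻ x, ind B x * ind B (x + z)

lemma measurable_setCov {B : Set (Eu d)} (hB : MeasurableSet B) : Measurable (setCov B) := by
  have := measurable_ind hB
  unfold setCov
  apply Measurable.lintegral_prod_right (f := fun (z x : Eu d) => ind B x * ind B (x + z))
  unfold Function.uncurry
  fun_prop

/-- The number of points of the lattice, shifted by `v` and perturbed by `θ`, in `B`. -/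
noncomputable def count (B : Set (Eu d)) (v : Eu d) (θ : Field d) : ℝ≥0∞ :=
  ∑' k, ind B (latt k + v + θ k)

lemma measurable_count {B : Set (Eu d)} (hB : MeasurableSet B) :
    Measurable (fun p : Eu d × Field d => count B p.1 p.2) := by
  have := measurable_ind hB
  unfold count
  fun_prop

lemma Stationary.lintegral_coord {μ : Measure (Field d)} (hμ : Stationary μ) (k : Fin d → ℤ)
    {f : Eu d → ℝ≥0∞} (hf : Measurable f) : ∫⁻ θ, f (θ k) ∂μ = ∫⁻ θ, f (θ 0) ∂μ := by
  have := (hμ k).lintegral_comp (f := fun θ : Field d => f (θ 0)) (by fun_prop)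
  simpa using this

/-- The intensity of the perturbed lattice is one. -/
lemma first_moment {μ : Measure (Field d)} [IsProbabilityMeasure μ] (hμ : Stationary μ)
    {B : Set (Eu d)} (hB : MeasurableSet B) :
    ∫⁻ θ, (∫⁻ v in hCube d, count B v θ) ∂μ = volume B := by
  have hi := measurable_ind hB
  have hm : ∀ k : Fin d → ℤ, Measurable fun y : Eu d => ∫⁻ v in hCube d, ind B (latt k + v + y) := by
    intro k
    apply Measurable.lintegral_prod_right (f := fun (y v : Eu d) => ind B (latt k + v + y))
    unfold Function.uncurry
    fun_prop
  have h1 : ∀ θ : Field d, ∫⁻ v in hCube d, count B v θ =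
      ∑' k, ∫⁻ v in hCube d, ind B (latt k + v + θ k) := by
    intro θ
    unfold count
    rw [lintegral_tsum]
    intro k; fun_prop
  simp_rw [h1]
  have hm1 : ∀ k l : Fin d → ℤ, Measurable fun θ : Field d =>
      ∫⁻ v in hCube d, ind B (latt k + v + θ l) :=
    fun k l => (hm k).comp (measurable_pi_apply l)
  rw [lintegral_tsum (fun k => (hm1 k k).aemeasurable)]
  have h2 : ∀ k : Fin d → ℤ, ∫⁻ θ, (∫⁻ v in hCube d, ind B (latt k + v + θ k)) ∂μ =
      ∫⁻ θ, (∫⁻ v in hCube d, ind B (latt k + v + θ 0)) ∂μ := fun k =>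
    hμ.lintegral_coord k (hm k)
  simp_rw [h2]
  rw [← lintegral_tsum (fun k => (hm1 k 0).aemeasurable)]
  have h3 : ∀ θ : Field d, ∑' k, ∫⁻ v in hCube d, ind B (latt k + v + θ 0) = volume B := by
    intro θ
    rw [← lintegral_tiling (fun x => ind B (x + θ 0)), lintegral_add_right_eq_self]
    unfold ind
    rw [lintegral_indicator_const hB, one_mul]
  simp [h3]

/-- The two-point function of the perturbed lattice: by stationarity, pairs of points are counted
through the set covariance evaluated at the differences of points. -/
lemma second_moment {μ : Measure (Field d)} [IsProbabilityMeasure μ] (hμ : Stationary μ)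
    {B : Set (Eu d)} (hB : MeasurableSet B) :
    ∫⁻ θ, (∫⁻ v in hCube d, count B v θ ^ 2) ∂μ =
      ∫⁻ x, ∫⁻ θ, setCov B (latt (cell x) + θ (cell x) - θ 0) ∂μ := by
  have hi := measurable_ind hB
  have h0 : ∀ v θ, count B v θ ^ 2 = ∑' m, ∑' k,
      ind B (latt k + v + θ k) * ind B (latt k + v + (latt m + θ (m + k))) := by
    intro v θ
    rw [ENNReal.tsum_comm, sq]
    nth_rewrite 1 [show count B v θ = ∑' k, ind B (latt k + v + θ k) from rfl]
    rw [← ENNReal.tsum_mul_right]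
    refine tsum_congr fun k => ?_
    rw [ENNReal.tsum_mul_left]
    congr 1
    rw [show count B v θ = ∑' k, ind B (latt k + v + θ k) from rfl, ← (Equiv.addRight k).tsum_eq]
    refine tsum_congr fun m => ?_
    congr 1
    simp only [Equiv.coe_addRight, latt_add]
    abel
  have hm : ∀ m k : Fin d → ℤ, Measurable fun θ : Field d => ∫⁻ v in hCube d,
      ind B (latt k + v + θ 0) * ind B (latt k + v + (latt m + θ m)) := by
    intro m k
    apply Measurable.lintegral_prod_right (f := fun (θ : Field d) (v : Eu d) =>
      ind B (latt k + v + θ 0) * ind B (latt k + v + (latt m + θ m)))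
    unfold Function.uncurry
    fun_prop
  have hm' : ∀ m k : Fin d → ℤ, Measurable fun θ : Field d => ∫⁻ v in hCube d,
      ind B (latt k + v + θ k) * ind B (latt k + v + (latt m + θ (m + k))) := by
    intro m k
    apply Measurable.lintegral_prod_right (f := fun (θ : Field d) (v : Eu d) =>
      ind B (latt k + v + θ k) * ind B (latt k + v + (latt m + θ (m + k))))
    unfold Function.uncurry
    fun_prop
  have h1 : ∀ θ : Field d, ∫⁻ v in hCube d, count B v θ ^ 2 = ∑' m, ∑' k,
      ∫⁻ v in hCube d, ind B (latt k + v + θ k) * ind B (latt k + v + (latt m + θ (m + k))) := by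
    intro θ
    simp_rw [h0]
    rw [lintegral_tsum (fun m => by fun_prop)]
    refine tsum_congr fun m => ?_
    rw [lintegral_tsum (fun m => by fun_prop)]
  simp_rw [h1]
  rw [lintegral_tsum (fun m => (Measurable.tsum (fun k => hm' m k)).aemeasurable)]
  rw [← tsum_eq_lintegral_cell (fun m => ∫⁻ θ, setCov B (latt m + θ m - θ 0) ∂μ)]
  refine tsum_congr fun m => ?_
  rw [lintegral_tsum (fun k => (hm' m k).aemeasurable)]
  have h2 : ∀ k : Fin d → ℤ, ∫⁻ θ, (∫⁻ v in hCube d,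
      ind B (latt k + v + θ k) * ind B (latt k + v + (latt m + θ (m + k)))) ∂μ =
      ∫⁻ θ, (∫⁻ v in hCube d,
      ind B (latt k + v + θ 0) * ind B (latt k + v + (latt m + θ m))) ∂μ := by
    intro k
    have := (hμ k).lintegral_comp (hm m k)
    simpa using this
  simp_rw [h2]
  rw [← lintegral_tsum (fun k => (hm m k).aemeasurable)]
  refine lintegral_congr fun θ => ?_
  rw [← lintegral_tiling (fun x => ind B (x + θ 0) * ind B (x + (latt m + θ m)))]
  unfold setCov
  rw [← lintegral_add_right_eq_self (fun x => ind B x * ind B (x + (latt m + θ m - θ 0))) (θ 0)]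
  refine lintegral_congr fun x => ?_
  congr 2
  abel

lemma lintegral_setCov {B : Set (Eu d)} (hB : MeasurableSet B) :
    ∫⁻ z, setCov B z = volume B ^ 2 := by
  have hi := measurable_ind hB
  have hv : ∫⁻ x, ind B x = volume B := by
    unfold ind
    rw [lintegral_indicator_const hB, one_mul]
  unfold setCov
  rw [lintegral_lintegral_swap (by unfold Function.uncurry; fun_prop)]
  have : ∀ x : Eu d, ∫⁻ z, ind B x * ind B (x + z) = ind B x * volume B := by
    intro x
    rw [lintegral_const_mul _ (by fun_prop), lintegral_add_left_eq_self, hv]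
  simp_rw [this]
  rw [lintegral_mul_const _ hi, hv, sq]

/-- The centre of the unit cube. -/
noncomputable def ctr (d : ℕ) : Eu d := WithLp.toLp 2 fun _ => 1 / 2

/-- The comparison model: replacing the difference of displacements by a uniform point of the centred
unit cube yields exactly the square of the mean, since the cubes tile the space. -/
lemma lintegral_setCov_cell {B : Set (Eu d)} (hB : MeasurableSet B) :
    ∫⁻ x, ∫⁻ w in hCube d, setCov B (latt (cell x) + (w - ctr d)) = volume B ^ 2 := by
  rw [← tsum_eq_lintegral_cell (fun m => ∫⁻ w in hCube d, setCov B (latt m + (w - ctr d)))]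
  have : ∀ (m : Fin d → ℤ) (w : Eu d), latt m + (w - ctr d) = (latt m + w) + (- ctr d) := by
    intros; abel
  simp_rw [this]
  rw [← lintegral_tiling (fun x => setCov B (x + - ctr d)), lintegral_add_right_eq_self,
    lintegral_setCov hB]

end PertLattice

/-! ### The number variance as an integral of pair densities -/

namespace PertLattice
variable {d : ℕ}

/-- The covariogram `z ↦ |B_R ∩ (B_R - z)|` of the ball of radius `R`. -/
noncomputable def cov (R : ℝ) (z : Eu d) : ℝ := (setCov (ball (0 : Eu d) R) z).toReal

/-- The expected covariogram of the ball of radius `R` at the difference of the perturbed lattice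
points with indices `cell x` and `0`; as a function of `x` it is constant on unit cells. -/
noncomputable def pairDens (μ : Measure (Field d)) (R : ℝ) (x : Eu d) : ℝ :=
  ∫ θ, cov R (latt (cell x) + (θ (cell x) - θ 0)) ∂μ

/-- The analogue of `pairDens` when the difference of displacements is replaced by a uniform point of
the centred unit cube. -/
noncomputable def pairDens₀ (R : ℝ) (x : Eu d) : ℝ :=
  ∫ w in hCube d, cov R (latt (cell x) + (w - ctr d))

lemma setCov_le (B : Set (Eu d)) (hB : MeasurableSet B) (z : Eu d) : setCov B z ≤ volume B := by
  have hv : ∫⁻ x, ind B x = volume B := by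
    unfold ind
    rw [lintegral_indicator_const hB, one_mul]
  rw [← hv]
  refine lintegral_mono fun x => ?_
  have : ind B (x + z) ≤ 1 := by
    unfold ind
    exact Set.indicator_le_self' (by simp) _
  calc ind B x * ind B (x + z) ≤ ind B x * 1 := by gcongr
    _ = _ := mul_one _

lemma setCov_ball_lt_top (R : ℝ) (z : Eu d) : setCov (ball (0 : Eu d) R) z < ∞ :=
  (setCov_le _ measurableSet_ball z).trans_lt measure_ball_lt_top

lemma measurable_cov (R : ℝ) : Measurable (cov R : Eu d → ℝ) :=
  (measurable_setCov measurableSet_ball).ennreal_toReal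

lemma cov_nonneg (R : ℝ) (z : Eu d) : 0 ≤ cov R z := ENNReal.toReal_nonneg

lemma cov_le (R : ℝ) (z : Eu d) : cov R z ≤ volume.real (ball (0 : Eu d) R) :=
  ENNReal.toReal_mono measure_ball_lt_top.ne (setCov_le _ measurableSet_ball z)

lemma integrable_cov_comp {α : Type*} [MeasurableSpace α] {μ : Measure α} [IsFiniteMeasure μ]
    (R : ℝ) {f : α → Eu d} (hf : Measurable f) : Integrable (fun a => cov R (f a)) μ := by
  refine Integrable.of_bound ((measurable_cov R).comp hf).aestronglyMeasurable
    (volume.real (ball (0 : Eu d) R)) (ae_of_all _ fun a => ?_)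
  rw [Real.norm_of_nonneg (cov_nonneg _ _)]
  exact cov_le _ _

lemma lintegral_setCov_comp {α : Type*} [MeasurableSpace α] {μ : Measure α} [IsFiniteMeasure μ]
    (R : ℝ) {f : α → Eu d} (hf : Measurable f) :
    ∫⁻ a, setCov (ball (0 : Eu d) R) (f a) ∂μ = ENNReal.ofReal (∫ a, cov R (f a) ∂μ) := by
  rw [ofReal_integral_eq_lintegral_ofReal (integrable_cov_comp R hf)
    (ae_of_all _ fun a => cov_nonneg _ _)]
  refine lintegral_congr fun a => ?_
  rw [cov, ENNReal.ofReal_toReal (setCov_ball_lt_top _ _).ne]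

lemma pairDens_nonneg (μ : Measure (Field d)) (R : ℝ) (x : Eu d) : 0 ≤ pairDens μ R x :=
  integral_nonneg fun _ => cov_nonneg _ _

lemma pairDens₀_nonneg (R : ℝ) (x : Eu d) : 0 ≤ pairDens₀ R x :=
  integral_nonneg fun _ => cov_nonneg _ _

lemma measurable_pairDens (μ : Measure (Field d)) (R : ℝ) : Measurable (pairDens μ R) :=
  (measurable_of_countable (fun k : Fin d → ℤ => ∫ θ, cov R (latt k + (θ k - θ 0)) ∂μ)).comp
    measurable_cell

lemma measurable_pairDens₀ (R : ℝ) : Measurable (pairDens₀ R : Eu d → ℝ) :=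
  (measurable_of_countable (fun k : Fin d → ℤ =>
    ∫ w in hCube d, cov R (latt k + (w - ctr d)))).comp measurable_cell

/-- The number variance in terms of the pair densities. The alternative `variance = 0` covers the
convention for random variables that are not square integrable. -/
theorem variance_formula
    {Ω : Type*} [MeasurableSpace Ω] (P : Measure Ω) [IsProbabilityMeasure P]
    (U : (Fin d → ℤ) → Ω → Eu d) (hUmeas : ∀ k, Measurable (U k))
    (μ : Measure (Field d)) (hμ : Measure.map (fun ω k => U k ω) P = μ) (hstat : Stationary μ)
    (V : Ω → Eu d) (hV : Measurable V)
    (hVlaw : Measure.map V P = volume.restrict (hCube d))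
    (hindep : IndepFun V (fun ω => fun k => U k ω) P) (R : ℝ)
    (N : Ω → ℝ)
    (hN : ∀ ω, N ω = ∑' k : Fin d → ℤ,
      (Metric.ball (0 : Eu d) R).indicator (fun _ => (1 : ℝ)) (latt k + V ω + U k ω)) :
    variance N P = 0 ∨
    (Integrable (pairDens μ R) ∧ Integrable (pairDens₀ R : Eu d → ℝ) ∧
      variance N P = ∫ x, (pairDens μ R x - pairDens₀ R x)) := by
  set B := ball (0 : Eu d) R with hBdef
  have hB : MeasurableSet B := measurableSet_ball
  have hUm : Measurable (fun ω k => U k ω) := measurable_pi_lambda _ hUmeas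
  have : IsProbabilityMeasure μ := hμ ▸ Measure.isProbabilityMeasure_map hUm.aemeasurable
  obtain ⟨M, hM⟩ : ∃ M : Ω → ℝ≥0∞, M = fun ω => count B (V ω) (fun k => U k ω) := ⟨_, rfl⟩
  have hMm : Measurable M := by
    rw [hM]
    exact Measurable.comp (g := fun p : Eu d × Field d => count B p.1 p.2)
      (f := fun ω => (V ω, fun k => U k ω)) (measurable_count hB) (hV.prodMk hUm)
  have hNM : ∀ ω, N ω = (M ω).toReal := by
    intro ω
    rw [hN, hM]
    unfold count
    rw [ENNReal.tsum_toReal_eq]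
    · refine tsum_congr fun k => ?_
      unfold ind
      by_cases h : latt k + V ω + U k ω ∈ B <;> simp [h]
    · intro k
      unfold ind
      by_cases h : latt k + V ω + U k ω ∈ B <;> simp [h]
  have hlaw : ∀ g : ℝ≥0∞ → ℝ≥0∞, Measurable g → ∫⁻ ω, g (M ω) ∂P =
      ∫⁻ θ, (∫⁻ v in hCube d, g (count B v θ)) ∂μ := by
    intro g hg
    have hgm : Measurable (fun p : Eu d × Field d => g (count B p.1 p.2)) :=
      Measurable.comp (f := fun p : Eu d × Field d => count B p.1 p.2) hg (measurable_count hB)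
    have h1 := (indepFun_iff_map_prod_eq_prod_map_map hV.aemeasurable hUm.aemeasurable).1 hindep
    have h2 := lintegral_map (μ := P) hgm (hV.prodMk hUm)
    rw [h1, hVlaw, hμ, lintegral_prod_symm _ hgm.aemeasurable] at h2
    rw [hM]; exact h2.symm
  have hM1 : ∫⁻ ω, M ω ∂P = volume B := by
    rw [hlaw (fun t => t) measurable_id, first_moment hstat hB]
  have hM2 : ∫⁻ ω, M ω ^ 2 ∂P = ∫⁻ x, ENNReal.ofReal (pairDens μ R x) := by
    rw [hlaw (fun t => t ^ 2) (by fun_prop), second_moment hstat hB]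
    refine lintegral_congr fun x => ?_
    unfold pairDens
    rw [← lintegral_setCov_comp (μ := μ) R (f := fun θ : Field d =>
      latt (cell x) + (θ (cell x) - θ 0)) (by fun_prop)]
    simp only [add_sub_assoc, hBdef]
  have hB0 : ∫⁻ x : Eu d, ENNReal.ofReal (pairDens₀ R x) = volume B ^ 2 := by
    rw [← lintegral_setCov_cell hB]
    refine lintegral_congr fun x => ?_
    unfold pairDens₀
    rw [← lintegral_setCov_comp R (f := fun w : Eu d => latt (cell x) + (w - ctr d)) (by fun_prop)]
  have hvB : volume B < ∞ := measure_ball_lt_top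
  have hfin : ∀ᵐ ω ∂P, M ω < ∞ := ae_lt_top hMm (by rw [hM1]; exact hvB.ne)
  have hNm : Measurable N := by
    rw [show N = fun ω => (M ω).toReal from funext hNM]
    exact hMm.ennreal_toReal
  by_cases hmem : MemLp N 2 P
  swap
  · left
    rw [variance, evariance_eq_top hNm.aestronglyMeasurable hmem]
    rfl
  right
  have hN2 : Integrable (fun ω => N ω ^ 2) P := hmem.integrable_sq
  have e1 : ∫ ω, N ω ∂P = (volume B).toReal := by
    simp_rw [hNM]
    rw [integral_toReal hMm.aemeasurable hfin, hM1]
  have e2 : ∫⁻ ω, M ω ^ 2 ∂P = ENNReal.ofReal (∫ ω, N ω ^ 2 ∂P) := by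
    rw [ofReal_integral_eq_lintegral_ofReal hN2 (ae_of_all _ fun ω => sq_nonneg _)]
    refine lintegral_congr_ae ?_
    filter_upwards [hfin] with ω hω
    rw [hNM, ← ENNReal.toReal_pow, ENNReal.ofReal_toReal (ENNReal.pow_lt_top hω).ne]
  have ia : Integrable (pairDens μ R) := by
    refine ⟨(measurable_pairDens μ R).aestronglyMeasurable, ?_⟩
    rw [hasFiniteIntegral_iff_ofReal (ae_of_all _ (pairDens_nonneg μ R)), ← hM2, e2]
    exact ENNReal.ofReal_lt_top
  have ib : Integrable (pairDens₀ R : Eu d → ℝ) := by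
    refine ⟨(measurable_pairDens₀ R).aestronglyMeasurable, ?_⟩
    rw [hasFiniteIntegral_iff_ofReal (ae_of_all _ (pairDens₀_nonneg R)), hB0]
    exact ENNReal.pow_lt_top hvB
  refine ⟨ia, ib, ?_⟩
  rw [variance_eq_sub hmem, e1, integral_sub ia ib]
  congr 1
  · rw [integral_eq_lintegral_of_nonneg_ae (ae_of_all _ (pairDens_nonneg μ R))
      ia.aestronglyMeasurable, ← hM2, e2, ENNReal.toReal_ofReal]
    · rfl
    · exact integral_nonneg fun ω => sq_nonneg _
  · rw [integral_eq_lintegral_of_nonneg_ae (ae_of_all _ (pairDens₀_nonneg R))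
      ib.aestronglyMeasurable, hB0, ENNReal.toReal_pow]

end PertLattice

/-! ### Averages of correlations over a growing lattice window -/

namespace PertLattice
variable {d : ℕ}

lemma cell_add_latt (x : Eu d) (e : Fin d → ℤ) : cell (x + latt e) = cell x + e := by
  ext i
  simp [cell]

/-- Continuity of translations in `L¹`. -/
lemma tendsto_translation_L1 {f : Eu d → ℝ} (hf : Integrable f) :
    Tendsto (fun t : Eu d => ∫ z, ‖f (t + z) - f z‖) (nhds 0) (nhds 0) := by
  set F : Lp ℝ 1 (volume : Measure (Eu d)) := hf.toL1 f with hF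
  have : Fact ((1 : ℝ≥0∞) ≠ ∞) := ⟨by simp⟩
  have hc : Continuous (fun t : Eu d => DomAddAct.mk t +ᵥ F) := by
    have h1 : Continuous (fun t : Eu d => DomAddAct.mk t) := DomAddAct.continuous_mk
    exact h1.vadd continuous_const
  have h2 : Tendsto (fun t : Eu d => ‖(DomAddAct.mk t +ᵥ F) - F‖) (nhds 0) (nhds 0) := by
    have := (hc.sub (continuous_const : Continuous fun _ : Eu d => F)).norm.tendsto 0
    simpa using this
  refine h2.congr fun t => ?_
  rw [L1.norm_eq_integral_norm]
  refine integral_congr_ae ?_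
  have hm : MeasurePreserving (fun z : Eu d => t + z) volume volume :=
    measurePreserving_add_left _ _
  filter_upwards [Lp.coeFn_sub (DomAddAct.mk t +ᵥ F) F, DomAddAct.vadd_Lp_ae_eq (DomAddAct.mk t) F,
    hf.coeFn_toL1, hm.quasiMeasurePreserving.ae hf.coeFn_toL1] with z h3 h4 h5 h6
  rw [h3, Pi.sub_apply, h4, h5]
  exact congrArg (fun a => ‖a - f z‖) h6

section ergodic

variable {H : Type*} [NormedAddCommGroup H] [InnerProductSpace ℝ H]

lemma bound_inner (T : (Fin d → ℤ) → H →ₗᵢ[ℝ] H) (k : Fin d → ℤ) (g h : H) :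
    ‖inner ℝ (T k g) h‖ ≤ ‖g‖ * ‖h‖ := by
  simpa using norm_inner_le_norm (𝕜 := ℝ) (T k g) h

lemma integrable_mul_cell {f : Eu d → ℝ} (hf : Integrable f) (φ : (Fin d → ℤ) → ℝ) (C : ℝ)
    (hφ : ∀ k, ‖φ k‖ ≤ C) (R : ℝ) : Integrable (fun z => f z * φ (cell (R • z))) := by
  refine hf.mul_bdd (c := C) ?_ (ae_of_all _ fun z => hφ _)
  exact ((measurable_of_countable φ).comp (measurable_cell.comp
    (measurable_const_smul R))).aestronglyMeasurable

/-- Mean ergodic theorem for isometric actions of `ℤ^d`, with a weight of vanishing integral. The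
vectors for which it holds form a closed subspace, which contains all the coboundaries `g - T e g`
(by continuity of translations in `L¹`) and all invariant vectors; a vector orthogonal to the
coboundaries is invariant. -/
theorem weighted_ergodic [CompleteSpace H] {f : Eu d → ℝ} (hf : Integrable f) (hf0 : ∫ z, f z = 0)
    (T : (Fin d → ℤ) → H →ₗᵢ[ℝ] H) (hT : ∀ k l g, T (k + l) g = T k (T l g)) (g h : H) :
    Tendsto (fun R : ℝ => ∫ z, f z * inner ℝ (T (cell (R • z)) g) h) atTop (nhds 0) := by
  have hInt : ∀ (g h : H) (R : ℝ), Integrable (fun z => f z * inner ℝ (T (cell (R • z)) g) h) :=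
    fun g h R => integrable_mul_cell hf (fun k => inner ℝ (T k g) h) _
      (fun k => bound_inner T k g h) R
  have hbd : ∀ (g h : H) (R : ℝ), ‖∫ z, f z * inner ℝ (T (cell (R • z)) g) h‖ ≤
      (∫ z, ‖f z‖) * (‖g‖ * ‖h‖) := by
    intro g h R
    rw [← integral_mul_const]
    refine norm_integral_le_of_norm_le (hf.norm.mul_const _) (ae_of_all _ fun z => ?_)
    rw [norm_mul]
    gcongr
    exact bound_inner T _ g h
  let S : Submodule ℝ H :=
    { carrier := {g | ∀ h, Tendsto (fun R : ℝ => ∫ z, f z * inner ℝ (T (cell (R • z)) g) h)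
        atTop (nhds 0)}
      add_mem' := by
        intro a b ha hb h
        have := (ha h).add (hb h)
        rw [add_zero] at this
        refine this.congr fun R => ?_
        rw [← integral_add (hInt a h R) (hInt b h R)]
        simp only [map_add, inner_add_left, mul_add]
      zero_mem' := by
        intro h; simp
      smul_mem' := by
        intro c a ha h
        have := (ha h).const_mul c
        rw [mul_zero] at this
        refine this.congr fun R => ?_
        rw [← integral_const_mul]
        simp only [map_smul, inner_smul_left]
        congr 1; ext z; simp; ring }
  have hSmem : ∀ g, g ∈ S ↔ ∀ h, Tendsto (fun R : ℝ => ∫ z, f z * inner ℝ (T (cell (R • z)) g) h)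
        atTop (nhds 0) := fun g => Iff.rfl
  have hSc : IsClosed (S : Set H) := by
    rw [← isSeqClosed_iff_isClosed]
    intro u g hu hug
    rw [SetLike.mem_coe, hSmem]
    intro h
    rw [Metric.tendsto_nhds]
    intro ε hε
    have h1 : Tendsto (fun n => (∫ z, ‖f z‖) * (‖g - u n‖ * ‖h‖)) atTop (nhds 0) := by
      have : Tendsto (fun n => ‖g - u n‖) atTop (nhds 0) := by
        simpa using ((tendsto_const_nhds (x := g)).sub hug).norm
      simpa using (this.mul_const ‖h‖).const_mul (∫ z, ‖f z‖)
    obtain ⟨n, hn⟩ := (h1.eventually_lt_const (half_pos hε)).exists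
    filter_upwards [(Metric.tendsto_nhds.1 ((hSmem _).1 (hu n) h)) (ε / 2) (half_pos hε)] with R hR
    rw [dist_zero_right] at hR ⊢
    have h2 : ∫ z, f z * inner ℝ (T (cell (R • z)) g) h =
        (∫ z, f z * inner ℝ (T (cell (R • z)) (g - u n)) h) +
        ∫ z, f z * inner ℝ (T (cell (R • z)) (u n)) h := by
      rw [← integral_add (hInt _ _ _) (hInt _ _ _)]
      simp only [map_sub, inner_sub_left]
      congr 1; ext z; ring
    rw [h2]
    refine (norm_add_le _ _).trans_lt ?_
    linarith [hbd (g - u n) h R]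
  have hcob : ∀ (g : H) (e : Fin d → ℤ), g - T e g ∈ S := by
    intro g e
    rw [hSmem]
    intro h
    have hsmall : Tendsto (fun R : ℝ => -(R⁻¹ • latt e)) atTop (nhds (0 : Eu d)) := by
      simpa using ((tendsto_inv_atTop_zero (𝕜 := ℝ)).smul_const (latt e : Eu d)).neg
    have h1 := ((tendsto_translation_L1 hf).comp hsmall).mul_const (‖g‖ * ‖h‖)
    rw [zero_mul] at h1
    refine squeeze_zero_norm' ?_ h1
    filter_upwards [eventually_gt_atTop 0] with R hR
    have h2 : ∫ z, f z * inner ℝ (T (cell (R • z)) (T e g)) h =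
        ∫ z, f (-(R⁻¹ • latt e) + z) * inner ℝ (T (cell (R • z)) g) h := by
      rw [← integral_add_left_eq_self
        (fun z => f (-(R⁻¹ • latt e) + z) * inner ℝ (T (cell (R • z)) g) h) (R⁻¹ • latt e)]
      refine integral_congr_ae (ae_of_all _ fun z => ?_)
      simp only [neg_add_cancel_left]
      rw [smul_add, smul_inv_smul₀ hR.ne', add_comm (latt e), cell_add_latt, hT]
    have hf' : Integrable (fun z => f (-(R⁻¹ • latt e) + z)) := hf.comp_add_left _
    have h3 : ∫ z, f z * inner ℝ (T (cell (R • z)) (g - T e g)) h =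
        -∫ z, (f (-(R⁻¹ • latt e) + z) - f z) * inner ℝ (T (cell (R • z)) g) h := by
      have : ∀ z, f z * inner ℝ (T (cell (R • z)) (g - T e g)) h =
        f z * inner ℝ (T (cell (R • z)) g) h - f z * inner ℝ (T (cell (R • z)) (T e g)) h := by
        intro z
        simp only [map_sub, inner_sub_left]; ring
      simp_rw [this]
      rw [integral_sub (hInt _ _ _) (hInt _ _ _), h2]
      simp_rw [sub_mul]
      rw [integral_sub (integrable_mul_cell hf' (fun k => inner ℝ (T k g) h) _
        (fun k => bound_inner T k g h) R) (hInt _ _ _)]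
      ring
    rw [h3, norm_neg]
    simp only [Function.comp_apply]
    rw [← integral_mul_const]
    refine norm_integral_le_of_norm_le ((hf'.sub hf).norm.mul_const _) (ae_of_all _ fun z => ?_)
    rw [norm_mul]
    gcongr
    exact bound_inner T _ g h
  have htop : S = ⊤ := by
    have : CompleteSpace S := hSc.completeSpace_coe
    rw [← Submodule.orthogonal_eq_bot_iff, Submodule.eq_bot_iff]
    intro g hg
    rw [Submodule.mem_orthogonal] at hg
    have hinv : ∀ e, T e g = g := by
      intro e
      have h1 := hg _ (hcob g e)
      rw [inner_sub_left, real_inner_self_eq_norm_sq] at h1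
      have h2 : ‖T e g - g‖ ^ 2 = 0 := by
        rw [norm_sub_sq_real, LinearIsometry.norm_map]; linarith
      simpa [sub_eq_zero] using h2
    have hgS : g ∈ S := by
      rw [hSmem]
      intro h
      simp only [hinv, integral_mul_const, hf0, zero_mul]
      exact tendsto_const_nhds
    simpa using hg g hgS
  have : g ∈ S := htop ▸ Submodule.mem_top
  exact (hSmem g).1 this h

end ergodic

/-- Correlations of a stationary field, averaged against a dilated weight of vanishing integral,
tend to zero. -/
theorem ergodic_field {f : Eu d → ℝ} (hf : Integrable f) (hf0 : ∫ z, f z = 0)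
    {μ : Measure (Field d)} [IsProbabilityMeasure μ] (hμ : Stationary μ)
    (hL2 : ∀ i, MemLp (fun θ : Field d => θ 0 i) 2 μ) (i j : Fin d) :
    Tendsto (fun R : ℝ => ∫ z, f z * ∫ θ, θ (cell (R • z)) i * θ 0 j ∂μ) atTop (nhds 0) := by
  let T : (Fin d → ℤ) → Lp ℝ 2 μ →ₗᵢ[ℝ] Lp ℝ 2 μ := fun k =>
    Lp.compMeasurePreservingₗᵢ ℝ _ (hμ k)
  have hT : ∀ (k : Fin d → ℤ) (g : Field d → ℝ) (hg : MemLp g 2 μ),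
      T k (hg.toLp g) = (hg.comp_measurePreserving (hμ k)).toLp _ := fun k g hg => rfl
  have hTT : ∀ k l g, T (k + l) g = T k (T l g) := by
    intro k l g
    have hg := Lp.memLp g
    rw [← Lp.toLp_coeFn g hg, hT, hT, hT]
    congr 1
    funext θ
    simp only [Function.comp_apply]
    congr 1
    funext m
    congr 1
    abel
  have key := weighted_ergodic hf hf0 T hTT ((hL2 i).toLp _) ((hL2 j).toLp _)
  refine key.congr fun R => ?_
  congr 1; ext z
  congr 1
  rw [hT, L2.inner_def]
  refine integral_congr_ae ?_
  filter_upwards [MemLp.coeFn_toLp ((hL2 i).comp_measurePreserving (hμ (cell (R • z)))),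
    MemLp.coeFn_toLp (hL2 j)] with θ h1 h2
  rw [h1, h2]
  simp [mul_comm]

end PertLattice

/-! ### Displacements and cancellation of the linear term -/

namespace PertLattice
variable {d : ℕ}

/-- The displacement from `x` to the difference of the perturbed lattice points with indices `cell x`
and `0`; see `add_disp`. -/
noncomputable def disp (θ : Field d) (x : Eu d) : Eu d :=
  θ (cell x) - θ 0 - (x - latt (cell x))

/-- The displacement from `x` to the point with coordinate `w` in the unit cube centred at
`latt (cell x)`; see `add_disp₀`. -/
noncomputable def disp₀ (w x : Eu d) : Eu d := w - ctr d - (x - latt (cell x))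

lemma add_disp (θ : Field d) (x : Eu d) :
    x + disp θ x = latt (cell x) + (θ (cell x) - θ 0) := by
  unfold disp; abel

lemma add_disp₀ (w x : Eu d) : x + disp₀ w x = latt (cell x) + (w - ctr d) := by
  unfold disp₀; abel

@[fun_prop] lemma measurable_disp (x : Eu d) : Measurable (fun θ : Field d => disp θ x) := by
  unfold disp; fun_prop

@[fun_prop] lemma measurable_disp₀ (x : Eu d) : Measurable (fun w : Eu d => disp₀ w x) := by
  unfold disp₀; fun_prop

lemma norm_hCube_le (hd : d ≤ 2) {w : Eu d} (hw : w ∈ hCube d) : ‖w‖ ≤ 2 := by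
  rw [EuclideanSpace.norm_eq]
  apply Real.sqrt_le_iff.2 ⟨by norm_num, ?_⟩
  calc ∑ i, ‖w i‖ ^ 2 ≤ ∑ i : Fin d, (1 : ℝ) := by
        refine Finset.sum_le_sum fun i _ => ?_
        have := hw i
        rw [Real.norm_of_nonneg this.1]
        nlinarith [this.1, this.2]
    _ ≤ 2 ^ 2 := by
        simp only [Finset.sum_const, Finset.card_univ, Fintype.card_fin, nsmul_eq_mul, mul_one]
        have : (d : ℝ) ≤ 2 := by exact_mod_cast hd
        linarith

lemma ctr_mem : ctr d ∈ hCube d := by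
  intro i; simp only [ctr]; norm_num

/-- The norm of `disp θ x` is at most the larger of `size (θ (cell x))` and `size (θ 0)`. -/
noncomputable def size (y : Eu d) : ℝ := 2 * ‖y‖ + 2

@[fun_prop] lemma measurable_size : Measurable (size : Eu d → ℝ) := by unfold size; fun_prop

lemma size_ge (y : Eu d) : 2 ≤ size y := by unfold size; linarith [norm_nonneg y]

lemma norm_disp_le (hd : d ≤ 2) (θ : Field d) (x : Eu d) :
    ‖disp θ x‖ ≤ max (size (θ (cell x))) (size (θ 0)) := by
  have h1 := norm_sub_le (θ (cell x) - θ 0) (x - latt (cell x))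
  have h2 := norm_sub_le (θ (cell x)) (θ 0)
  have h3 := norm_hCube_le hd (sub_cell_mem x)
  unfold disp size
  rcases le_total ‖θ (cell x)‖ ‖θ 0‖ with h | h
  · exact le_max_of_le_right (by linarith)
  · exact le_max_of_le_left (by linarith)

lemma norm_disp₀_le (hd : d ≤ 2) {w : Eu d} (hw : w ∈ hCube d) (x : Eu d) : ‖disp₀ w x‖ ≤ 6 := by
  have h1 := norm_sub_le (w - ctr d) (x - latt (cell x))
  have h2 := norm_sub_le w (ctr d)
  have h3 := norm_hCube_le hd (sub_cell_mem x)
  have h4 := norm_hCube_le hd hw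
  have h5 := norm_hCube_le hd (ctr_mem (d := d))
  unfold disp₀
  linarith

/-- Bound on functionals of `disp` that are monotone in its norm, uniform in `x`. -/
lemma lintegral_disp_le (hd : d ≤ 2) {μ : Measure (Field d)} (hμ : Stationary μ) {φ : ℝ → ℝ≥0∞}
    (hφm : Measurable φ) (hφ : Monotone φ) (x : Eu d) :
    ∫⁻ θ, φ ‖disp θ x‖ ∂μ ≤ 2 * ∫⁻ θ, φ (size (θ 0)) ∂μ := by
  calc ∫⁻ θ, φ ‖disp θ x‖ ∂μ ≤ ∫⁻ θ, φ (size (θ (cell x))) + φ (size (θ 0)) ∂μ := by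
        refine lintegral_mono fun θ => ?_
        refine (hφ (norm_disp_le hd θ x)).trans ?_
        rcases le_total (size (θ (cell x))) (size (θ 0)) with h | h
        · rw [max_eq_right h]; exact le_add_self
        · rw [max_eq_left h]; exact le_self_add
    _ = _ := by
        rw [lintegral_add_left (by fun_prop), hμ.lintegral_coord (cell x)
          (f := fun y => φ (size y)) (by fun_prop), two_mul]

lemma lintegral_disp₀_le (hd : d ≤ 2) {φ : ℝ → ℝ≥0∞} (hφ : Monotone φ) (x : Eu d) :
    ∫⁻ w in hCube d, φ ‖disp₀ w x‖ ≤ φ 6 := by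
  calc ∫⁻ w in hCube d, φ ‖disp₀ w x‖ ≤ ∫⁻ w in hCube d, φ 6 :=
        setLIntegral_mono measurable_const fun w hw => hφ (norm_disp₀_le hd hw x)
    _ = φ 6 := by simp

section means

variable {μ : Measure (Field d)}

lemma Stationary.integrable_coord (hμ : Stationary μ) {f : Eu d → ℝ}
    (hf : Integrable (fun θ : Field d => f (θ 0)) μ) (k : Fin d → ℤ) :
    Integrable (fun θ : Field d => f (θ k)) μ := by
  have := (hμ k).integrable_comp_of_integrable hf
  simpa [Function.comp_def] using this

lemma Stationary.integral_coord (hμ : Stationary μ) {f : Eu d → ℝ} (hf : Measurable f)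
    (k : Fin d → ℤ) : ∫ θ, f (θ k) ∂μ = ∫ θ, f (θ 0) ∂μ := by
  have hm : Measurable fun θ : Field d => f (θ 0) := by fun_prop
  have h1 := integral_map (μ := μ) (hμ k).measurable.aemeasurable
    (f := fun θ : Field d => f (θ 0)) (by rw [(hμ k).map_eq]; exact hm.aestronglyMeasurable)
  rw [(hμ k).map_eq] at h1
  simpa using h1.symm

variable [IsProbabilityMeasure μ]

lemma integrable_sq_size (hL2 : Integrable (fun θ : Field d => ‖θ 0‖ ^ 2) μ) :
    Integrable (fun θ : Field d => size (θ 0) ^ 2) μ := by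
  have : Integrable (fun θ : Field d => 8 * ‖θ 0‖ ^ 2 + 8) μ :=
    (hL2.const_mul 8).add (integrable_const _)
  refine this.mono' (Measurable.aestronglyMeasurable (by fun_prop)) (ae_of_all _ fun θ => ?_)
  rw [Real.norm_of_nonneg (sq_nonneg _)]
  unfold size
  nlinarith [sq_nonneg (‖θ 0‖ - 1)]

lemma integrable_norm (hL2 : Integrable (fun θ : Field d => ‖θ 0‖ ^ 2) μ) :
    Integrable (fun θ : Field d => ‖θ 0‖) μ := by
  have : Integrable (fun θ : Field d => ‖θ 0‖ ^ 2 + 1) μ := hL2.add (integrable_const _)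
  refine this.mono' (Measurable.aestronglyMeasurable (by fun_prop)) (ae_of_all _ fun θ => ?_)
  rw [norm_norm]
  nlinarith [sq_nonneg (‖θ 0‖ - 1)]

lemma integrable_clm (hμ : Stationary μ) (hL2 : Integrable (fun θ : Field d => ‖θ 0‖ ^ 2) μ)
    (L : Eu d →L[ℝ] ℝ) (k : Fin d → ℤ) : Integrable (fun θ : Field d => L (θ k)) μ := by
  refine ((hμ.integrable_coord (integrable_norm hL2) k).const_mul ‖L‖).mono'
    (Measurable.aestronglyMeasurable (by fun_prop)) (ae_of_all _ fun θ => L.le_opNorm _)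

lemma integral_clm_sub (hμ : Stationary μ) (hL2 : Integrable (fun θ : Field d => ‖θ 0‖ ^ 2) μ)
    (L : Eu d →L[ℝ] ℝ) (k : Fin d → ℤ) : ∫ θ, L (θ k - θ 0) ∂μ = 0 := by
  simp only [map_sub]
  rw [integral_sub (integrable_clm hμ hL2 L k) (integrable_clm hμ hL2 L 0),
    hμ.integral_coord L.measurable k, sub_self]

lemma integral_clm_disp (hμ : Stationary μ) (hL2 : Integrable (fun θ : Field d => ‖θ 0‖ ^ 2) μ)
    (L : Eu d →L[ℝ] ℝ) (x : Eu d) : ∫ θ, L (disp θ x) ∂μ = - L (x - latt (cell x)) := by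
  unfold disp
  have : ∀ θ : Field d, L (θ (cell x) - θ 0 - (x - latt (cell x))) =
    L (θ (cell x) - θ 0) - L (x - latt (cell x)) := fun θ => map_sub _ _ _
  simp_rw [this]
  rw [integral_sub (by simp only [map_sub]; exact
      (integrable_clm hμ hL2 L _).sub (integrable_clm hμ hL2 L 0)) (integrable_const _),
    integral_clm_sub hμ hL2]
  simp

lemma integrable_clm_hCube (L : Eu d →L[ℝ] ℝ) :
    Integrable (fun w : Eu d => L w) (volume.restrict (hCube d)) := by
  rw [← restrict_unitCube]
  refine (L.continuous.continuousOn).integrableOn_compact ?_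
  have : unitCube d = (EuclideanSpace.equiv (Fin d) ℝ) ⁻¹' (Set.univ.pi fun _ => Set.Icc 0 1) := by
    ext x
    simp only [unitCube, Set.mem_ofPred_eq, Set.mem_preimage, Set.mem_pi, Set.mem_univ,
      true_imp_iff]
    rfl
  rw [this]
  exact (EuclideanSpace.equiv (Fin d) ℝ).toHomeomorph.isCompact_preimage.2
    (isCompact_univ_pi fun _ => isCompact_Icc)

/-- The centre of mass of the unit cube is `c = ctr d`, by the symmetry `w ↦ 2 c - w`. -/
lemma integral_clm_hCube (L : Eu d →L[ℝ] ℝ) : ∫ w in hCube d, L (w - ctr d) = 0 := by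
  rw [← restrict_unitCube]
  have hp : (fun w : Eu d => (2 : ℝ) • ctr d - w) ⁻¹' unitCube d = unitCube d := by
    ext w
    simp only [unitCube, Set.mem_preimage, Set.mem_ofPred_eq]
    refine forall_congr' fun i => ?_
    have : ((2 : ℝ) • ctr d - w) i = 1 - w i := by simp [ctr]
    rw [this]
    constructor <;> rintro ⟨h1, h2⟩ <;> constructor <;> linarith
  have h := (Measure.measurePreserving_sub_left (volume : Measure (Eu d))
    ((2 : ℝ) • ctr d)).setIntegral_preimage_emb
    (MeasurableEquiv.subLeft ((2 : ℝ) • ctr d)).measurableEmbedding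
    (fun w => L (w - ctr d)) (unitCube d)
  rw [hp] at h
  have h2 : ∀ w : Eu d, L ((2 : ℝ) • ctr d - w - ctr d) = - L (w - ctr d) := by
    intro w
    rw [← map_neg]
    congr 1
    rw [two_smul]; abel
  simp_rw [h2] at h
  rw [integral_neg] at h
  linarith

lemma integral_clm_disp₀ (L : Eu d →L[ℝ] ℝ) (x : Eu d) :
    ∫ w in hCube d, L (disp₀ w x) = - L (x - latt (cell x)) := by
  unfold disp₀
  have : ∀ w : Eu d, L (w - ctr d - (x - latt (cell x))) =
    L (w - ctr d) - L (x - latt (cell x)) := fun θ => map_sub _ _ _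
  simp_rw [this]
  rw [integral_sub (by simp only [map_sub]; exact
      (integrable_clm_hCube L).sub (integrable_const _)) (integrable_const _),
    integral_clm_hCube]
  simp

lemma integrable_clm_disp (hμ : Stationary μ) (hL2 : Integrable (fun θ : Field d => ‖θ 0‖ ^ 2) μ)
    (L : Eu d →L[ℝ] ℝ) (x : Eu d) : Integrable (fun θ => L (disp θ x)) μ := by
  unfold disp
  simp only [map_sub]
  exact ((integrable_clm hμ hL2 L _).sub (integrable_clm hμ hL2 L 0)).sub
    ((integrable_const _).sub (integrable_const _))

lemma integrable_clm_disp₀ (L : Eu d →L[ℝ] ℝ) (x : Eu d) :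
    Integrable (fun w => L (disp₀ w x)) (volume.restrict (hCube d)) := by
  unfold disp₀
  simp only [map_sub]
  exact ((integrable_clm_hCube L).sub (integrable_const _)).sub
    ((integrable_const _).sub (integrable_const _))

/-- First-order Taylor remainder of the covariogram, for a candidate derivative `L` at `x`. -/
noncomputable def rem (R : ℝ) (L : Eu d →L[ℝ] ℝ) (x v : Eu d) : ℝ :=
  cov R (x + v) - cov R x - L v

lemma measurable_rem (R : ℝ) (L : Eu d →L[ℝ] ℝ) (x : Eu d) :
    Measurable (fun v => rem R L x v) := by
  have := measurable_cov (d := d) R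
  unfold rem; fun_prop

lemma integrable_rem_disp (hμ : Stationary μ) (hL2 : Integrable (fun θ : Field d => ‖θ 0‖ ^ 2) μ)
    (R : ℝ) (L : Eu d →L[ℝ] ℝ) (x : Eu d) : Integrable (fun θ => rem R L x (disp θ x)) μ :=
  ((integrable_cov_comp R (by fun_prop)).sub (integrable_const _)).sub
    (integrable_clm_disp hμ hL2 L x)

lemma integrable_rem_disp₀ (R : ℝ) (L : Eu d →L[ℝ] ℝ) (x : Eu d) :
    Integrable (fun w => rem R L x (disp₀ w x)) (volume.restrict (hCube d)) :=
  ((integrable_cov_comp R (by fun_prop)).sub (integrable_const _)).sub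
    (integrable_clm_disp₀ L x)

/-- Both displacements have the same mean, so the linear term may be subtracted for free. -/
lemma pairDens_sub (hμ : Stationary μ) (hL2 : Integrable (fun θ : Field d => ‖θ 0‖ ^ 2) μ)
    (R : ℝ) (L : Eu d →L[ℝ] ℝ) (x : Eu d) :
    pairDens μ R x - pairDens₀ R x =
      ∫ θ, rem R L x (disp θ x) ∂μ - ∫ w in hCube d, rem R L x (disp₀ w x) := by
  have i1 : Integrable (fun θ : Field d => cov R (x + disp θ x)) μ :=
    integrable_cov_comp R (by fun_prop)
  have i2 : Integrable (fun w => cov R (x + disp₀ w x)) (volume.restrict (hCube d)) :=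
    integrable_cov_comp R (by fun_prop)
  have i3 : Integrable (fun θ : Field d => cov R (x + disp θ x) - cov R x) μ :=
    i1.sub (integrable_const _)
  have i4 : Integrable (fun w => cov R (x + disp₀ w x) - cov R x) (volume.restrict (hCube d)) :=
    i2.sub (integrable_const _)
  unfold rem
  rw [integral_sub i3 (integrable_clm_disp hμ hL2 L x), integral_sub i4 (integrable_clm_disp₀ L x),
    integral_sub i1 (integrable_const _), integral_sub i2 (integrable_const _),
    integral_clm_disp hμ hL2, integral_clm_disp₀]
  simp only [add_disp, add_disp₀, integral_const, probReal_univ, one_smul]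
  unfold pairDens pairDens₀
  ring

end means

end PertLattice

/-! ### Dimension one -/

namespace PertLattice

lemma measurePreserving_coord_zero :
    MeasurePreserving (fun x : Eu 1 => x 0) volume volume :=
  (volume_preserving_funUnique (Fin 1) ℝ).comp
    (PiLp.volume_preserving_ofLp (Fin 1))

lemma norm_eu_one (x : Eu 1) : ‖x‖ = |x 0| := by
  simp [EuclideanSpace.norm_eq, Real.sqrt_sq_eq_abs]

lemma setCov_eq {d : ℕ} (B : Set (Eu d)) (hB : MeasurableSet B) (z : Eu d) :
    setCov B z = volume (B ∩ {x | x + z ∈ B}) := by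
  have hB' : MeasurableSet {x | x + z ∈ B} := (measurable_add_const z) hB
  rw [← lintegral_indicator_one (hB.inter hB')]
  unfold setCov
  congr 1
  ext x
  by_cases h1 : x ∈ B <;> by_cases h2 : x + z ∈ B <;> simp [ind, h1, h2]

/-- The covariogram of an interval. -/
lemma cov_one (R : ℝ) (z : Eu 1) : cov R z = max (2 * R - |z 0|) 0 := by
  rw [cov, setCov_eq _ measurableSet_ball]
  have h1 : ball 0 R ∩ {x | x + z ∈ ball 0 R} =
      (fun x : Eu 1 => x 0) ⁻¹' (Set.Ioo (max (-R) (-R - z 0)) (min R (R - z 0))) := by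
    ext x
    have e1 : x ∈ ball (0 : Eu 1) R ↔ -R < x 0 ∧ x 0 < R := by
      rw [mem_ball_zero_iff, norm_eu_one, abs_lt]
    have e2 : x + z ∈ ball (0 : Eu 1) R ↔ -R < x 0 + z 0 ∧ x 0 + z 0 < R := by
      rw [mem_ball_zero_iff, norm_eu_one, abs_lt]; rfl
    simp only [Set.mem_inter_iff, Set.mem_ofPred_eq, e1, e2, Set.mem_preimage, Set.mem_Ioo,
      max_lt_iff, lt_min_iff]
    constructor <;> rintro h <;> refine ⟨⟨?_, ?_⟩, ?_, ?_⟩ <;> linarith [h.1.1, h.1.2, h.2.1, h.2.2]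
  rw [h1, measurePreserving_coord_zero.measure_preimage measurableSet_Ioo.nullMeasurableSet,
    Real.volume_Ioo, ENNReal.toReal_ofReal']
  congr 1
  rcases le_total 0 (z 0) with h | h
  · rw [max_eq_left (by linarith), min_eq_right (by linarith), abs_of_nonneg h]; ring
  · rw [max_eq_right (by linarith), min_eq_left (by linarith), abs_of_nonpos h]; ring

/-- A derivative of `s ↦ max (2R - |s|) 0`, away from its corners. -/
noncomputable def slope (R s : ℝ) : ℝ :=
  if |s| < 2 * R then (if 0 ≤ s then -1 else 1) else 0

/-- A step from `s` to `s + v` that crosses none of the corners `0, ± 2R` leaves no remainder. -/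
lemma tent_rem_le (R s v : ℝ) :
    |max (2 * R - |s + v|) 0 - max (2 * R - |s|) 0 - slope R s * v| ≤
      2 * ((if |s| ≤ |v| then |v| else 0) + (if |s - 2 * R| ≤ |v| then |v| else 0)
        + (if |s + 2 * R| ≤ |v| then |v| else 0)) := by
  by_cases h : |v| < |s| ∧ |v| < |s - 2 * R| ∧ |v| < |s + 2 * R|
  · obtain ⟨h1, h2, h3⟩ := h
    have h0 : max (2 * R - |s + v|) 0 - max (2 * R - |s|) 0 - slope R s * v = 0 := by
      have hv := abs_lt.1 h1
      have hv2 := abs_lt.1 h2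
      have hv3 := abs_lt.1 h3
      unfold slope
      rcases lt_trichotomy s 0 with hs | hs | hs
      · rw [abs_of_neg hs] at hv ⊢
        rw [abs_of_neg (by linarith : s + v < 0), if_neg (not_le.2 hs)]
        rcases le_total 0 (s + 2 * R) with h5 | h5
        · rw [abs_of_nonneg h5] at hv3
          rw [max_eq_left (by linarith), max_eq_left (by linarith), if_pos (by linarith)]
          ring
        · rw [abs_of_nonpos h5] at hv3
          rw [max_eq_right (by linarith), max_eq_right (by linarith), if_neg (by linarith)]
          ring
      · rw [hs, abs_zero] at h1
        exact absurd (abs_nonneg v) (not_le.2 h1)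
      · rw [abs_of_pos hs] at hv ⊢
        rw [abs_of_pos (by linarith : 0 < s + v), if_pos hs.le]
        rcases le_total 0 (s - 2 * R) with h5 | h5
        · rw [abs_of_nonneg h5] at hv2
          rw [max_eq_right (by linarith), max_eq_right (by linarith), if_neg (by linarith)]
          ring
        · rw [abs_of_nonpos h5] at hv2
          rw [max_eq_left (by linarith), max_eq_left (by linarith), if_pos (by linarith)]
          ring
    rw [h0, abs_zero]
    positivity
  · have h1 : |max (2 * R - |s + v|) 0 - max (2 * R - |s|) 0| ≤ |v| := by
      refine (abs_max_sub_max_le_abs _ _ _).trans ?_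
      rw [show 2 * R - |s + v| - (2 * R - |s|) = |s| - |s + v| by ring, abs_sub_comm]
      refine (abs_abs_sub_abs_le_abs_sub _ _).trans ?_
      simp
    have h2 : |slope R s * v| ≤ |v| := by
      rw [abs_mul]
      refine mul_le_of_le_one_left (abs_nonneg _) ?_
      unfold slope
      split_ifs <;> simp
    have h3 := abs_sub (max (2 * R - |s + v|) 0 - max (2 * R - |s|) 0) (slope R s * v)
    refine (h3.trans (add_le_add h1 h2)).trans ?_
    have := abs_nonneg v
    by_cases a1 : |s| ≤ |v|
    · rw [if_pos a1]; split_ifs <;> linarith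
    · by_cases a2 : |s - 2 * R| ≤ |v|
      · rw [if_pos a2]; split_ifs <;> linarith
      · have a3 : |s + 2 * R| ≤ |v| := by
          by_contra a3; exact h ⟨not_le.1 a1, not_le.1 a2, not_le.1 a3⟩
        rw [if_pos a3]; split_ifs; linarith

/-- `y` if `|s| ≤ y`, else `0`; monotone in `y`. -/
noncomputable def kink (s y : ℝ) : ℝ≥0∞ := if |s| ≤ y then ENNReal.ofReal y else 0

lemma kink_mono (s : ℝ) : Monotone (kink s) := by
  intro a b hab
  unfold kink
  split_ifs with h1 h2 h2
  · exact ENNReal.ofReal_le_ofReal hab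
  · exact absurd (h1.trans hab) h2
  · exact zero_le
  · exact le_rfl

@[fun_prop] lemma measurable_kink {α : Type*} [MeasurableSpace α] {f g : α → ℝ}
    (hf : Measurable f) (hg : Measurable g) : Measurable fun a => kink (f a) (g a) := by
  unfold kink
  exact Measurable.ite (measurableSet_le (by fun_prop) hg) (by fun_prop) measurable_const

lemma lintegral_kink (c y : ℝ) :
    ∫⁻ x : Eu 1, kink (x 0 + c) y = ENNReal.ofReal y * ENNReal.ofReal (2 * y) := by
  rw [measurePreserving_coord_zero.lintegral_comp (f := fun s => kink (s + c) y) (by fun_prop),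
    lintegral_add_right_eq_self (fun s => kink s y) c]
  have : (fun s => kink s y) = (Set.Icc (-y) y).indicator (fun _ => ENNReal.ofReal y) := by
    ext s; simp [kink, Set.indicator_apply, abs_le]
  rw [this, lintegral_indicator_const measurableSet_Icc, Real.volume_Icc]
  congr 2; ring

lemma rem_one_le (R : ℝ) (x : Eu 1) (v : Eu 1) :
    ENNReal.ofReal |rem R (slope R (x 0) • EuclideanSpace.proj (0 : Fin 1)) x v| ≤
      2 * (kink (x 0 + 0) ‖v‖ + kink (x 0 + -(2 * R)) ‖v‖ + kink (x 0 + 2 * R) ‖v‖) := by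
  have h := tent_rem_le R (x 0) (v 0)
  have h2 : rem R (slope R (x 0) • EuclideanSpace.proj (0 : Fin 1)) x v =
      max (2 * R - |x 0 + v 0|) 0 - max (2 * R - |x 0|) 0 - slope R (x 0) * v 0 := by
    simp [rem, cov_one]
  rw [h2]
  refine (ENNReal.ofReal_le_ofReal h).trans ?_
  rw [ENNReal.ofReal_mul (by norm_num), ENNReal.ofReal_add (by positivity) (by positivity),
    ENNReal.ofReal_add (by positivity) (by positivity)]
  simp only [kink, norm_eu_one, add_zero, ← sub_eq_add_neg, apply_ite ENNReal.ofReal,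
    ENNReal.ofReal_zero, ENNReal.ofReal_ofNat, le_refl]

lemma ofReal_abs_integral_le {α : Type*} [MeasurableSpace α] {μ : Measure α} (f : α → ℝ) :
    ENNReal.ofReal |∫ a, f a ∂μ| ≤ ∫⁻ a, ENNReal.ofReal |f a| ∂μ := by
  have := enorm_integral_le_lintegral_enorm (μ := μ) f
  simpa [Real.enorm_eq_ofReal_abs] using this

variable {μ : Measure (Field 1)} [IsProbabilityMeasure μ]

/-- Contribution of the corner at `-c` to the bound of `|pairDens - pairDens₀|`. -/
noncomputable def major (μ : Measure (Field 1)) (c : ℝ) (x : Eu 1) : ℝ≥0∞ :=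
  2 * (2 * ∫⁻ θ, kink (x 0 + c) (size (θ 0)) ∂μ + kink (x 0 + c) 6)

lemma pairDens_sub_le_one (hμ : Stationary μ) (hL2 : Integrable (fun θ : Field 1 => ‖θ 0‖ ^ 2) μ)
    (R : ℝ) (x : Eu 1) :
    ENNReal.ofReal |pairDens μ R x - pairDens₀ R x| ≤
      major μ 0 x + major μ (-(2 * R)) x + major μ (2 * R) x := by
  rw [pairDens_sub hμ hL2 R (slope R (x 0) • EuclideanSpace.proj (0 : Fin 1))]
  refine (ENNReal.ofReal_le_ofReal (abs_sub _ _)).trans ?_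
  rw [ENNReal.ofReal_add (abs_nonneg _) (abs_nonneg _)]
  have h1 : ENNReal.ofReal |∫ θ, rem R (slope R (x 0) • EuclideanSpace.proj (0 : Fin 1)) x
      (disp θ x) ∂μ| ≤ 2 * (2 * (∫⁻ θ, kink (x 0 + 0) (size (θ 0)) ∂μ)
        + 2 * (∫⁻ θ, kink (x 0 + -(2 * R)) (size (θ 0)) ∂μ)
        + 2 * (∫⁻ θ, kink (x 0 + 2 * R) (size (θ 0)) ∂μ)) := by
    refine (ofReal_abs_integral_le _).trans ?_
    refine (lintegral_mono fun θ => rem_one_le R x (disp θ x)).trans ?_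
    rw [lintegral_const_mul _ (by fun_prop), lintegral_add_left (by fun_prop),
      lintegral_add_left (by fun_prop)]
    gcongr
    all_goals exact lintegral_disp_le (by norm_num) hμ (by fun_prop) (kink_mono _) x
  have h2 : ENNReal.ofReal |∫ w in hCube 1, rem R (slope R (x 0) • EuclideanSpace.proj (0 : Fin 1))
      x (disp₀ w x)| ≤ 2 * (kink (x 0 + 0) 6 + kink (x 0 + -(2 * R)) 6 + kink (x 0 + 2 * R) 6) := by
    refine (ofReal_abs_integral_le _).trans ?_
    refine (lintegral_mono fun θ => rem_one_le R x (disp₀ θ x)).trans ?_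
    rw [lintegral_const_mul _ (by fun_prop), lintegral_add_left (by fun_prop),
      lintegral_add_left (by fun_prop)]
    gcongr
    all_goals exact lintegral_disp₀_le (by norm_num) (kink_mono _) x
  refine (add_le_add h1 h2).trans (le_of_eq ?_)
  unfold major
  ring

lemma measurable_major (c : ℝ) : Measurable (major μ c) := by
  unfold major
  have : Measurable fun x : Eu 1 => ∫⁻ θ, kink (x 0 + c) (size (θ 0)) ∂μ :=
    Measurable.lintegral_prod_right (f := fun (x : Eu 1) (θ : Field 1) =>
      kink (x 0 + c) (size (θ 0))) (by unfold Function.uncurry; fun_prop)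
  fun_prop

lemma lintegral_major (c : ℝ) : ∫⁻ x, major μ c x =
    2 * (2 * ∫⁻ θ, ENNReal.ofReal (2 * size (θ 0) ^ 2) ∂μ + ENNReal.ofReal 72) := by
  have h1 : Measurable fun x : Eu 1 => ∫⁻ θ, kink (x 0 + c) (size (θ 0)) ∂μ :=
    Measurable.lintegral_prod_right (f := fun (x : Eu 1) (θ : Field 1) =>
      kink (x 0 + c) (size (θ 0))) (by unfold Function.uncurry; fun_prop)
  unfold major
  rw [lintegral_const_mul _ (by fun_prop), lintegral_add_left (by fun_prop),
    lintegral_const_mul _ h1, lintegral_lintegral_swap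
      (f := fun (x : Eu 1) (θ : Field 1) => kink (x 0 + c) (size (θ 0)))
      (Measurable.aemeasurable (by unfold Function.uncurry; fun_prop))]
  simp_rw [lintegral_kink]
  congr 3
  · refine lintegral_congr fun θ => ?_
    rw [← ENNReal.ofReal_mul (by linarith [size_ge (θ 0)])]; ring_nf
  · rw [← ENNReal.ofReal_mul (by norm_num)]; norm_num

/-- In dimension one the Taylor remainder is integrable in `x`, uniformly in `R`. -/
lemma bound_one (hμ : Stationary μ) (hL2 : Integrable (fun θ : Field 1 => ‖θ 0‖ ^ 2) μ) :
    ∃ C : ℝ, 0 ≤ C ∧ ∀ R : ℝ, ∫ x, (pairDens μ R x - pairDens₀ R x) ≤ C := by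
  set M : ℝ≥0∞ := 2 * (2 * ∫⁻ θ, ENNReal.ofReal (2 * size (θ 0) ^ 2) ∂μ + ENNReal.ofReal 72) with hM
  have hfin : M ≠ ∞ := by
    have := ((integrable_sq_size hL2).const_mul 2).lintegral_lt_top
    rw [hM]
    finiteness
  refine ⟨(M + M + M).toReal, ENNReal.toReal_nonneg, fun R => ?_⟩
  refine (le_abs_self _).trans ?_
  rw [← ENNReal.ofReal_le_iff_le_toReal (by finiteness)]
  refine (ofReal_abs_integral_le _).trans ?_
  refine (lintegral_mono fun x => pairDens_sub_le_one hμ hL2 R x).trans ?_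
  have := measurable_major (μ := μ)
  rw [lintegral_add_left (by fun_prop), lintegral_add_left (by fun_prop)]
  simp only [lintegral_major, ← hM, le_refl]

end PertLattice

/-! ### The covariogram of a planar disc -/

namespace PertLattice

open scoped Pointwise

lemma setCov_isometry {d : ℕ} (e : Eu d ≃ₗᵢ[ℝ] Eu d) (R : ℝ) (z : Eu d) :
    setCov (ball 0 R) (e z) = setCov (ball 0 R) z := by
  have hm : MeasurableSet (ball (0 : Eu d) R ∩ {x | x + e z ∈ ball 0 R}) :=
    measurableSet_ball.inter ((measurable_add_const (e z)) measurableSet_ball)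
  rw [setCov_eq _ measurableSet_ball, setCov_eq _ measurableSet_ball,
    ← e.measurePreserving.measure_preimage hm.nullMeasurableSet]
  congr 1
  ext x
  simp only [Set.mem_preimage, Set.mem_inter_iff, Set.mem_ofPred_eq, mem_ball_zero_iff, ← map_add,
    LinearIsometryEquiv.norm_map]

lemma norm_lt_eu_two (x : Eu 2) {r : ℝ} (hr : 0 < r) : ‖x‖ < r ↔ x 0 ^ 2 + x 1 ^ 2 < r ^ 2 := by
  rw [EuclideanSpace.norm_eq, Real.sqrt_lt' hr]
  simp [Fin.sum_univ_two]

lemma measurePreserving_pair :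
    MeasurePreserving (fun x : Eu 2 => (x 0, x 1)) volume (volume : Measure (ℝ × ℝ)) :=
  (volume_preserving_finTwoArrow ℝ).comp (PiLp.volume_preserving_ofLp (Fin 2))

/-- The lens `B ∩ (B - a e₀)` is sliced parallel to `e₀`; the slice at height `y` has length
`(2 √(1 - y²) - a)₊`, and the integral over `y` is rewritten by the layer-cake formula. -/
lemma setCov_axis {a : ℝ} (ha : 0 ≤ a) :
    setCov (ball (0 : Eu 2) 1) (EuclideanSpace.single 0 a) =
      ∫⁻ s in Set.Ioi a, ENNReal.ofReal √(4 - s ^ 2) := by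
  have hS : MeasurableSet {p : ℝ × ℝ | p.1 ^ 2 + p.2 ^ 2 < 1 ∧ (p.1 + a) ^ 2 + p.2 ^ 2 < 1} := by
    rw [Set.ofPred_and]
    exact (measurableSet_lt (by fun_prop) (by fun_prop)).inter
      (measurableSet_lt (by fun_prop) (by fun_prop))
  have hT : MeasurableSet {p : ℝ × ℝ | a < p.1 ∧ p.1 < 2 * √(1 - p.2 ^ 2)} := by
    rw [Set.ofPred_and]
    exact (measurableSet_lt (by fun_prop) (by fun_prop)).inter
      (measurableSet_lt (by fun_prop) (by fun_prop))
  rw [setCov_eq _ measurableSet_ball]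
  have h1 : ball (0 : Eu 2) 1 ∩ {x | x + EuclideanSpace.single 0 a ∈ ball 0 1} =
      (fun x : Eu 2 => (x 0, x 1)) ⁻¹'
        {p : ℝ × ℝ | p.1 ^ 2 + p.2 ^ 2 < 1 ∧ (p.1 + a) ^ 2 + p.2 ^ 2 < 1} := by
    ext x
    simp [norm_lt_eu_two]
  rw [h1, measurePreserving_pair.measure_preimage hS.nullMeasurableSet, Measure.volume_eq_prod,
    Measure.prod_apply_symm hS]
  have h2 : ∀ y : ℝ, volume ((fun x : ℝ => (x, y)) ⁻¹'
        {p : ℝ × ℝ | p.1 ^ 2 + p.2 ^ 2 < 1 ∧ (p.1 + a) ^ 2 + p.2 ^ 2 < 1}) =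
      volume ((fun x : ℝ => (x, y)) ⁻¹' {p : ℝ × ℝ | a < p.1 ∧ p.1 < 2 * √(1 - p.2 ^ 2)}) := by
    intro y
    have e1 : (fun x : ℝ => (x, y)) ⁻¹'
        {p : ℝ × ℝ | p.1 ^ 2 + p.2 ^ 2 < 1 ∧ (p.1 + a) ^ 2 + p.2 ^ 2 < 1} =
        Set.Ioo (-√(1 - y ^ 2)) (√(1 - y ^ 2) - a) := by
      ext x
      have f1 : x ^ 2 + y ^ 2 < 1 ↔ x ^ 2 < 1 - y ^ 2 := by constructor <;> intro h <;> linarith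
      have f2 : (x + a) ^ 2 + y ^ 2 < 1 ↔ (x + a) ^ 2 < 1 - y ^ 2 := by
        constructor <;> intro h <;> linarith
      simp only [Set.mem_preimage, Set.mem_ofPred_eq, f1, f2, Real.sq_lt, Set.mem_Ioo]
      constructor
      · rintro ⟨⟨h1, h2⟩, h3, h4⟩; constructor <;> linarith
      · rintro ⟨h1, h2⟩; refine ⟨⟨?_, ?_⟩, ?_, ?_⟩ <;> linarith
    have e2 : (fun x : ℝ => (x, y)) ⁻¹' {p : ℝ × ℝ | a < p.1 ∧ p.1 < 2 * √(1 - p.2 ^ 2)} =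
        Set.Ioo a (2 * √(1 - y ^ 2)) := rfl
    rw [e1, e2, Real.volume_Ioo, Real.volume_Ioo]
    congr 1; ring
  simp_rw [h2]
  rw [← Measure.prod_apply_symm hT, Measure.prod_apply hT, ← lintegral_indicator measurableSet_Ioi]
  refine lintegral_congr fun s => ?_
  by_cases hs : a < s
  · rw [Set.indicator_of_mem (Set.mem_Ioi.2 hs)]
    have e3 : Prod.mk s ⁻¹' {p : ℝ × ℝ | a < p.1 ∧ p.1 < 2 * √(1 - p.2 ^ 2)} =
        Set.Ioo (-√(1 - (s / 2) ^ 2)) (√(1 - (s / 2) ^ 2)) := by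
      ext y
      have f1 : s < 2 * √(1 - y ^ 2) ↔ s / 2 < √(1 - y ^ 2) := by
        constructor <;> intro h <;> linarith
      simp only [Set.mem_preimage, Set.mem_ofPred_eq, hs, true_and, f1, Set.mem_Ioo]
      rw [Real.lt_sqrt (by linarith), ← Real.sq_lt]
      constructor <;> intro h <;> linarith
    rw [e3, Real.volume_Ioo]
    congr 1
    have : 4 - s ^ 2 = 2 ^ 2 * (1 - (s / 2) ^ 2) := by ring
    rw [this, Real.sqrt_mul (by norm_num), Real.sqrt_sq (by norm_num)]
    ring
  · rw [Set.indicator_of_notMem (by simpa using hs)]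
    have : Prod.mk s ⁻¹' {p : ℝ × ℝ | a < p.1 ∧ p.1 < 2 * √(1 - p.2 ^ 2)} = ∅ := by
      ext y; simp [hs]
    rw [this, measure_empty]

/-- Length of the common chord of two unit circles whose centres are at distance `s`
(`0` if they do not meet). -/
noncomputable def chord (s : ℝ) : ℝ := √(4 - s ^ 2)

lemma continuous_chord : Continuous chord := by unfold chord; fun_prop

lemma chord_nonneg (s : ℝ) : 0 ≤ chord s := Real.sqrt_nonneg _

lemma chord_le (s : ℝ) : chord s ≤ 2 := by
  unfold chord
  rw [Real.sqrt_le_left (by norm_num)]; nlinarith [sq_nonneg s]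

lemma chord_eq_zero {s : ℝ} (hs : 2 ≤ s) : chord s = 0 :=
  Real.sqrt_eq_zero_of_nonpos (by nlinarith)

/-- The radial profile of the covariogram of the unit disc. -/
noncomputable def profile (a : ℝ) : ℝ := ∫ s in a..2, chord s

lemma hasDerivAt_profile (a : ℝ) : HasDerivAt profile (-chord a) a :=
  intervalIntegral.integral_hasDerivAt_left (continuous_chord.intervalIntegrable _ _)
    (continuous_chord.stronglyMeasurableAtFilter _ _) continuous_chord.continuousAt

lemma profile_eq_zero {a : ℝ} (ha : 2 ≤ a) : profile a = 0 := by
  unfold profile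
  rw [intervalIntegral.integral_symm, intervalIntegral.integral_congr (g := fun _ => 0)]
  · simp
  · intro s hs
    rw [Set.uIcc_of_le ha] at hs
    exact chord_eq_zero hs.1

lemma cov_eq_profile (z : Eu 2) : cov 1 z = profile ‖z‖ := by
  have h1 : setCov (ball (0 : Eu 2) 1) z = setCov (ball (0 : Eu 2) 1)
      (EuclideanSpace.single 0 ‖z‖) := by
    have hn : ‖z‖ = ‖(EuclideanSpace.single 0 ‖z‖ : Eu 2)‖ := by simp
    rw [← Submodule.reflection_sub hn, setCov_isometry]
  rw [cov, h1, setCov_axis (norm_nonneg z)]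
  have h2 : ∫⁻ s in Set.Ioi ‖z‖, ENNReal.ofReal √(4 - s ^ 2) =
      ∫⁻ s in Set.Ioc ‖z‖ (max ‖z‖ 2), ENNReal.ofReal √(4 - s ^ 2) := by
    rw [← Set.Ioc_union_Ioi_eq_Ioi (le_max_left ‖z‖ 2),
      lintegral_union measurableSet_Ioi (Set.Ioc_disjoint_Ioi le_rfl),
      setLIntegral_congr_fun (s := Set.Ioi (max ‖z‖ 2)) (g := fun _ => 0) measurableSet_Ioi]
    · simp
    · intro s hs
      have : 2 < s := lt_of_le_of_lt (le_max_right _ _) hs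
      have := chord_eq_zero this.le
      unfold chord at this
      simp [this]
  rw [h2]
  change (∫⁻ s in Set.Ioc ‖z‖ (max ‖z‖ 2), ENNReal.ofReal (chord s)).toReal = _
  rw [← integral_eq_lintegral_of_nonneg_ae (ae_of_all _ fun s => chord_nonneg s)
    continuous_chord.aestronglyMeasurable, ← intervalIntegral.integral_of_le (le_max_left _ _)]
  rcases le_total ‖z‖ 2 with h | h
  · rw [max_eq_right h]; rfl
  · rw [max_eq_left h, profile_eq_zero h]; simp

/-- Scaling of the covariogram. -/
lemma cov_scale {R : ℝ} (hR : 0 < R) (z : Eu 2) : cov R (R • z) = R ^ 2 * cov 1 z := by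
  have h1 : ball (0 : Eu 2) R ∩ {x | x + R • z ∈ ball 0 R} =
      R • (ball (0 : Eu 2) 1 ∩ {x | x + z ∈ ball 0 1}) := by
    ext x
    rw [Set.mem_smul_set_iff_inv_smul_mem₀ hR.ne']
    have f1 : ‖R⁻¹ • x‖ < 1 ↔ ‖x‖ < R := by
      rw [norm_smul, Real.norm_of_nonneg (inv_nonneg.2 hR.le), inv_mul_lt_iff₀ hR, mul_one]
    have f2 : ‖R⁻¹ • x + z‖ < 1 ↔ ‖x + R • z‖ < R := by
      have : R⁻¹ • x + z = R⁻¹ • (x + R • z) := by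
        rw [smul_add, inv_smul_smul₀ hR.ne']
      rw [this, norm_smul, Real.norm_of_nonneg (inv_nonneg.2 hR.le), inv_mul_lt_iff₀ hR, mul_one]
    simp only [Set.mem_inter_iff, Set.mem_ofPred_eq, mem_ball_zero_iff, f1, f2]
  rw [cov, setCov_eq _ measurableSet_ball, h1, Measure.addHaar_smul, cov,
    setCov_eq _ measurableSet_ball, ENNReal.toReal_mul, ENNReal.toReal_ofReal (abs_nonneg _)]
  congr 1
  simp

end PertLattice

/-! ### Second-order Taylor estimates for the covariogram -/

namespace PertLattice

/-- The gradient of the covariogram of the unit disc, away from the origin. -/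
noncomputable def grad (z : Eu 2) : Eu 2 := -((chord ‖z‖ * ‖z‖⁻¹) • z)

/-- Weight controlling the second-order behaviour of the covariogram near its singularities, the
origin and the circle of radius `2`. -/
noncomputable def weight (z : Eu 2) : ℝ := ‖z‖⁻¹ + (√|2 - ‖z‖|)⁻¹

lemma weight_nonneg (z : Eu 2) : 0 ≤ weight z := by unfold weight; positivity

lemma grad_neg (z : Eu 2) : grad (-z) = - grad z := by simp [grad]

lemma norm_grad_le (z : Eu 2) : ‖grad z‖ ≤ 2 := by
  unfold grad
  rw [norm_neg, norm_smul, norm_mul, norm_inv, norm_norm, Real.norm_of_nonneg (chord_nonneg _)]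
  rcases eq_or_ne z 0 with rfl | hz
  · simp
  · rw [mul_assoc, inv_mul_cancel₀ (norm_ne_zero_iff.2 hz), mul_one]; exact chord_le _

lemma grad_eq_zero {z : Eu 2} (hz : 2 ≤ ‖z‖) : grad z = 0 := by simp [grad, chord_eq_zero hz]

@[fun_prop] lemma measurable_grad : Measurable grad := by
  have := continuous_chord.measurable
  unfold grad; fun_prop

/-- Square-root behaviour of `chord` at `2`, as a Lipschitz bound at a fixed point `r`. -/
lemma chord_sub_le {r s : ℝ} (hr : 0 ≤ r) (hs : 0 ≤ s) (hr2 : r ≠ 2) :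
    |chord s - chord r| ≤ 4 * |s - r| * (√|2 - r|)⁻¹ := by
  have hp : 0 < √|2 - r| := Real.sqrt_pos.2 (abs_pos.2 (sub_ne_zero.2 hr2.symm))
  rw [← div_eq_mul_inv, le_div_iff₀ hp]
  have hsq : √|2 - r| ^ 2 = |2 - r| := Real.sq_sqrt (abs_nonneg _)
  have hc : ∀ t : ℝ, 0 ≤ t → t ≤ 2 → chord t ^ 2 = (2 - t) * (2 + t) := by
    intro t h0 h2
    unfold chord
    rw [Real.sq_sqrt (by nlinarith)]; ring
  have c1 := chord_nonneg r
  have c2 := chord_nonneg s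
  set p := √|2 - r|
  rcases lt_or_gt_of_ne hr2 with h | h
  · have hr' := hc r hr h.le
    rw [abs_of_pos (by linarith : 0 < 2 - r)] at hsq
    have hpc : p ≤ chord r := by
      refine (sq_le_sq₀ hp.le c1).1 ?_
      nlinarith
    rcases le_total s 2 with h2 | h2
    · have hs' := hc s hs h2
      have e : |chord s - chord r| * (chord s + chord r) = |s - r| * (s + r) := by
        rw [← abs_of_nonneg (add_nonneg c2 c1), ← abs_mul,
          ← abs_of_nonneg (add_nonneg hs hr), ← abs_mul, ← abs_neg]
        congr 1
        nlinarith
      have := abs_nonneg (chord s - chord r)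
      have := abs_nonneg (s - r)
      nlinarith
    · rw [chord_eq_zero h2, zero_sub, abs_neg, abs_of_nonneg c1, abs_of_nonneg (by linarith)]
      have : chord r ≤ 2 * p := by
        refine (sq_le_sq₀ c1 (by positivity)).1 ?_
        nlinarith
      nlinarith
  · rw [chord_eq_zero h.le, sub_zero, abs_of_nonneg c2]
    rw [abs_of_neg (by linarith : 2 - r < 0)] at hsq
    rcases le_total s 2 with h2 | h2
    · have hs' := hc s hs h2
      rw [abs_of_nonpos (by linarith)]
      nlinarith [sq_nonneg (chord s - 2 * p), sq_nonneg (chord s - p)]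
    · rw [chord_eq_zero h2, zero_mul]
      positivity

/-- The gradient is Lipschitz at the fixed point `z`, globally in `y`, with constant `4 * weight z`. -/
lemma grad_sub_le {z : Eu 2} (hz : z ≠ 0) (hz2 : ‖z‖ ≠ 2) (y : Eu 2) :
    ‖grad y - grad z‖ ≤ 4 * weight z * ‖y - z‖ := by
  have hr := norm_pos_iff.2 hz
  have h1 : grad y - grad z = -((chord ‖y‖ - chord ‖z‖) • (‖y‖⁻¹ • y)
      + chord ‖z‖ • (‖y‖⁻¹ • y - ‖z‖⁻¹ • z)) := by
    unfold grad
    simp only [mul_smul, sub_smul, smul_sub]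
    abel
  have h2 : ‖‖y‖⁻¹ • y‖ ≤ 1 := by
    rw [norm_smul, norm_inv, norm_norm]
    exact inv_mul_le_one
  have h3 : ‖‖y‖⁻¹ • y - ‖z‖⁻¹ • z‖ ≤ 2 * ‖y - z‖ * ‖z‖⁻¹ := by
    have e : ‖y‖⁻¹ • y - ‖z‖⁻¹ • z = ((‖z‖ - ‖y‖) * ‖z‖⁻¹) • (‖y‖⁻¹ • y) + ‖z‖⁻¹ • (y - z) := by
      rcases eq_or_ne y 0 with rfl | hy
      · simp
      · have hy' := norm_ne_zero_iff.2 hy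
        have : (‖z‖ - ‖y‖) * ‖z‖⁻¹ * ‖y‖⁻¹ = ‖y‖⁻¹ - ‖z‖⁻¹ := by
          field_simp
        rw [smul_smul, this, sub_smul, smul_sub]; abel
    rw [e]
    refine (norm_add_le _ _).trans ?_
    rw [norm_smul, norm_smul (‖z‖⁻¹) (y - z), norm_mul, norm_inv, norm_norm]
    have : ‖‖z‖ - ‖y‖‖ ≤ ‖y - z‖ := by
      rw [Real.norm_eq_abs, abs_sub_comm]; exact abs_norm_sub_norm_le _ _
    have h4 : ‖‖z‖ - ‖y‖‖ * ‖z‖⁻¹ * ‖‖y‖⁻¹ • y‖ ≤ ‖y - z‖ * ‖z‖⁻¹ * 1 := by gcongr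
    linarith
  have h5 := chord_sub_le (norm_nonneg z) (norm_nonneg y) hz2
  have h6 : |‖y‖ - ‖z‖| ≤ ‖y - z‖ := abs_norm_sub_norm_le _ _
  rw [h1, norm_neg]
  refine (norm_add_le _ _).trans ?_
  rw [norm_smul, norm_smul (chord ‖z‖), Real.norm_eq_abs, Real.norm_of_nonneg (chord_nonneg _)]
  calc |chord ‖y‖ - chord ‖z‖| * ‖‖y‖⁻¹ • y‖ + chord ‖z‖ * ‖‖y‖⁻¹ • y - ‖z‖⁻¹ • z‖
      ≤ (4 * ‖y - z‖ * (√|2 - ‖z‖|)⁻¹) * 1 + 2 * (2 * ‖y - z‖ * ‖z‖⁻¹) := by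
        gcongr
        · exact h5.trans (by gcongr)
        · exact chord_le _
    _ = _ := by unfold weight; ring

/-- The Hessian of the covariogram of the unit disc, as the derivative of `grad`; it is used only off
the origin and the circle of radius `2`. -/
noncomputable def hess (z : Eu 2) : Eu 2 →L[ℝ] Eu 2 := fderiv ℝ grad z

lemma norm_hess_le {z : Eu 2} (hz : z ≠ 0) (hz2 : ‖z‖ ≠ 2) : ‖hess z‖ ≤ 4 * weight z :=
  norm_fderiv_le_of_lip' ℝ (by have := weight_nonneg z; positivity)
    (Eventually.of_forall fun y => grad_sub_le hz hz2 y)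

lemma differentiableAt_grad {z : Eu 2} (hz : z ≠ 0) (hz2 : ‖z‖ ≠ 2) :
    DifferentiableAt ℝ grad z := by
  have hn : DifferentiableAt ℝ (fun z : Eu 2 => ‖z‖) z := differentiableAt_id.norm ℝ hz
  have hc : DifferentiableAt ℝ (fun z : Eu 2 => chord ‖z‖) z := by
    unfold chord
    refine DifferentiableAt.sqrt (by fun_prop) ?_
    intro h
    apply hz2
    nlinarith [norm_nonneg z]
  unfold grad
  exact ((hc.mul (hn.inv (norm_ne_zero_iff.2 hz))).smul differentiableAt_id).neg

lemma hasDerivAt_cov_line {z h : Eu 2} {t : ℝ} (hz : z + t • h ≠ 0) :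
    HasDerivAt (fun t : ℝ => cov 1 (z + t • h)) (inner ℝ (grad (z + t • h)) h) t := by
  simp_rw [cov_eq_profile]
  have h1 : HasDerivAt (fun t : ℝ => z + t • h) h t := by
    simpa using ((hasDerivAt_id t).smul_const h).const_add z
  have h2 := h1.norm_sq.sqrt (by simpa using hz)
  simp only [Real.sqrt_sq (norm_nonneg _)] at h2
  have h3 := (hasDerivAt_profile ‖z + t • h‖).comp t h2
  refine h3.congr_deriv ?_
  unfold grad
  rw [inner_neg_left, real_inner_smul_left]
  have := norm_ne_zero_iff.2 hz
  field_simp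

/-- First-order Taylor remainder of the covariogram of the unit disc. -/
noncomputable def rem₁ (z h : Eu 2) : ℝ := cov 1 (z + h) - cov 1 z - inner ℝ (grad z) h

/-- Taylor estimate along a segment avoiding the origin. -/
lemma taylor_segment {z h : Eu 2} (h0 : ∀ t ∈ Set.Icc (0 : ℝ) 1, z + t • h ≠ 0)
    (B : Eu 2 →L[ℝ] Eu 2) {K : ℝ}
    (hK : ∀ t ∈ Set.Icc (0 : ℝ) 1, ‖grad (z + t • h) - grad z - t • B h‖ ≤ K) :
    |rem₁ z h - 1 / 2 * inner ℝ (B h) h| ≤ K * ‖h‖ := by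
  have key := norm_image_sub_le_of_norm_deriv_le_segment_01'
    (f := fun t : ℝ => cov 1 (z + t • h) - t * inner ℝ (grad z) h - t ^ 2 / 2 * inner ℝ (B h) h)
    (f' := fun t => inner ℝ (grad (z + t • h) - grad z - t • B h) h) (C := K * ‖h‖) ?_ ?_
  · rw [Real.norm_eq_abs] at key
    refine le_trans (le_of_eq ?_) key
    congr 1
    simp [rem₁]
    ring
  · intro t ht
    have h1 := hasDerivAt_cov_line (h0 t ht)
    have h2 : HasDerivAt (fun t : ℝ => t * inner ℝ (grad z) h) (inner ℝ (grad z) h) t := by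
      simpa using (hasDerivAt_id t).mul_const (inner ℝ (grad z) h)
    have h3 : HasDerivAt (fun t : ℝ => t ^ 2 / 2 * inner ℝ (B h) h) (t * inner ℝ (B h) h) t := by
      have := (((hasDerivAt_id t).pow 2).div_const 2).mul_const (inner ℝ (B h) h)
      simpa using this
    have h4 := ((h1.sub h2).sub h3).hasDerivWithinAt (s := Set.Icc (0 : ℝ) 1)
    rw [inner_sub_left, inner_sub_left, real_inner_smul_left]
    exact h4
  · intro t ht
    refine (norm_inner_le_norm _ _).trans ?_
    gcongr
    exact hK t (Set.Ico_subset_Icc_self ht)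

lemma abs_cov_sub_le (y z : Eu 2) : |cov 1 y - cov 1 z| ≤ 2 * ‖y - z‖ := by
  rw [cov_eq_profile, cov_eq_profile]
  have := Convex.norm_image_sub_le_of_norm_hasDerivWithin_le (𝕜 := ℝ) (s := Set.univ) (C := 2)
    (f := profile) (f' := fun a => -chord a) (x := ‖z‖) (y := ‖y‖)
    (fun a _ => (hasDerivAt_profile a).hasDerivWithinAt)
    (fun a _ => by rw [norm_neg, Real.norm_of_nonneg (chord_nonneg a)]; exact chord_le a)
    convex_univ (Set.mem_univ _) (Set.mem_univ _)
  rw [Real.norm_eq_abs] at this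
  refine this.trans ?_
  gcongr
  exact abs_norm_sub_norm_le _ _

lemma segment_ne_zero {z h : Eu 2} (hh : ‖h‖ < ‖z‖) :
    ∀ t ∈ Set.Icc (0 : ℝ) 1, z + t • h ≠ 0 := by
  intro t ht h0
  have : z = -(t • h) := eq_neg_of_add_eq_zero_left h0
  rw [this, norm_neg, norm_smul, Real.norm_of_nonneg ht.1] at hh
  nlinarith [ht.2, norm_nonneg h]

/-- For `‖h‖ < ‖z‖` the segment from `z` to `z + h` avoids the origin and Taylor applies; otherwise the
Lipschitz bound for `cov 1` is enough, since then `‖h‖ ≤ ‖z‖⁻¹ * ‖h‖ ^ 2`. -/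
lemma abs_rem₁_le {z : Eu 2} (hz : z ≠ 0) (hz2 : ‖z‖ ≠ 2) (h : Eu 2) :
    |rem₁ z h| ≤ 4 * weight z * ‖h‖ ^ 2 := by
  have hw := weight_nonneg z
  rcases lt_or_ge ‖h‖ ‖z‖ with hh | hh
  · have := taylor_segment (segment_ne_zero hh) 0 (K := 4 * weight z * ‖h‖) ?_
    · simp only [zero_apply, inner_zero_left, mul_zero, sub_zero] at this
      refine this.trans (le_of_eq (by ring))
    · intro t ht
      simp only [zero_apply, smul_zero, sub_zero]
      refine (grad_sub_le hz hz2 _).trans ?_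
      gcongr
      rw [add_sub_cancel_left, norm_smul, Real.norm_of_nonneg ht.1]
      exact mul_le_of_le_one_left (norm_nonneg _) ht.2
  · have hr := norm_pos_iff.2 hz
    have h1 := abs_cov_sub_le (z + h) z
    rw [add_sub_cancel_left] at h1
    have h2 : |inner ℝ (grad z) h| ≤ 2 * ‖h‖ :=
      (abs_real_inner_le_norm _ _).trans (by gcongr; exact norm_grad_le z)
    have h3 := abs_sub (cov 1 (z + h) - cov 1 z) (inner ℝ (grad z) h)
    have h4 : ‖h‖ ≤ weight z * ‖h‖ ^ 2 := by
      have : ‖z‖⁻¹ ≤ weight z := by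
        unfold weight; exact le_add_of_nonneg_right (by positivity)
      calc ‖h‖ = 1 * ‖h‖ := by ring
        _ ≤ (‖z‖⁻¹ * ‖h‖) * ‖h‖ := by
          gcongr
          rw [inv_mul_eq_div, le_div_iff₀ hr]; linarith
        _ ≤ (weight z * ‖h‖) * ‖h‖ := by gcongr
        _ = _ := by ring
    unfold rem₁
    linarith

lemma abs_quad_le {z : Eu 2} (hz : z ≠ 0) (hz2 : ‖z‖ ≠ 2) (h : Eu 2) :
    |1 / 2 * inner ℝ (hess z h) h| ≤ 2 * weight z * ‖h‖ ^ 2 := by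
  rw [abs_mul, abs_of_pos (by norm_num : (0 : ℝ) < 1 / 2)]
  have h1 := abs_real_inner_le_norm (hess z h) h
  have h2 := (hess z).le_of_opNorm_le (norm_hess_le hz hz2) h
  nlinarith [norm_nonneg h]

/-- Second-order Taylor expansion off the singular set. -/
lemma rem₁_sub_quad {z : Eu 2} (hz : z ≠ 0) (hz2 : ‖z‖ ≠ 2) {ε : ℝ} (hε : 0 < ε) :
    ∃ δ > 0, ∀ h : Eu 2, ‖h‖ < δ → |rem₁ z h - 1 / 2 * inner ℝ (hess z h) h| ≤ ε * ‖h‖ ^ 2 := by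
  have h1 := (differentiableAt_grad hz hz2).hasFDerivAt
  rw [hasFDerivAt_iff_isLittleO_nhds_zero] at h1
  have h2 := h1.def hε
  rw [Metric.eventually_nhds_iff] at h2
  obtain ⟨δ, hδ, h3⟩ := h2
  refine ⟨min δ ‖z‖, lt_min hδ (norm_pos_iff.2 hz), fun h hh => ?_⟩
  have := taylor_segment (segment_ne_zero (hh.trans_le (min_le_right _ _))) (hess z)
    (K := ε * ‖h‖) ?_
  · exact this.trans (le_of_eq (by ring))
  · intro t ht
    have hle : ‖t • h‖ ≤ ‖h‖ := by
      rw [norm_smul, Real.norm_of_nonneg ht.1]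
      exact mul_le_of_le_one_left (norm_nonneg _) ht.2
    have h5 := h3 (y := t • h)
      (by rw [dist_zero_right]; exact (hle.trans_lt hh).trans_le (min_le_left _ _))
    rw [map_smul] at h5
    refine h5.trans ?_
    gcongr

end PertLattice

/-! ### Integrability of the Hessian, and its vanishing mean -/

namespace PertLattice

lemma ae_regular : ∀ᵐ z : Eu 2, z ≠ 0 ∧ ‖z‖ ≠ 2 := by
  have h1 : ∀ᵐ z : Eu 2, z ≠ 0 := by
    rw [ae_iff]; simp
  have h2 : ∀ᵐ z : Eu 2, ‖z‖ ≠ 2 := by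
    rw [ae_iff]
    have : {z : Eu 2 | ¬ ‖z‖ ≠ 2} = sphere 0 2 := by ext z; simp
    rw [this]
    exact Measure.addHaar_sphere _ _ _
  filter_upwards [h1, h2] with z a b using ⟨a, b⟩

@[fun_prop] lemma measurable_weight : Measurable weight := by unfold weight; fun_prop

lemma integrableOn_inv_sqrt :
    IntegrableOn (fun y : ℝ => (√|2 - y|)⁻¹) (Set.Ioo 0 4) := by
  have h0 : ∀ a b : ℝ, IntervalIntegrable (fun x : ℝ => x ^ (-(1 / 2) : ℝ)) volume a b :=
    fun a b => intervalIntegral.intervalIntegrable_rpow' (by norm_num)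
  have h1 : IntervalIntegrable (fun y : ℝ => (2 - y) ^ (-(1 / 2) : ℝ)) volume 0 4 := by
    have := (h0 2 (-2)).comp_sub_left 2
    norm_num at this ⊢; exact this
  have h2 : IntervalIntegrable (fun y : ℝ => (y - 2) ^ (-(1 / 2) : ℝ)) volume 0 4 := by
    have := (h0 (-2) 2).comp_sub_right 2
    norm_num at this ⊢; exact this
  have h3 := h1.norm.add h2.norm
  rw [intervalIntegrable_iff_integrableOn_Ioo_of_le (by norm_num)] at h3
  refine h3.mono' (Measurable.aestronglyMeasurable (by fun_prop)) (ae_of_all _ fun y => ?_)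
  have key : ∀ t : ℝ, 0 ≤ t → (√t)⁻¹ = t ^ (-(1 / 2) : ℝ) := fun t ht => by
    rw [Real.rpow_neg ht, Real.sqrt_eq_rpow]
  rw [Real.norm_of_nonneg (by positivity)]
  rcases le_total 0 (2 - y) with h | h
  · rw [abs_of_nonneg h, key _ h]
    exact le_add_of_le_of_nonneg (le_abs_self _) (norm_nonneg _)
  · rw [abs_of_nonpos h, key _ (by linarith), neg_sub]
    exact le_add_of_nonneg_of_le (norm_nonneg _) (le_abs_self _)

lemma integrableOn_weight : IntegrableOn weight (ball 0 4) := by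
  have := (integrableOn_fun_norm_addHaar (volume : Measure (Eu 2)) (r := 4)
    (f := fun r : ℝ => r⁻¹ + (√|2 - r|)⁻¹)).2 ?_
  · exact this
  · have h1 : IntegrableOn (fun y : ℝ => 1 + 4 * (√|2 - y|)⁻¹) (Set.Ioo 0 4) :=
      (integrableOn_const (by simp)).add (integrableOn_inv_sqrt.const_mul 4)
    refine Integrable.mono' h1 (Measurable.aestronglyMeasurable (by fun_prop)) ?_
    filter_upwards [ae_restrict_mem measurableSet_Ioo] with y hy
    have : Module.finrank ℝ (Eu 2) - 1 = 1 := by simp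
    rw [this, pow_one, smul_eq_mul, Real.norm_of_nonneg (mul_nonneg hy.1.le (by have := hy.1; positivity)),
      mul_add, mul_inv_cancel₀ hy.1.ne']
    gcongr
    exact hy.2.le

/-- Symmetrised entries of the Hessian, equal to twice its entries where it is symmetric. Working with
them avoids proving the symmetry. -/
noncomputable def hessSym (i j : Fin 2) (z : Eu 2) : ℝ :=
  hess z (EuclideanSpace.single i 1) j + hess z (EuclideanSpace.single j 1) i

lemma inner_hess (z v : Eu 2) :
    inner ℝ (hess z v) v = ∑ i, ∑ j, hess z (EuclideanSpace.single i 1) j * (v i * v j) := by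
  have hv : v = ∑ i, v i • (EuclideanSpace.single i (1 : ℝ)) := by
    ext j; fin_cases j <;> simp
  conv_lhs => rw [hv]
  simp [Fin.sum_univ_two, inner_add_left, inner_add_right, PiLp.inner_apply]
  ring

lemma inner_hess_sym (z v : Eu 2) :
    1 / 2 * inner ℝ (hess z v) v = 1 / 4 * ∑ i, ∑ j, hessSym i j z * (v i * v j) := by
  rw [inner_hess]
  simp only [Fin.sum_univ_two, hessSym]
  ring

lemma hessSym_polar (i j : Fin 2) (z : Eu 2) :
    hessSym i j z =
      inner ℝ (hess z (EuclideanSpace.single i 1 + EuclideanSpace.single j 1))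
        (EuclideanSpace.single i 1 + EuclideanSpace.single j 1)
      - inner ℝ (hess z (EuclideanSpace.single i 1)) (EuclideanSpace.single i 1)
      - inner ℝ (hess z (EuclideanSpace.single j 1)) (EuclideanSpace.single j 1) := by
  simp only [map_add, inner_add_left, inner_add_right, EuclideanSpace.inner_single_right]
  simp [hessSym]
  ring

lemma measurable_hess_apply (v : Eu 2) : Measurable fun z => hess z v :=
  (measurable_fderiv_apply_const ℝ grad v)

lemma measurable_hessSym (i j : Fin 2) : Measurable (hessSym i j) := by
  have := measurable_hess_apply
  unfold hessSym
  fun_prop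

lemma integrableOn_quad (v : Eu 2) :
    IntegrableOn (fun z => 1 / 2 * inner ℝ (hess z v) v) (ball 0 4) := by
  have hm := measurable_hess_apply v
  refine Integrable.mono' ((integrableOn_weight.const_mul 2).mul_const (‖v‖ ^ 2))
    (Measurable.aestronglyMeasurable (by fun_prop)) ?_
  filter_upwards [ae_restrict_of_ae ae_regular] with z hz
  exact abs_quad_le hz.1 hz.2 v

lemma cov_one_eq_zero {z : Eu 2} (hz : 2 ≤ ‖z‖) : cov 1 z = 0 := by
  rw [cov_eq_profile, profile_eq_zero hz]

lemma integrable_cov_unit : Integrable (fun z : Eu 2 => cov 1 z) := by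
  have : IsFiniteMeasure (volume.restrict (ball (0 : Eu 2) 2)) :=
    ⟨by rw [Measure.restrict_apply_univ]; exact measure_ball_lt_top⟩
  rw [← integrableOn_iff_integrable_of_support_subset (s := ball 0 2)]
  · exact integrable_cov_comp 1 measurable_id
  · intro z hz
    by_contra h
    exact hz (cov_one_eq_zero (by simpa using h))

lemma integrable_grad : Integrable grad := by
  have : IsFiniteMeasure (volume.restrict (ball (0 : Eu 2) 2)) :=
    ⟨by rw [Measure.restrict_apply_univ]; exact measure_ball_lt_top⟩
  rw [← integrableOn_iff_integrable_of_support_subset (s := ball 0 2)]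
  · exact Integrable.of_bound measurable_grad.aestronglyMeasurable 2
      (ae_of_all _ fun z => norm_grad_le z)
  · intro z hz
    by_contra h
    exact hz (grad_eq_zero (by simpa using h))

lemma integrable_inner_grad (h : Eu 2) : Integrable fun z => inner ℝ (grad z) h :=
  integrable_grad.inner_const h

lemma integral_inner_grad (h : Eu 2) : ∫ z, inner ℝ (grad z) h = 0 := by
  have := integral_neg_eq_self (fun z => inner ℝ (grad z) h) (volume : Measure (Eu 2))
  simp only [grad_neg, inner_neg_left, integral_neg] at this
  linarith

/-- Translation invariance of the integral of `cov 1`, and oddness of `grad`. -/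
lemma integral_rem₁ (h : Eu 2) : ∫ z, rem₁ z h = 0 := by
  unfold rem₁
  have i1 : Integrable fun z : Eu 2 => cov 1 (z + h) := integrable_cov_unit.comp_add_right h
  have i2 : Integrable fun z : Eu 2 => cov 1 (z + h) - cov 1 z := i1.sub integrable_cov_unit
  rw [integral_sub i2 (integrable_inner_grad h),
    integral_sub i1 integrable_cov_unit, integral_inner_grad,
    integral_add_right_eq_self (fun z => cov 1 z)]
  simp

lemma setIntegral_rem₁ {h : Eu 2} (hh : ‖h‖ ≤ 2) : ∫ z in ball 0 4, rem₁ z h = 0 := by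
  rw [setIntegral_eq_integral_of_forall_compl_eq_zero, integral_rem₁]
  intro z hz
  have hz : 4 ≤ ‖z‖ := by simpa using hz
  have h1 : 2 ≤ ‖z + h‖ := by
    have := norm_sub_le (z + h) h
    rw [add_sub_cancel_right] at this
    linarith
  simp [rem₁, cov_one_eq_zero h1, cov_one_eq_zero (by linarith : 2 ≤ ‖z‖),
    grad_eq_zero (by linarith : 2 ≤ ‖z‖)]

@[fun_prop] lemma measurable_rem₁ : Measurable fun p : Eu 2 × Eu 2 => rem₁ p.1 p.2 := by
  have := measurable_cov (d := 2) 1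
  unfold rem₁; fun_prop

lemma scaled_le {z : Eu 2} (hz : z ≠ 0) (hz2 : ‖z‖ ≠ 2) {R : ℝ} (hR : 0 < R) (v : Eu 2) :
    |R ^ 2 * rem₁ z (R⁻¹ • v)| ≤ 4 * weight z * ‖v‖ ^ 2 := by
  have := abs_rem₁_le hz hz2 (R⁻¹ • v)
  rw [abs_mul, abs_of_pos (by positivity)]
  rw [norm_smul, Real.norm_of_nonneg (by positivity)] at this
  calc R ^ 2 * |rem₁ z (R⁻¹ • v)| ≤ R ^ 2 * (4 * weight z * (R⁻¹ * ‖v‖) ^ 2) := by gcongr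
    _ = _ := by field_simp

lemma scaled_sub_quad {z : Eu 2} (hz : z ≠ 0) (hz2 : ‖z‖ ≠ 2) {ε : ℝ} (hε : 0 < ε) :
    ∃ δ > 0, ∀ R > 0, ∀ v : Eu 2, ‖v‖ < δ * R →
      |R ^ 2 * rem₁ z (R⁻¹ • v) - 1 / 2 * inner ℝ (hess z v) v| ≤ ε * ‖v‖ ^ 2 := by
  obtain ⟨δ, hδ, h⟩ := rem₁_sub_quad hz hz2 hε
  refine ⟨δ, hδ, fun R hR v hv => ?_⟩
  have hn : ‖R⁻¹ • v‖ = R⁻¹ * ‖v‖ := by rw [norm_smul, Real.norm_of_nonneg (by positivity)]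
  have h1 := h (R⁻¹ • v) (by
    rw [hn, inv_mul_lt_iff₀ hR]; linarith)
  rw [hn, map_smul, real_inner_smul_left, real_inner_smul_right] at h1
  have h2 : R ^ 2 * rem₁ z (R⁻¹ • v) - 1 / 2 * inner ℝ (hess z v) v =
      R ^ 2 * (rem₁ z (R⁻¹ • v) - 1 / 2 * (R⁻¹ * (R⁻¹ * inner ℝ (hess z v) v))) := by
    field_simp
  rw [h2, abs_mul, abs_of_pos (by positivity)]
  calc _ ≤ R ^ 2 * (ε * (R⁻¹ * ‖v‖) ^ 2) := by gcongr
    _ = _ := by field_simp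

/-- The Hessian has mean zero: it is the limit of second-order remainders at scale `R⁻¹`, whose
integrals vanish. -/
lemma setIntegral_quad (v : Eu 2) : ∫ z in ball 0 4, 1 / 2 * inner ℝ (hess z v) v = 0 := by
  have h1 : Tendsto (fun R : ℝ => ∫ z in ball 0 4, R ^ 2 * rem₁ z (R⁻¹ • v)) atTop
      (nhds (∫ z in ball 0 4, 1 / 2 * inner ℝ (hess z v) v)) := by
    refine tendsto_integral_filter_of_dominated_convergence (fun z => 4 * weight z * ‖v‖ ^ 2)
      (Eventually.of_forall fun R => Measurable.aestronglyMeasurable ?_) ?_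
      ((integrableOn_weight.const_mul 4).mul_const _) ?_
    · have := measurable_rem₁.comp (measurable_id.prodMk (measurable_const (a := R⁻¹ • v)))
      exact this.const_mul (R ^ 2)
    · filter_upwards [eventually_gt_atTop 0] with R hR
      filter_upwards [ae_restrict_of_ae ae_regular] with z hz
      exact scaled_le hz.1 hz.2 hR v
    · filter_upwards [ae_restrict_of_ae ae_regular] with z hz
      rw [Metric.tendsto_nhds]
      intro η hη
      obtain ⟨δ, hδ, h⟩ := scaled_sub_quad hz.1 hz.2
        (ε := η / (2 * (‖v‖ ^ 2 + 1))) (by positivity)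
      filter_upwards [eventually_gt_atTop 0, eventually_gt_atTop (‖v‖ / δ)] with R hR hR2
      rw [Real.dist_eq]
      refine (h R hR v (by rw [div_lt_iff₀ hδ] at hR2; linarith)).trans_lt ?_
      rw [div_mul_eq_mul_div, div_lt_iff₀ (by positivity)]
      nlinarith [sq_nonneg ‖v‖]
  have h2 : (fun R : ℝ => ∫ z in ball 0 4, R ^ 2 * rem₁ z (R⁻¹ • v)) =ᶠ[atTop] fun _ => 0 := by
    filter_upwards [eventually_ge_atTop 1, eventually_ge_atTop ‖v‖] with R hR hR2
    rw [integral_const_mul, setIntegral_rem₁, mul_zero]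
    rw [norm_smul, Real.norm_of_nonneg (by positivity), inv_mul_le_iff₀ (by linarith)]
    linarith
  exact tendsto_nhds_unique h1 (tendsto_const_nhds.congr' h2.symm)

lemma integrableOn_hessSym (i j : Fin 2) : IntegrableOn (hessSym i j) (ball 0 4) := by
  have h : ∀ v, IntegrableOn (fun z => inner ℝ (hess z v) v) (ball 0 4) := fun v => by
    have := (integrableOn_quad v).const_mul 2
    refine this.congr (ae_of_all _ fun z => ?_)
    ring
  have := ((h (EuclideanSpace.single i 1 + EuclideanSpace.single j 1)).sub
    (h (EuclideanSpace.single i 1))).sub (h (EuclideanSpace.single j 1))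
  exact this.congr (ae_of_all _ fun z => (hessSym_polar i j z).symm)

lemma setIntegral_hessSym (i j : Fin 2) : ∫ z in ball 0 4, hessSym i j z = 0 := by
  have h : ∀ v, IntegrableOn (fun z => inner ℝ (hess z v) v) (ball 0 4) := fun v => by
    have := (integrableOn_quad v).const_mul 2
    refine this.congr (ae_of_all _ fun z => ?_)
    ring
  have h0 : ∀ v, ∫ z in ball 0 4, inner ℝ (hess z v) v = 0 := fun v => by
    have := setIntegral_quad v
    rw [integral_const_mul] at this
    linarith
  simp_rw [hessSym_polar]
  have h1 : ∀ a b c, ∫ z in ball 0 4, (inner ℝ (hess z a) a - inner ℝ (hess z b) b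
      - inner ℝ (hess z c) c) = 0 := fun a b c => by
    have i1 : IntegrableOn (fun z => inner ℝ (hess z a) a - inner ℝ (hess z b) b) (ball 0 4) :=
      (h a).sub (h b)
    rw [integral_sub i1 (h c), integral_sub (h a) (h b), h0, h0, h0]
    simp
  exact h1 _ _ _

end PertLattice

/-! ### The quadratic term -/

namespace PertLattice

lemma integral_shift_mul {α : Type*} [MeasurableSpace α] {ν : Measure α} [IsProbabilityMeasure ν]
    {X Y : α → ℝ} (hX : MemLp X 2 ν) (hY : MemLp Y 2 ν) (hX0 : ∫ a, X a ∂ν = 0)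
    (hY0 : ∫ a, Y a ∂ν = 0) (s t : ℝ) :
    ∫ a, (X a - s) * (Y a - t) ∂ν = ∫ a, X a * Y a ∂ν + s * t := by
  have i1 : Integrable (fun a => X a * Y a) ν := hX.integrable_mul hY
  have i2 : Integrable X ν := hX.integrable (by norm_num)
  have i3 : Integrable Y ν := hY.integrable (by norm_num)
  have e : ∀ a, (X a - s) * (Y a - t) = X a * Y a - (t * X a + s * Y a) + s * t := fun a => by ring
  have i4 : Integrable (fun a => t * X a + s * Y a) ν := (i2.const_mul t).add (i3.const_mul s)
  have i5 : Integrable (fun a => X a * Y a - (t * X a + s * Y a)) ν := i1.sub i4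
  simp_rw [e]
  rw [integral_add i5 (integrable_const _), integral_sub i1 i4,
    integral_add (i2.const_mul t) (i3.const_mul s), integral_const_mul, integral_const_mul, hX0, hY0]
  simp

section corr

variable {d : ℕ} {μ : Measure (Field d)}

/-- Correlation of the field: `E[(θ_m)_i (θ_0)_j]`. -/
noncomputable def corr (μ : Measure (Field d)) (i j : Fin d) (m : Fin d → ℤ) : ℝ :=
  ∫ θ, θ m i * θ 0 j ∂μ

lemma norm_apply_le (y : Eu d) (i : Fin d) : ‖y i‖ ≤ ‖y‖ := PiLp.norm_apply_le y i

lemma memLp_coord_zero (hL2 : Integrable (fun θ : Field d => ‖θ 0‖ ^ 2) μ) (i : Fin d) :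
    MemLp (fun θ : Field d => θ 0 i) 2 μ := by
  have hm : Measurable fun θ : Field d => θ 0 i := by fun_prop
  refine (memLp_two_iff_integrable_sq hm.aestronglyMeasurable).2 ?_
  refine hL2.mono' (Measurable.aestronglyMeasurable (by fun_prop)) (ae_of_all _ fun θ => ?_)
  rw [norm_pow]
  gcongr
  exact norm_apply_le _ _

lemma memLp_coord (hμ : Stationary μ) (hL2 : Integrable (fun θ : Field d => ‖θ 0‖ ^ 2) μ)
    (k : Fin d → ℤ) (i : Fin d) : MemLp (fun θ : Field d => θ k i) 2 μ := by
  have := (memLp_coord_zero hL2 i).comp_measurePreserving (hμ k)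
  simpa [Function.comp_def] using this

lemma norm_corr_le (hμ : Stationary μ) (hL2 : Integrable (fun θ : Field d => ‖θ 0‖ ^ 2) μ)
    (i j : Fin d) (m : Fin d → ℤ) : ‖corr μ i j m‖ ≤ 2 * ∫ θ : Field d, ‖θ 0‖ ^ 2 ∂μ := by
  have i1 : Integrable (fun θ : Field d => ‖θ m‖ ^ 2) μ :=
    hμ.integrable_coord (f := fun y => ‖y‖ ^ 2) hL2 m
  refine (norm_integral_le_of_norm_le (i1.add hL2) (ae_of_all _ fun θ => ?_)).trans (le_of_eq ?_)
  · rw [norm_mul]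
    have h1 := norm_apply_le (θ m) i
    have h2 := norm_apply_le (θ 0) j
    have h3 : ‖θ m i‖ * ‖θ 0 j‖ ≤ ‖θ m‖ * ‖θ 0‖ := by gcongr
    simp only [Pi.add_apply]
    nlinarith [sq_nonneg (‖θ m‖ - ‖θ 0‖), norm_nonneg (θ m), norm_nonneg (θ 0)]
  · simp only [Pi.add_apply]
    rw [integral_add i1 hL2, hμ.integral_coord (f := fun y => ‖y‖ ^ 2) (by fun_prop)]
    ring

lemma integral_sub_mul_sub (hμ : Stationary μ)
    (hL2 : Integrable (fun θ : Field d => ‖θ 0‖ ^ 2) μ) (i j : Fin d) (m : Fin d → ℤ) :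
    ∫ θ, (θ m - θ 0) i * (θ m - θ 0) j ∂μ =
      2 * corr μ i j 0 - corr μ i j m - corr μ j i m := by
  have hInt : ∀ k l i j, Integrable (fun θ : Field d => θ k i * θ l j) μ := fun k l i j =>
    (memLp_coord hμ hL2 k i).integrable_mul (memLp_coord hμ hL2 l j)
  have e : ∀ θ : Field d, (θ m - θ 0) i * (θ m - θ 0) j =
      (θ m i * θ m j + θ 0 i * θ 0 j) - (θ m i * θ 0 j + θ m j * θ 0 i) := fun θ => by
    simp only [PiLp.sub_apply]; ring
  have h1 : ∫ θ, θ m i * θ m j ∂μ = corr μ i j 0 :=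
    hμ.integral_coord (f := fun y => y i * y j) (by fun_prop) m
  have i1 : Integrable (fun θ : Field d => θ m i * θ m j + θ 0 i * θ 0 j) μ :=
    (hInt _ _ _ _).add (hInt _ _ _ _)
  have i2 : Integrable (fun θ : Field d => θ m i * θ 0 j + θ m j * θ 0 i) μ :=
    (hInt _ _ _ _).add (hInt _ _ _ _)
  simp_rw [e]
  rw [integral_sub i1 i2, integral_add (hInt _ _ _ _) (hInt _ _ _ _),
    integral_add (hInt _ _ _ _) (hInt _ _ _ _), h1]
  unfold corr
  ring

end corr

/-- Difference of the second moments of the displacements `disp` and `disp₀` at `x`. -/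
noncomputable def momDiff (μ : Measure (Field 2)) (i j : Fin 2) (x : Eu 2) : ℝ :=
  ∫ θ, disp θ x i * disp θ x j ∂μ - ∫ w in hCube 2, disp₀ w x i * disp₀ w x j

/-- The part of `momDiff` which does not depend on `x`. -/
noncomputable def momConst (μ : Measure (Field 2)) (i j : Fin 2) : ℝ :=
  2 * corr μ i j 0 - ∫ w in hCube 2, (w - ctr 2) i * (w - ctr 2) j

variable {μ : Measure (Field 2)} [IsProbabilityMeasure μ]

lemma memLp_hCube (i : Fin 2) :
    MemLp (fun w : Eu 2 => (w - ctr 2) i) 2 (volume.restrict (hCube 2)) := by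
  refine MemLp.of_bound (Measurable.aestronglyMeasurable (by fun_prop)) 4 ?_
  filter_upwards [ae_restrict_mem measurableSet_hCube] with w hw
  have h1 := norm_hCube_le le_rfl hw
  have h2 := norm_hCube_le le_rfl (ctr_mem (d := 2))
  have h3 := norm_sub_le w (ctr 2)
  have h4 := norm_apply_le (w - ctr 2) i
  linarith

/-- Both displacements have the same mean `latt (cell x) - x`, so its square drops out of the
difference of second moments. -/
lemma momDiff_eq (hμ : Stationary μ) (hL2 : Integrable (fun θ : Field 2 => ‖θ 0‖ ^ 2) μ)
    (i j : Fin 2) (x : Eu 2) :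
    momDiff μ i j x = momConst μ i j - corr μ i j (cell x) - corr μ j i (cell x) := by
  have hX : ∀ i, MemLp (fun θ : Field 2 => (θ (cell x) - θ 0) i) 2 μ := fun i =>
    (memLp_coord hμ hL2 (cell x) i).sub (memLp_coord hμ hL2 0 i)
  have hX0 : ∀ i, ∫ θ, (θ (cell x) - θ 0) i ∂μ = 0 := fun i =>
    integral_clm_sub hμ hL2 (EuclideanSpace.proj i) (cell x)
  have hY0 : ∀ i, ∫ w in hCube 2, (w - ctr 2) i = 0 := fun i =>
    integral_clm_hCube (EuclideanSpace.proj i)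
  have h1 := integral_shift_mul (hX i) (hX j) (hX0 i) (hX0 j)
    ((x - latt (cell x)) i) ((x - latt (cell x)) j)
  have h2 := integral_shift_mul (memLp_hCube i) (memLp_hCube j) (hY0 i) (hY0 j)
    ((x - latt (cell x)) i) ((x - latt (cell x)) j)
  rw [integral_sub_mul_sub hμ hL2] at h1
  have e1 : ∫ θ, disp θ x i * disp θ x j ∂μ = _ := h1
  have e2 : ∫ w in hCube 2, disp₀ w x i * disp₀ w x j = _ := h2
  rw [momDiff, e1, e2, momConst]
  ring

lemma integrable_disp_mul (hμ : Stationary μ)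
    (hL2 : Integrable (fun θ : Field 2 => ‖θ 0‖ ^ 2) μ) (i j : Fin 2) (x : Eu 2) :
    Integrable (fun θ => disp θ x i * disp θ x j) μ := by
  have hX : ∀ i, MemLp (fun θ : Field 2 => disp θ x i) 2 μ := fun i =>
    ((memLp_coord hμ hL2 (cell x) i).sub (memLp_coord hμ hL2 0 i)).sub (memLp_const _)
  exact (hX i).integrable_mul (hX j)

lemma integrable_disp₀_mul (i j : Fin 2) (x : Eu 2) :
    Integrable (fun w => disp₀ w x i * disp₀ w x j) (volume.restrict (hCube 2)) := by
  have hX : ∀ i, MemLp (fun w => disp₀ w x i) 2 (volume.restrict (hCube 2)) := fun i =>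
    (memLp_hCube i).sub (memLp_const _)
  exact (hX i).integrable_mul (hX j)

/-- The quadratic term of the expansion of `pairDens - pairDens₀` at `R • z`. -/
noncomputable def quadTerm (μ : Measure (Field 2)) (R : ℝ) (z : Eu 2) : ℝ :=
  1 / 4 * ∑ i, ∑ j, hessSym i j z * momDiff μ i j (R • z)

lemma integrable_quad_disp (hμ : Stationary μ)
    (hL2 : Integrable (fun θ : Field 2 => ‖θ 0‖ ^ 2) μ) (z x : Eu 2) :
    Integrable (fun θ => 1 / 2 * inner ℝ (hess z (disp θ x)) (disp θ x)) μ := by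
  simp_rw [inner_hess_sym]
  exact (integrable_finsetSum _ fun i _ => integrable_finsetSum _ fun j _ =>
    (integrable_disp_mul hμ hL2 i j x).const_mul _).const_mul _

lemma integrable_quad_disp₀ (z x : Eu 2) :
    Integrable (fun w => 1 / 2 * inner ℝ (hess z (disp₀ w x)) (disp₀ w x))
      (volume.restrict (hCube 2)) := by
  simp_rw [inner_hess_sym]
  exact (integrable_finsetSum _ fun i _ => integrable_finsetSum _ fun j _ =>
    (integrable_disp₀_mul i j x).const_mul _).const_mul _

lemma quadTerm_eq (hμ : Stationary μ) (hL2 : Integrable (fun θ : Field 2 => ‖θ 0‖ ^ 2) μ)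
    (R : ℝ) (z : Eu 2) :
    quadTerm μ R z =
      ∫ θ, 1 / 2 * inner ℝ (hess z (disp θ (R • z))) (disp θ (R • z)) ∂μ
      - ∫ w in hCube 2, 1 / 2 * inner ℝ (hess z (disp₀ w (R • z))) (disp₀ w (R • z)) := by
  simp_rw [inner_hess_sym]
  rw [integral_const_mul, integral_const_mul,
    integral_finsetSum _ fun i _ => integrable_finsetSum _ fun j _ =>
      (integrable_disp_mul hμ hL2 i j _).const_mul _,
    integral_finsetSum _ fun i _ => integrable_finsetSum _ fun j _ =>
      (integrable_disp₀_mul i j _).const_mul _, ← mul_sub, ← Finset.sum_sub_distrib, quadTerm]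
  congr 1
  refine Finset.sum_congr rfl fun i _ => ?_
  rw [integral_finsetSum _ fun j _ => (integrable_disp_mul hμ hL2 i j _).const_mul _,
    integral_finsetSum _ fun j _ => (integrable_disp₀_mul i j _).const_mul _,
    ← Finset.sum_sub_distrib]
  refine Finset.sum_congr rfl fun j _ => ?_
  rw [integral_const_mul, integral_const_mul, ← mul_sub, momDiff]

lemma integrable_hess_corr (hμ : Stationary μ)
    (hL2 : Integrable (fun θ : Field 2 => ‖θ 0‖ ^ 2) μ) (i j k l : Fin 2) (R : ℝ) :
    IntegrableOn (fun z => hessSym i j z * corr μ k l (cell (R • z))) (ball 0 4) := by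
  refine (integrableOn_hessSym i j).mul_bdd (c := 2 * ∫ θ : Field 2, ‖θ 0‖ ^ 2 ∂μ) ?_
    (ae_of_all _ fun z => norm_corr_le hμ hL2 k l _)
  have h : Measurable fun z : Eu 2 => corr μ k l (cell (R • z)) :=
    (measurable_of_countable (corr μ k l)).comp
      (measurable_cell.comp (measurable_const_smul (α := Eu 2) R))
  exact h.aestronglyMeasurable

lemma tendsto_hess_corr (hμ : Stationary μ)
    (hL2 : Integrable (fun θ : Field 2 => ‖θ 0‖ ^ 2) μ) (i j k l : Fin 2) :
    Tendsto (fun R : ℝ => ∫ z in ball 0 4, hessSym i j z * corr μ k l (cell (R • z)))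
      atTop (nhds 0) := by
  have h := ergodic_field (f := (ball 0 4).indicator (hessSym i j))
    ((integrable_indicator_iff measurableSet_ball).2 (integrableOn_hessSym i j))
    (by rw [integral_indicator measurableSet_ball, setIntegral_hessSym])
    hμ (fun i => memLp_coord_zero hL2 i) k l
  refine h.congr fun R => ?_
  rw [← integral_indicator measurableSet_ball]
  congr 1
  ext z
  by_cases hz : z ∈ ball (0 : Eu 2) 4 <;> simp [hz, corr]

lemma integrable_hess_momDiff (hμ : Stationary μ)
    (hL2 : Integrable (fun θ : Field 2 => ‖θ 0‖ ^ 2) μ) (i j : Fin 2) (R : ℝ) :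
    IntegrableOn (fun z => hessSym i j z * momDiff μ i j (R • z)) (ball 0 4) := by
  have := (((integrableOn_hessSym i j).mul_const (momConst μ i j)).sub
    (integrable_hess_corr hμ hL2 i j i j R)).sub (integrable_hess_corr hμ hL2 i j j i R)
  refine this.congr (ae_of_all _ fun z => ?_)
  simp only [Pi.sub_apply, momDiff_eq hμ hL2]
  ring

lemma integrable_quadTerm (hμ : Stationary μ)
    (hL2 : Integrable (fun θ : Field 2 => ‖θ 0‖ ^ 2) μ) (R : ℝ) :
    IntegrableOn (quadTerm μ R) (ball 0 4) :=
  (integrable_finsetSum _ fun i _ => integrable_finsetSum _ fun j _ =>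
    integrable_hess_momDiff hμ hL2 i j R).const_mul _

lemma tendsto_quadTerm (hμ : Stationary μ)
    (hL2 : Integrable (fun θ : Field 2 => ‖θ 0‖ ^ 2) μ) :
    Tendsto (fun R : ℝ => ∫ z in ball 0 4, quadTerm μ R z) atTop (nhds 0) := by
  have h1 : ∀ i j, Tendsto (fun R : ℝ => ∫ z in ball 0 4, hessSym i j z * momDiff μ i j (R • z))
      atTop (nhds 0) := by
    intro i j
    have := ((tendsto_hess_corr hμ hL2 i j i j).add (tendsto_hess_corr hμ hL2 i j j i)).neg
    rw [add_zero, neg_zero] at this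
    refine this.congr fun R => ?_
    have e : ∀ z, hessSym i j z * momDiff μ i j (R • z) = hessSym i j z * momConst μ i j -
        (hessSym i j z * corr μ i j (cell (R • z)) + hessSym i j z * corr μ j i (cell (R • z))) :=
      fun z => by rw [momDiff_eq hμ hL2]; ring
    have a1 := integrable_hess_corr hμ hL2 i j i j R
    have a2 := integrable_hess_corr hμ hL2 i j j i R
    have a3 : IntegrableOn (fun z => hessSym i j z * corr μ i j (cell (R • z)) +
        hessSym i j z * corr μ j i (cell (R • z))) (ball 0 4) := a1.add a2
    simp_rw [e]
    rw [integral_sub ((integrableOn_hessSym i j).mul_const _) a3,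
      integral_mul_const, setIntegral_hessSym, integral_add a1 a2]
    ring
  have h2 : ∀ R : ℝ, ∫ z in ball 0 4, quadTerm μ R z =
      1 / 4 * ∑ i, ∑ j, ∫ z in ball 0 4, hessSym i j z * momDiff μ i j (R • z) := by
    intro R
    unfold quadTerm
    rw [integral_const_mul, integral_finsetSum _ fun i _ => integrable_finsetSum _ fun j _ =>
      integrable_hess_momDiff hμ hL2 i j R]
    congr 1
    refine Finset.sum_congr rfl fun i _ => ?_
    rw [integral_finsetSum _ fun j _ => integrable_hess_momDiff hμ hL2 i j R]
  simp_rw [h2]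
  have := (tendsto_finsetSum Finset.univ fun i _ => tendsto_finsetSum Finset.univ
    fun j _ => h1 i j).const_mul (1 / 4 : ℝ)
  simpa using this

end PertLattice

/-! ### Asymptotics in dimension two -/

namespace PertLattice

open scoped Pointwise

/-- The square of the positive part of `y`, cut off below the level `s`; it is monotone in `y`. -/
noncomputable def sqCut (s y : ℝ) : ℝ≥0∞ := if s ≤ y then ENNReal.ofReal y ^ 2 else 0

lemma sqCut_mono (s : ℝ) : Monotone (sqCut s) := by
  intro a b h
  unfold sqCut
  split_ifs with h1 h2
  · gcongr
  · exact absurd (h1.trans h) h2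
  · exact zero_le
  · exact le_rfl

@[fun_prop] lemma measurable_sqCut (s : ℝ) : Measurable (sqCut s) := (sqCut_mono s).measurable

lemma sqCut_of_le {s y : ℝ} (h : s ≤ y) : sqCut s y = ENNReal.ofReal y ^ 2 := if_pos h

lemma sqCut_of_lt {s y : ℝ} (h : y < s) : sqCut s y = 0 := if_neg h.not_ge

lemma sqCut_le (s y : ℝ) : sqCut s y ≤ ENNReal.ofReal y ^ 2 := by
  unfold sqCut; split_ifs <;> simp

/-- The second moment of `size (θ 0)` carried by the event `s ≤ size (θ 0)`. -/
noncomputable def sqTail (μ : Measure (Field 2)) (s : ℝ) : ℝ≥0∞ := ∫⁻ θ, sqCut s (size (θ 0)) ∂μ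

variable {μ : Measure (Field 2)}

lemma lintegral_size_lt_top [IsProbabilityMeasure μ]
    (hL2 : Integrable (fun θ : Field 2 => ‖θ 0‖ ^ 2) μ) :
    ∫⁻ θ, ENNReal.ofReal (size (θ 0)) ^ 2 ∂μ < ∞ := by
  have := (integrable_sq_size hL2).lintegral_lt_top
  refine lt_of_eq_of_lt (lintegral_congr fun θ => ?_) this
  rw [ENNReal.ofReal_pow (by linarith [size_ge (θ 0)])]

lemma sqTail_lt_top [IsProbabilityMeasure μ]
    (hL2 : Integrable (fun θ : Field 2 => ‖θ 0‖ ^ 2) μ) (s : ℝ) : sqTail μ s < ∞ :=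
  (lintegral_mono fun _ => sqCut_le _ _).trans_lt (lintegral_size_lt_top hL2)

lemma tendsto_sqTail [IsProbabilityMeasure μ]
    (hL2 : Integrable (fun θ : Field 2 => ‖θ 0‖ ^ 2) μ) :
    Tendsto (sqTail μ) atTop (nhds 0) := by
  have h := tendsto_lintegral_filter_of_dominated_convergence (μ := μ) (l := atTop)
    (F := fun (s : ℝ) (θ : Field 2) => sqCut s (size (θ 0))) (f := fun _ => 0)
    (fun θ => ENNReal.ofReal (size (θ 0)) ^ 2)
    (Eventually.of_forall fun s => by fun_prop)
    (Eventually.of_forall fun s => ae_of_all _ fun θ => sqCut_le _ _)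
    (lintegral_size_lt_top hL2).ne
    (ae_of_all _ fun θ => tendsto_const_nhds.congr' (by
      filter_upwards [eventually_gt_atTop (size (θ 0))] with s hs
      exact (sqCut_of_lt hs).symm))
  rw [lintegral_zero] at h
  exact h

/-- Truncated second moments of both displacements. -/
noncomputable def sqMom (μ : Measure (Field 2)) (s : ℝ) : ℝ≥0∞ := 2 * sqTail μ s + sqCut s 6

lemma sqMom_ne_top [IsProbabilityMeasure μ]
    (hL2 : Integrable (fun θ : Field 2 => ‖θ 0‖ ^ 2) μ) (s : ℝ) : sqMom μ s ≠ ∞ := by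
  have h1 := sqTail_lt_top hL2 s
  have h2 : sqCut s 6 < ∞ := (sqCut_le _ _).trans_lt (by finiteness)
  unfold sqMom; finiteness

lemma tendsto_sqMom [IsProbabilityMeasure μ]
    (hL2 : Integrable (fun θ : Field 2 => ‖θ 0‖ ^ 2) μ) :
    Tendsto (sqMom μ) atTop (nhds 0) := by
  have h1 : Tendsto (fun s => sqCut s 6) atTop (nhds 0) := tendsto_const_nhds.congr' (by
    filter_upwards [eventually_gt_atTop 6] with s hs
    exact (sqCut_of_lt hs).symm)
  have h2 := ENNReal.Tendsto.const_mul (a := 2) (tendsto_sqTail hL2) (Or.inr (by simp))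
  have h3 := h2.add h1
  rw [mul_zero, add_zero] at h3
  exact h3

/-- The rescaled difference of the pair densities. -/
noncomputable def densDiff (μ : Measure (Field 2)) (R : ℝ) (z : Eu 2) : ℝ :=
  pairDens μ R (R • z) - pairDens₀ R (R • z)

/-- The error of the second-order Taylor expansion of the covariogram of the ball of radius `R` at
`R • z`. -/
noncomputable def taylorErr (R : ℝ) (z v : Eu 2) : ℝ :=
  R ^ 2 * rem₁ z (R⁻¹ • v) - 1 / 2 * inner ℝ (hess z v) v

lemma rem_scale {R : ℝ} (hR : 0 < R) (z v : Eu 2) :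
    rem R (R • innerSL ℝ (grad z)) (R • z) v = R ^ 2 * rem₁ z (R⁻¹ • v) := by
  have h : R • z + v = R • (z + R⁻¹ • v) := by
    rw [smul_add, smul_smul, mul_inv_cancel₀ hR.ne', one_smul]
  rw [rem, rem₁, h, cov_scale hR, cov_scale hR]
  simp only [smul_apply, innerSL_apply_apply, inner_smul_right, smul_eq_mul]
  field_simp

lemma densDiff_sub [IsProbabilityMeasure μ] (hμ : Stationary μ)
    (hL2 : Integrable (fun θ : Field 2 => ‖θ 0‖ ^ 2) μ) {R : ℝ} (hR : 0 < R) (z : Eu 2) :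
    densDiff μ R z - quadTerm μ R z =
      ∫ θ, taylorErr R z (disp θ (R • z)) ∂μ -
        ∫ w in hCube 2, taylorErr R z (disp₀ w (R • z)) := by
  have i1 := integrable_rem_disp hμ hL2 R (R • innerSL ℝ (grad z)) (R • z)
  have i2 := integrable_rem_disp₀ R (R • innerSL ℝ (grad z)) (R • z)
  rw [densDiff, pairDens_sub hμ hL2 R (R • innerSL ℝ (grad z)), quadTerm_eq hμ hL2]
  simp only [rem_scale hR] at i1 i2 ⊢
  unfold taylorErr
  rw [integral_sub i1 (integrable_quad_disp hμ hL2 z _),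
    integral_sub i2 (integrable_quad_disp₀ z _)]
  ring

/-- A bound for the Taylor error by truncated squares integrates to one by truncated moments. -/
lemma densDiff_sub_le [IsProbabilityMeasure μ] (hμ : Stationary μ)
    (hL2 : Integrable (fun θ : Field 2 => ‖θ 0‖ ^ 2) μ) {R : ℝ} (hR : 0 < R) (z : Eu 2)
    {a b : ℝ≥0∞} {s t : ℝ} (h : ∀ v, ENNReal.ofReal |taylorErr R z v| ≤
      a * sqCut s ‖v‖ + b * sqCut t ‖v‖) :
    ENNReal.ofReal |densDiff μ R z - quadTerm μ R z| ≤ a * sqMom μ s + b * sqMom μ t := by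
  rw [densDiff_sub hμ hL2 hR]
  refine (ENNReal.ofReal_le_ofReal (abs_sub _ _)).trans ?_
  rw [ENNReal.ofReal_add (abs_nonneg _) (abs_nonneg _)]
  have h1 : ENNReal.ofReal |∫ θ, taylorErr R z (disp θ (R • z)) ∂μ| ≤
      a * (2 * sqTail μ s) + b * (2 * sqTail μ t) := by
    refine (ofReal_abs_integral_le _).trans ((lintegral_mono fun θ => h _).trans ?_)
    rw [lintegral_add_left (by fun_prop), lintegral_const_mul _ (by fun_prop),
      lintegral_const_mul _ (by fun_prop)]
    gcongr
    all_goals exact lintegral_disp_le le_rfl hμ (by fun_prop) (sqCut_mono _) _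
  have h2 : ENNReal.ofReal |∫ w in hCube 2, taylorErr R z (disp₀ w (R • z))| ≤
      a * sqCut s 6 + b * sqCut t 6 := by
    refine (ofReal_abs_integral_le _).trans ((lintegral_mono fun θ => h _).trans ?_)
    rw [lintegral_add_left (by fun_prop), lintegral_const_mul _ (by fun_prop),
      lintegral_const_mul _ (by fun_prop)]
    gcongr
    all_goals exact lintegral_disp₀_le le_rfl (sqCut_mono _) _
  refine (add_le_add h1 h2).trans (le_of_eq ?_)
  unfold sqMom
  ring

lemma abs_taylorErr_le {z : Eu 2} (hz : z ≠ 0) (hz2 : ‖z‖ ≠ 2) {R : ℝ} (hR : 0 < R) (v : Eu 2) :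
    |taylorErr R z v| ≤ 6 * weight z * ‖v‖ ^ 2 := by
  have h1 := scaled_le hz hz2 hR v
  have h2 := abs_quad_le hz hz2 v
  unfold taylorErr
  refine (abs_sub _ _).trans ?_
  linarith

lemma ofReal_mul_sq {c y : ℝ} (hc : 0 ≤ c) (hy : 0 ≤ y) :
    ENNReal.ofReal (c * y ^ 2) = ENNReal.ofReal c * ENNReal.ofReal y ^ 2 := by
  rw [ENNReal.ofReal_mul hc, ENNReal.ofReal_pow hy]

lemma abs_densDiff_sub_le [IsProbabilityMeasure μ] (hμ : Stationary μ)
    (hL2 : Integrable (fun θ : Field 2 => ‖θ 0‖ ^ 2) μ) {R : ℝ} (hR : 0 < R) {z : Eu 2}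
    (hz : z ≠ 0) (hz2 : ‖z‖ ≠ 2) :
    |densDiff μ R z - quadTerm μ R z| ≤ 6 * weight z * (sqMom μ 0).toReal := by
  have hw := weight_nonneg z
  have h := densDiff_sub_le hμ hL2 hR z (a := ENNReal.ofReal (6 * weight z)) (b := 0) (s := 0)
    (t := 0) (fun v => by
      rw [zero_mul, add_zero, sqCut_of_le (norm_nonneg v), ← ofReal_mul_sq (by positivity)
        (norm_nonneg v)]
      exact ENNReal.ofReal_le_ofReal (abs_taylorErr_le hz hz2 hR v))
  rw [zero_mul, add_zero, ← ENNReal.ofReal_toReal (sqMom_ne_top hL2 0),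
    ← ENNReal.ofReal_mul (by positivity)] at h
  exact (ENNReal.ofReal_le_ofReal_iff (by positivity)).1 h

lemma tendsto_densDiff_sub [IsProbabilityMeasure μ] (hμ : Stationary μ)
    (hL2 : Integrable (fun θ : Field 2 => ‖θ 0‖ ^ 2) μ) {z : Eu 2}
    (hz : z ≠ 0) (hz2 : ‖z‖ ≠ 2) :
    Tendsto (fun R => densDiff μ R z - quadTerm μ R z) atTop (nhds 0) := by
  have hw := weight_nonneg z
  rw [Metric.tendsto_nhds]
  intro η hη
  -- the part of the error coming from small displacements is at most `η / 2`
  set K := (sqMom μ 0).toReal with hK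
  have hK0 : 0 ≤ K := ENNReal.toReal_nonneg
  set ε := η / (2 * (K + 1)) with hε
  have hε0 : 0 < ε := by positivity
  have hεK : ε * K < η := by
    have : ε * (2 * (K + 1)) = η := by rw [hε]; field_simp
    nlinarith
  obtain ⟨δ, hδ, h⟩ := scaled_sub_quad hz hz2 hε0
  have hlim : Tendsto (fun R : ℝ => ENNReal.ofReal ε * sqMom μ 0 +
      ENNReal.ofReal (6 * weight z) * sqMom μ (δ * R)) atTop
      (nhds (ENNReal.ofReal ε * sqMom μ 0 + ENNReal.ofReal (6 * weight z) * 0)) := by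
    refine tendsto_const_nhds.add (ENNReal.Tendsto.const_mul ?_ (Or.inr ENNReal.ofReal_ne_top))
    exact (tendsto_sqMom hL2).comp (tendsto_id.const_mul_atTop hδ)
  have hlt : ENNReal.ofReal ε * sqMom μ 0 + ENNReal.ofReal (6 * weight z) * 0 <
      ENNReal.ofReal η := by
    rw [mul_zero, add_zero, ← ENNReal.ofReal_toReal (sqMom_ne_top hL2 0), ← hK,
      ← ENNReal.ofReal_mul hε0.le]
    exact (ENNReal.ofReal_lt_ofReal_iff hη).2 hεK
  filter_upwards [hlim.eventually_lt_const hlt, eventually_gt_atTop 0] with R hR hR0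
  rw [Real.dist_eq, sub_zero]
  refine (ENNReal.ofReal_lt_ofReal_iff hη).1 (lt_of_le_of_lt ?_ hR)
  refine densDiff_sub_le hμ hL2 hR0 z fun v => ?_
  rcases lt_or_ge ‖v‖ (δ * R) with hv | hv
  · refine le_trans ?_ le_self_add
    rw [sqCut_of_le (norm_nonneg v), ← ofReal_mul_sq hε0.le (norm_nonneg v)]
    exact ENNReal.ofReal_le_ofReal (h R hR0 v hv)
  · refine le_trans ?_ le_add_self
    rw [sqCut_of_le hv, ← ofReal_mul_sq (by positivity) (norm_nonneg v)]
    exact ENNReal.ofReal_le_ofReal (abs_taylorErr_le hz hz2 hR0 v)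

lemma measurable_densDiff (μ : Measure (Field 2)) (R : ℝ) : Measurable (densDiff μ R) := by
  have h1 := measurable_pairDens μ R
  have h2 := measurable_pairDens₀ (d := 2) R
  unfold densDiff
  fun_prop

lemma integrable_densDiff_sub [IsProbabilityMeasure μ] (hμ : Stationary μ)
    (hL2 : Integrable (fun θ : Field 2 => ‖θ 0‖ ^ 2) μ) {R : ℝ} (hR : 0 < R) :
    IntegrableOn (fun z => densDiff μ R z - quadTerm μ R z) (ball 0 4) := by
  refine ((integrableOn_weight.const_mul 6).mul_const (sqMom μ 0).toReal).mono'
    ((measurable_densDiff μ R).aestronglyMeasurable.sub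
      (integrable_quadTerm hμ hL2 R).aestronglyMeasurable) ?_
  filter_upwards [ae_restrict_of_ae ae_regular] with z hz
  exact abs_densDiff_sub_le hμ hL2 hR hz.1 hz.2

lemma tendsto_densDiff [IsProbabilityMeasure μ] (hμ : Stationary μ)
    (hL2 : Integrable (fun θ : Field 2 => ‖θ 0‖ ^ 2) μ) :
    Tendsto (fun R => ∫ z in ball 0 4, densDiff μ R z) atTop (nhds 0) := by
  have h1 : Tendsto (fun R => ∫ z in ball 0 4, (densDiff μ R z - quadTerm μ R z)) atTop
      (nhds (∫ z in ball (0 : Eu 2) 4, (0 : ℝ))) := by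
    refine tendsto_integral_filter_of_dominated_convergence
      (fun z => 6 * weight z * (sqMom μ 0).toReal) ?_ ?_
      ((integrableOn_weight.const_mul 6).mul_const _) ?_
    · filter_upwards [eventually_gt_atTop 0] with R hR
      exact (integrable_densDiff_sub hμ hL2 hR).aestronglyMeasurable
    · filter_upwards [eventually_gt_atTop 0] with R hR
      filter_upwards [ae_restrict_of_ae ae_regular] with z hz
      exact abs_densDiff_sub_le hμ hL2 hR hz.1 hz.2
    · filter_upwards [ae_restrict_of_ae ae_regular] with z hz
      exact tendsto_densDiff_sub hμ hL2 hz.1 hz.2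
  have h2 := h1.add (tendsto_quadTerm hμ hL2)
  simp only [integral_zero, add_zero] at h2
  refine h2.congr' ?_
  filter_upwards [eventually_gt_atTop 0] with R hR
  rw [← integral_add (integrable_densDiff_sub hμ hL2 hR) (integrable_quadTerm hμ hL2 R)]
  simp

/-- The contribution of pairs at distance less than `4 * R`. -/
lemma near_eq (μ : Measure (Field 2)) {R : ℝ} (hR : 0 < R) :
    ∫ x in ball 0 (4 * R), (pairDens μ R x - pairDens₀ R x) =
      R ^ 2 * ∫ z in ball 0 4, densDiff μ R z := by
  have h := Measure.setIntegral_comp_smul_of_pos (volume : Measure (Eu 2))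
    (fun x => pairDens μ R x - pairDens₀ R x) (ball 0 4) hR
  have hb : R • ball (0 : Eu 2) 4 = ball 0 (4 * R) := by
    rw [_root_.smul_ball hR.ne', smul_zero, Real.norm_of_nonneg hR.le, mul_comm]
  unfold densDiff
  rw [h, hb, finrank_euclideanSpace_fin, smul_eq_mul]
  field_simp

lemma cov_eq_zero {R : ℝ} (hR : 0 < R) {y : Eu 2} (hy : 2 * R ≤ ‖y‖) : cov R y = 0 := by
  have h : y = R • (R⁻¹ • y) := by rw [smul_smul, mul_inv_cancel₀ hR.ne', one_smul]
  rw [h, cov_scale hR, cov_one_eq_zero, mul_zero]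
  rw [norm_smul, Real.norm_of_nonneg (by positivity), le_inv_mul_iff₀ hR]
  linarith

/-- At distance `‖x‖ ≥ 4 * R`, a pair contributes only if a displacement exceeds `‖x‖ / 2`. -/
lemma pairDens_far (hμ : Stationary μ) {R : ℝ} (hR : 0 < R)
    {x : Eu 2} (hx : 4 * R ≤ ‖x‖) :
    ENNReal.ofReal (pairDens μ R x) ≤
      2 * ∫⁻ θ, (if ‖x‖ / 2 ≤ size (θ 0) then volume (ball (0 : Eu 2) R) else 0) ∂μ := by
  have hm : Measurable fun y : ℝ => if ‖x‖ / 2 ≤ y then volume (ball (0 : Eu 2) R) else 0 :=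
    Measurable.ite measurableSet_Ici measurable_const measurable_const
  refine le_trans ?_ (lintegral_disp_le le_rfl hμ hm (fun a b hab => ?_) x)
  · refine (ENNReal.ofReal_le_ofReal (le_abs_self _)).trans
      ((ofReal_abs_integral_le _).trans (lintegral_mono fun θ => ?_))
    simp only
    rw [← add_disp, abs_of_nonneg (cov_nonneg _ _)]
    split_ifs with h
    · refine (ENNReal.ofReal_le_ofReal (cov_le R _)).trans ?_
      rw [Measure.real, ENNReal.ofReal_toReal measure_ball_lt_top.ne]
    · rw [cov_eq_zero hR, ENNReal.ofReal_zero]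
      have := norm_sub_le (x + disp θ x) (disp θ x)
      rw [add_sub_cancel_right] at this
      linarith
  · simp only
    split_ifs with h1 h2
    · exact le_rfl
    · exact absurd (h1.trans hab) h2
    · exact zero_le
    · exact le_rfl

/-- The contribution of pairs at distance at least `4 * R`. -/
lemma far_le [IsProbabilityMeasure μ] (hμ : Stationary μ) {R : ℝ} (hR : 0 < R) :
    ∫⁻ x in (ball 0 (4 * R))ᶜ, ENNReal.ofReal (pairDens μ R x) ≤
      ENNReal.ofReal (R ^ 2) * (ENNReal.ofReal (8 * Real.pi ^ 2) * sqTail μ (2 * R)) := by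
  have hm : Measurable (Function.uncurry fun (x : Eu 2) (θ : Field 2) =>
      if ‖x‖ / 2 ≤ size (θ 0) then volume (ball (0 : Eu 2) R) else 0) :=
    Measurable.ite (measurableSet_le (by fun_prop) (by fun_prop)) measurable_const measurable_const
  have hB : MeasurableSet (ball (0 : Eu 2) (4 * R))ᶜ := measurableSet_ball.compl
  calc ∫⁻ x in (ball 0 (4 * R))ᶜ, ENNReal.ofReal (pairDens μ R x)
      ≤ ∫⁻ x in (ball (0 : Eu 2) (4 * R))ᶜ, 2 * ∫⁻ θ, (if ‖x‖ / 2 ≤ size (θ 0) then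
          volume (ball (0 : Eu 2) R) else 0) ∂μ := by
        refine setLIntegral_mono' hB fun x hx => pairDens_far hμ hR ?_
        simpa using hx
    _ = 2 * ∫⁻ θ, (∫⁻ x in (ball (0 : Eu 2) (4 * R))ᶜ, (if ‖x‖ / 2 ≤ size (θ 0) then
          volume (ball (0 : Eu 2) R) else 0)) ∂μ := by
        rw [lintegral_const_mul _ hm.lintegral_prod_right, lintegral_lintegral_swap hm.aemeasurable]
    _ ≤ 2 * ∫⁻ θ, (volume (ball (0 : Eu 2) R) * ENNReal.ofReal (4 * Real.pi)) *
          sqCut (2 * R) (size (θ 0)) ∂μ := by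
        gcongr with θ
        have hs := size_ge (θ 0)
        rcases lt_or_ge (size (θ 0)) (2 * R) with h | h
        · rw [sqCut_of_lt h, mul_zero, nonpos_iff_eq_zero]
          refine setLIntegral_eq_zero hB fun x hx => if_neg ?_
          have : 4 * R ≤ ‖x‖ := by simpa using hx
          linarith
        · rw [sqCut_of_le h]
          calc ∫⁻ x in (ball (0 : Eu 2) (4 * R))ᶜ, (if ‖x‖ / 2 ≤ size (θ 0) then
                volume (ball (0 : Eu 2) R) else 0)
              ≤ ∫⁻ x, (closedBall (0 : Eu 2) (2 * size (θ 0))).indicator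
                  (fun _ => volume (ball (0 : Eu 2) R)) x := by
                refine (setLIntegral_le_lintegral _ _).trans (lintegral_mono fun x => ?_)
                split_ifs with h1
                · rw [Set.indicator_of_mem (mem_closedBall_zero_iff.2 (by linarith))]
                · exact zero_le
            _ = _ := by
                rw [lintegral_indicator_const measurableSet_closedBall,
                  EuclideanSpace.volume_closedBall_fin_two, mul_assoc]
                congr 1
                rw [ENNReal.ofReal_mul (by norm_num), ENNReal.ofReal_mul (by norm_num)]
                have : ENNReal.ofReal 4 = ENNReal.ofReal 2 ^ 2 := by
                  rw [← ENNReal.ofReal_pow (by norm_num)]; norm_num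
                have hp : ENNReal.ofReal Real.pi = (NNReal.pi : ℝ≥0∞) := by
                  rw [← NNReal.coe_real_pi, ENNReal.ofReal_coe_nnreal]
                rw [this, hp]
                ring
    _ = _ := by
        rw [lintegral_const_mul _ (by fun_prop), EuclideanSpace.volume_ball_fin_two, sqTail]
        have hp : ENNReal.ofReal Real.pi = (NNReal.pi : ℝ≥0∞) := by
          rw [← NNReal.coe_real_pi, ENNReal.ofReal_coe_nnreal]
        rw [ENNReal.ofReal_mul (by norm_num), ENNReal.ofReal_mul (by norm_num),
          ENNReal.ofReal_pow hR.le, ENNReal.ofReal_pow Real.pi_nonneg, hp,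
          ENNReal.ofReal_ofNat, ENNReal.ofReal_ofNat]
        ring

/-- The function bounding the number variance per unit of `R ^ 2`. -/
noncomputable def rate (μ : Measure (Field 2)) (R : ℝ) : ℝ :=
  |∫ z in ball 0 4, densDiff μ R z| + 8 * Real.pi ^ 2 * (sqTail μ (2 * R)).toReal

lemma rate_nonneg (μ : Measure (Field 2)) (R : ℝ) : 0 ≤ rate μ R := by unfold rate; positivity

lemma tendsto_rate [IsProbabilityMeasure μ] (hμ : Stationary μ)
    (hL2 : Integrable (fun θ : Field 2 => ‖θ 0‖ ^ 2) μ) :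
    Tendsto (rate μ) atTop (nhds 0) := by
  have h1 := (tendsto_densDiff hμ hL2).abs
  have h2 := ((ENNReal.tendsto_toReal ENNReal.zero_ne_top).comp ((tendsto_sqTail hL2).comp
    (tendsto_id.const_mul_atTop (zero_lt_two' ℝ)))).const_mul (8 * Real.pi ^ 2)
  have h3 := h1.add h2
  simp only [abs_zero, ENNReal.toReal_zero, mul_zero, add_zero] at h3
  exact h3

lemma bound_two [IsProbabilityMeasure μ] (hμ : Stationary μ)
    (hL2 : Integrable (fun θ : Field 2 => ‖θ 0‖ ^ 2) μ) {R : ℝ} (hR : 0 < R)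
    (h1 : Integrable (pairDens μ R)) (h2 : Integrable (pairDens₀ (d := 2) R)) :
    ∫ x, (pairDens μ R x - pairDens₀ R x) ≤ R ^ 2 * rate μ R := by
  have h12 : Integrable (fun x => pairDens μ R x - pairDens₀ R x) := h1.sub h2
  rw [← integral_add_compl (measurableSet_ball (x := (0 : Eu 2)) (ε := 4 * R)) h12, near_eq μ hR,
    rate, mul_add]
  refine add_le_add (mul_le_mul_of_nonneg_left (le_abs_self _) (sq_nonneg R)) ?_
  calc ∫ x in (ball 0 (4 * R))ᶜ, (pairDens μ R x - pairDens₀ R x)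
      ≤ ∫ x in (ball 0 (4 * R))ᶜ, pairDens μ R x :=
        integral_mono h12.integrableOn h1.integrableOn fun x =>
          sub_le_self _ (pairDens₀_nonneg R x)
    _ = (∫⁻ x in (ball 0 (4 * R))ᶜ, ENNReal.ofReal (pairDens μ R x)).toReal :=
        integral_eq_lintegral_of_nonneg_ae (ae_of_all _ fun x => pairDens_nonneg μ R x)
          (measurable_pairDens μ R).aestronglyMeasurable
    _ ≤ (ENNReal.ofReal (R ^ 2) *
          (ENNReal.ofReal (8 * Real.pi ^ 2) * sqTail μ (2 * R))).toReal := by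
        have := sqTail_lt_top hL2 (2 * R)
        exact ENNReal.toReal_mono (by finiteness) (far_le hμ hR)
    _ = _ := by
        rw [ENNReal.toReal_mul, ENNReal.toReal_mul, ENNReal.toReal_ofReal (by positivity),
          ENNReal.toReal_ofReal (by positivity)]

end PertLattice

/-- Theorem 4.1 (Dereudre–Flimmel–Huesmann–Leblé), dimensions 1 and 2: a lattice
perturbed by a stationary square-integrable field of displacements has bounded number
variance if `d = 1`, and is hyperuniform (`Var = o(R²)`) if `d = 2`. -/
theorem stmt9 {d : ℕ} (hd : d = 1 ∨ d = 2)
    {Ω : Type*} [MeasurableSpace Ω] (P : Measure Ω) [IsProbabilityMeasure P]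
    (U : (Fin d → ℤ) → Ω → EuclideanSpace ℝ (Fin d)) (hUmeas : ∀ k, Measurable (U k))
    -- stationarity of the perturbing field
    (hstat : ∀ m : Fin d → ℤ,
      Measure.map (fun ω => fun k => U (k + m) ω) P =
        Measure.map (fun ω => fun k => U k ω) P)
    -- square integrability of the displacements
    (hL2 : Integrable (fun ω => ‖U 0 ω‖ ^ 2) P)
    -- `V` uniform on `[0,1]^d`, independent of the field
    (V : Ω → EuclideanSpace ℝ (Fin d)) (hV : Measurable V)
    (hVlaw : Measure.map V P = volume.restrict (unitCube d))
    (hindep : IndepFun V (fun ω => fun k => U k ω) P)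
    -- the number of points of the perturbed lattice in the ball `B_R`
    (N : ℝ → Ω → ℝ)
    (hN : ∀ R ω, N R ω = ∑' k : Fin d → ℤ,
      (Metric.ball (0 : EuclideanSpace ℝ (Fin d)) R).indicator (fun _ => (1 : ℝ))
        (latt k + V ω + U k ω)) :
    (d = 1 → ∃ C : ℝ, ∀ R : ℝ, 0 < R → variance (N R) P ≤ C) ∧
    (d = 2 → (fun R : ℝ => variance (N R) P) =o[atTop] fun R : ℝ => R ^ 2) := by
  set μ := Measure.map (fun ω => fun k => U k ω) P with hμdef
  have hF : Measurable fun ω => fun k => U k ω := measurable_pi_lambda _ hUmeas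
  have hprob : IsProbabilityMeasure μ := Measure.isProbabilityMeasure_map hF.aemeasurable
  have hs : PertLattice.Stationary μ := by
    intro m
    have hm : Measurable fun (θ : PertLattice.Field d) k => θ (k + m) :=
      measurable_pi_lambda _ fun k => measurable_pi_apply _
    refine ⟨hm, ?_⟩
    rw [hμdef, Measure.map_map hm hF]
    exact hstat m
  have hL2' : Integrable (fun θ : PertLattice.Field d => ‖θ 0‖ ^ 2) μ :=
    (integrable_map_measure (Measurable.aestronglyMeasurable (by fun_prop)) hF.aemeasurable).2 hL2
  rw [PertLattice.restrict_unitCube] at hVlaw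
  have key := fun R => PertLattice.variance_formula P U hUmeas μ hμdef.symm hs V hV hVlaw hindep R
    (N R) (hN R)
  refine ⟨?_, ?_⟩
  · rintro rfl
    obtain ⟨C, hC, h⟩ := PertLattice.bound_one hs hL2'
    refine ⟨C, fun R _ => ?_⟩
    rcases key R with h0 | ⟨-, -, h0⟩
    · rw [h0]; exact hC
    · rw [h0]; exact h R
  · rintro rfl
    rw [isLittleO_iff]
    intro c hc
    filter_upwards [(PertLattice.tendsto_rate hs hL2').eventually_lt_const hc,
      eventually_gt_atTop 0] with R hR hR0
    rw [Real.norm_of_nonneg (variance_nonneg _ _), Real.norm_of_nonneg (sq_nonneg _)]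
    rcases key R with h0 | ⟨h1, h2, h0⟩
    · rw [h0]; positivity
    · rw [h0]
      refine (PertLattice.bound_two hs hL2' hR0 h1 h2).trans ?_
      rw [mul_comm]
      gcongr
end

section
/- Let d ≥ 1, p ≥ 1, n ≥ 1, and C_n = [0,n]^d. Let P ⊂ ℝ^d be a finite set with exactly n^d points. Then for every nonnegative Borel measure M on ℝ^d × ℝ^d whose first marginal is Lebesgue measure restricted to C_n and whose second marginal is the counting measure ∑_{y∈P} δ_y, one has ∫_{ℝ^d×ℝ^d} ‖x−y‖^p dM(x,y) ≥ c_{d,p} · n^d, where c_{d,p} = ∫_{B(0,r_d)} ‖x‖^p dx > 0 and r_d is the radius of the Euclidean ball of unit volume in ℝ^d. -/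
/-!
The bound is linear-programming duality with the potential `φ(z) = (r^p - ‖z‖^p)⁺`.
Pointwise `‖x - y‖^p + φ(x - y) ≥ r^p`; integrating against `M`, of total mass `n^d`, gives
`cost + ∫ φ(x - y) dM ≥ r^p n^d`. As the second marginal is carried by the `n^d` given points,
`φ(x - y) ≤ ∑_{z ∈ Pts} φ(x - z)` almost everywhere, and since the first marginal is at most
Lebesgue measure, `∫ φ(x - y) dM ≤ n^d ∫ φ`. Finally `∫ φ = r^p - c` because `φ` vanishes outside
the ball of radius `r`, whose volume is one (`lintegral_ball_add_potential`). Subtracting yields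
`cost ≥ c n^d`.
-/

open MeasureTheory Metric
open scoped ENNReal NNReal

/-- The cube `[0,n]^d` in `ℝ^d`. -/
def cube (d : ℕ) (n : ℕ) : Set (EuclideanSpace ℝ (Fin d)) :=
  {x | ∀ i, x i ∈ Set.Icc (0 : ℝ) (n : ℝ)}


/-- The dual potential `z ↦ (r^p - ‖z‖^p)⁺`; the positive part is the truncated subtraction
of `ℝ≥0∞`. -/
noncomputable def potential {d : ℕ} (p r : ℝ) (z : EuclideanSpace ℝ (Fin d)) : ℝ≥0∞ :=
  ENNReal.ofReal (r ^ p) - ENNReal.ofReal (‖z‖ ^ p)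

lemma measurable_potential {d : ℕ} (p r : ℝ) :
    Measurable (potential p r : EuclideanSpace ℝ (Fin d) → ℝ≥0∞) := by
  unfold potential
  fun_prop

lemma lintegral_ball_add_potential {d : ℕ} {p r : ℝ} (hp : 1 ≤ p) (hr : 0 < r)
    (hrvol : volume (Metric.ball (0 : EuclideanSpace ℝ (Fin d)) r) = 1) :
    (∫⁻ x in Metric.ball (0 : EuclideanSpace ℝ (Fin d)) r, ENNReal.ofReal (‖x‖ ^ p))
      + ∫⁻ x : EuclideanSpace ℝ (Fin d), potential p r x = ENNReal.ofReal (r ^ p) := by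
  have hp0 : 0 ≤ p := by linarith
  have hφ : ∫⁻ x : EuclideanSpace ℝ (Fin d), potential p r x
      = ∫⁻ x in Metric.ball (0 : EuclideanSpace ℝ (Fin d)) r, potential p r x := by
    refine (setLIntegral_eq_of_support_subset ?_).symm
    intro x hx
    by_contra hxb
    rw [mem_ball_zero_iff, not_lt] at hxb
    exact hx (tsub_eq_zero_of_le
      (ENNReal.ofReal_le_ofReal (Real.rpow_le_rpow hr.le hxb hp0)))
  rw [hφ, ← lintegral_add_right _ (measurable_potential p r)]
  rw [setLIntegral_congr_fun (g := fun _ => ENNReal.ofReal (r ^ p)) measurableSet_ball]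
  · simp [hrvol]
  · intro x hx
    rw [mem_ball_zero_iff] at hx
    exact add_tsub_cancel_of_le
      (ENNReal.ofReal_le_ofReal (Real.rpow_le_rpow (norm_nonneg x) hx.le hp0))

lemma integrableOn_ball_norm_rpow {d : ℕ} {p : ℝ} (hp : 1 ≤ p) (r : ℝ) :
    IntegrableOn (fun x : EuclideanSpace ℝ (Fin d) => ‖x‖ ^ p) (Metric.ball 0 r) := by
  have hc : Continuous (fun x : EuclideanSpace ℝ (Fin d) => ‖x‖ ^ p) :=
    continuous_norm.rpow_const fun _ => Or.inr (by linarith)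
  exact (hc.continuousOn.integrableOn_compact (isCompact_closedBall 0 r)).mono_set
    ball_subset_closedBall

/-- Upper bound for the integral of the potential against a coupling: only the support of the second marginal and an
upper bound on the first marginal matter. -/
lemma lintegral_potential_coupling_le {d : ℕ} (p r : ℝ) (s : Set (EuclideanSpace ℝ (Fin d)))
    (Pts : Finset (EuclideanSpace ℝ (Fin d)))
    (M : Measure (EuclideanSpace ℝ (Fin d) × EuclideanSpace ℝ (Fin d)))
    (h1 : Measure.map Prod.fst M = volume.restrict s)
    (h2 : Measure.map Prod.snd M = ∑ y ∈ Pts, Measure.dirac y) :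
    ∫⁻ q, potential p r (q.1 - q.2) ∂M
      ≤ Pts.card * ∫⁻ x : EuclideanSpace ℝ (Fin d), potential p r x := by
  have hmeas : ∀ y, Measurable fun x : EuclideanSpace ℝ (Fin d) => potential p r (x - y) :=
    fun y => (measurable_potential p r).comp (measurable_id.sub_const y)
  have hsupp : ∀ᵐ q ∂M, q.2 ∈ Pts := by
    have : ∀ᵐ y ∂(Measure.map Prod.snd M), y ∈ Pts := by
      rw [h2, ae_iff, Measure.finsetSum_apply]
      refine Finset.sum_eq_zero fun y hy => ?_
      rw [Measure.dirac_apply]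
      simp [hy]
    exact ae_of_ae_map measurable_snd.aemeasurable this
  calc ∫⁻ q, potential p r (q.1 - q.2) ∂M
      ≤ ∫⁻ q, ∑ y ∈ Pts, potential p r (q.1 - y) ∂M := by
        refine lintegral_mono_ae ?_
        filter_upwards [hsupp] with q hq
        exact Finset.single_le_sum (f := fun y => potential p r (q.1 - y))
          (fun _ _ => zero_le) hq
    _ = ∑ y ∈ Pts, ∫⁻ q, potential p r (q.1 - y) ∂M :=
        lintegral_finsetSum _ fun y _ => (hmeas y).comp measurable_fst
    _ = ∑ y ∈ Pts, ∫⁻ x in s, potential p r (x - y) := by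
        refine Finset.sum_congr rfl fun y _ => ?_
        rw [← h1, lintegral_map (hmeas y) measurable_fst]
    _ ≤ ∑ y ∈ Pts, ∫⁻ x : EuclideanSpace ℝ (Fin d), potential p r x := by
        refine Finset.sum_le_sum fun y _ => ?_
        refine (setLIntegral_le_lintegral _ _).trans_eq ?_
        exact lintegral_sub_right_eq_self (potential p r) y
    _ = Pts.card * ∫⁻ x : EuclideanSpace ℝ (Fin d), potential p r x := by
        rw [Finset.sum_const, nsmul_eq_mul]

/-- Lower-bound part of Proposition 4.2: any coupling between Lebesgue measure on the
cube `C_n = [0,n]^d` and the counting measure of a set of `n^d` points has `p`-cost at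
least `c_{d,p} n^d`, where `c_{d,p} = ∫_{B(0,r_d)} ‖x‖^p dx` and `r_d` is the radius of
the ball of unit volume. -/
theorem stmt10 {d : ℕ} (hd : 1 ≤ d) (p : ℝ) (hp : 1 ≤ p) (n : ℕ) (hn : 1 ≤ n)
    (Pts : Finset (EuclideanSpace ℝ (Fin d))) (hcard : Pts.card = n ^ d)
    (r : ℝ) (hr : 0 < r)
    (hrvol : volume (Metric.ball (0 : EuclideanSpace ℝ (Fin d)) r) = 1) :
    0 < (∫ x in Metric.ball (0 : EuclideanSpace ℝ (Fin d)) r, ‖x‖ ^ p) ∧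
    ∀ M : Measure (EuclideanSpace ℝ (Fin d) × EuclideanSpace ℝ (Fin d)),
      Measure.map Prod.fst M = volume.restrict (cube d n) →
      Measure.map Prod.snd M = ∑ y ∈ Pts, Measure.dirac y →
      ENNReal.ofReal ((∫ x in Metric.ball (0 : EuclideanSpace ℝ (Fin d)) r, ‖x‖ ^ p)
          * (n : ℝ) ^ d) ≤
        ∫⁻ q, ENNReal.ofReal (dist q.1 q.2 ^ p) ∂M := by
  have hp0 : 0 < p := by linarith
  have hint := integrableOn_ball_norm_rpow (d := d) hp r
  have hnn : ∀ x : EuclideanSpace ℝ (Fin d), 0 ≤ ‖x‖ ^ p := fun x => by positivity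
  refine ⟨?_, fun M h1 h2 => ?_⟩
  · have : Nonempty (Fin d) := ⟨⟨0, hd⟩⟩
    rw [setIntegral_pos_iff_support_of_nonneg_ae (Filter.Eventually.of_forall hnn) hint]
    have hsub : Metric.ball (0 : EuclideanSpace ℝ (Fin d)) r \ {0}
        ⊆ Function.support (fun x : EuclideanSpace ℝ (Fin d) => ‖x‖ ^ p) ∩ Metric.ball 0 r := by
      rintro x ⟨hx, hx0⟩
      exact ⟨(Real.rpow_pos_of_pos (norm_pos_iff.2 hx0) p).ne', hx⟩
    refine lt_of_lt_of_le ?_ (measure_mono hsub)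
    rw [measure_sdiff_null (measure_singleton _), hrvol]
    exact one_pos
  · have hmass : M Set.univ = (n ^ d : ℕ) := by
      have := congrArg (fun m => m Set.univ) h2
      simpa [Measure.map_apply measurable_snd MeasurableSet.univ, Measure.finsetSum_apply,
        hcard] using this
    have hadd := lintegral_ball_add_potential (d := d) hp hr hrvol
    have hpot := lintegral_potential_coupling_le p r (cube d n) Pts M h1 h2
    rw [hcard] at hpot
    have hc : ENNReal.ofReal ((∫ x in Metric.ball (0 : EuclideanSpace ℝ (Fin d)) r, ‖x‖ ^ p)
          * (n : ℝ) ^ d) = (n ^ d : ℕ) *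
        ∫⁻ x in Metric.ball (0 : EuclideanSpace ℝ (Fin d)) r, ENNReal.ofReal (‖x‖ ^ p) := by
      rw [ENNReal.ofReal_mul (integral_nonneg hnn), ← Nat.cast_pow, ENNReal.ofReal_natCast,
        ofReal_integral_eq_lintegral_ofReal hint (Filter.Eventually.of_forall hnn), mul_comm]
    have hfin : ((n ^ d : ℕ) : ℝ≥0∞) * ∫⁻ x : EuclideanSpace ℝ (Fin d), potential p r x ≠ ∞ := by
      refine ENNReal.mul_ne_top (ENNReal.natCast_ne_top _) (ne_top_of_le_ne_top ?_
        (le_add_self.trans_eq hadd))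
      exact ENNReal.ofReal_ne_top
    rw [hc]
    refine (ENNReal.add_le_add_iff_right hfin).1 ?_
    calc _ = ∫⁻ _, ENNReal.ofReal (r ^ p) ∂M := by
          rw [← mul_add, hadd, lintegral_const, hmass, mul_comm]
      _ ≤ ∫⁻ q, (ENNReal.ofReal (dist q.1 q.2 ^ p) + potential p r (q.1 - q.2)) ∂M := by
          refine lintegral_mono fun q => ?_
          rw [dist_eq_norm]
          exact le_add_tsub
      _ = (∫⁻ q, ENNReal.ofReal (dist q.1 q.2 ^ p) ∂M)
            + ∫⁻ q, potential p r (q.1 - q.2) ∂M :=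
          lintegral_add_right _
            ((measurable_potential p r).comp (measurable_fst.sub measurable_snd))
      _ ≤ _ := by gcongr
end

section
/- Let q ≥ 1 and let K : ℝ^q × ℝ^q → ℂ be a continuous kernel that is Hermitian, K(y,x) = conj(K(x,y)), and reproducing, K(x,y) = ∫_{ℝ^q} K(x,z) K(z,y) dz for all x, y (with the integral absolutely convergent), and such that I := ∫_{ℝ^q} K(z,z) dz < ∞. Then for every m ≥ 2 and all z_1, …, z_{m−1} ∈ ℝ^q, the function z ↦ det((K(z_i, z_j))_{1≤i,j≤m}) with z_m = z is integrable over ℝ^q and ∫_{ℝ^q} det((K(z_i, z_j))_{1≤i,j≤m}) dz_m = (I − m + 1) · det((K(z_i, z_j))_{1≤i,j≤m−1}). -/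
/-!
Expanding the determinant along its last row and last column writes it as
`K(w,w) · det A - ∑ i j, K(w,z_j) K(z_i,w) · adj(A) j i`, where `A = (K(z_i,z_j))` does not depend
on `w` (`det_border`). Each summand is integrable in `w`, and the reproducing property gives
`∫ K(z_i,w) K(w,z_j) dw = A i j`. Hence the double sum integrates to `tr (adj(A) A) = m · det A`.
-/

/-- Cauchy's expansion of a bordered determinant along its last row and column. -/
theorem det_border {R : Type*} [CommRing R] {n : ℕ} (M : Matrix (Fin (n + 2)) (Fin (n + 2)) R) :
    M.det = M (Fin.last _) (Fin.last _) * (M.submatrix Fin.castSucc Fin.castSucc).det -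
      ∑ j : Fin (n + 1), ∑ i : Fin (n + 1),
        (M.submatrix Fin.castSucc Fin.castSucc).adjugate j i *
          (M i.castSucc (Fin.last _) * M (Fin.last _) j.castSucc) := by
  rw [Matrix.det_succ_row M (Fin.last _), Fin.sum_univ_castSucc, add_comm, sub_eq_add_neg,
    ← Finset.sum_neg_distrib]
  congr 1
  · have hsub : M.submatrix (Fin.last (n + 1)).succAbove (Fin.last (n + 1)).succAbove =
        M.submatrix Fin.castSucc Fin.castSucc := by
      ext i j
      simp
    rw [hsub, Even.neg_one_pow ⟨_, rfl⟩, one_mul]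
  · refine Finset.sum_congr rfl fun j _ => ?_
    rw [Matrix.det_succ_column _ (Fin.last n), Finset.mul_sum, ← Finset.sum_neg_distrib]
    refine Finset.sum_congr rfl fun i _ => ?_
    rw [Matrix.adjugate_fin_succ_eq_det_submatrix]
    have hsub : (M.submatrix (Fin.last (n + 1)).succAbove j.castSucc.succAbove).submatrix
        i.succAbove (Fin.last n).succAbove =
        (M.submatrix Fin.castSucc Fin.castSucc).submatrix i.succAbove j.succAbove := by
      ext a b
      simp [Fin.castSucc_succAbove_castSucc]
    have hlast : j.castSucc.succAbove (Fin.last n) = Fin.last (n + 1) :=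
      Fin.succAbove_of_le_castSucc _ _ (Fin.castSucc_le_castSucc_iff.2 (Fin.le_last j))
    rw [hsub]
    simp only [Matrix.submatrix_apply, hlast, Fin.succAbove_last, Fin.val_last, Fin.val_castSucc]
    -- The two expansions have sign exponents `(n + 1) + j` and `i + n`, of total parity `i + j + 1`.
    have hsign : (-1 : R) ^ (n + 1 + (j : ℕ)) * (-1) ^ ((i : ℕ) + n) = -(-1) ^ ((i : ℕ) + j) := by
      rw [← pow_add, show n + 1 + (j : ℕ) + (i + n) = (i + j) + 1 + 2 * n by ring, pow_add,
        pow_mul, pow_succ]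
      simp
    linear_combination (M i.castSucc (Fin.last _) * M (Fin.last _) j.castSucc *
      ((M.submatrix Fin.castSucc Fin.castSucc).submatrix i.succAbove j.succAbove).det) * hsign

open MeasureTheory
open scoped BigOperators

/-- Proposition 3.3 (core integration identity): for a continuous Hermitian reproducing
kernel `K` with `I = ∫ K(z,z) dz < ∞`, integrating the `(m+1) × (m+1)` determinant
`det(K(z_i,z_j))` in its last variable yields `(I − m) · det(K(z_i,z_j))_{i,j ≤ m}`. -/
theorem stmt14 {q : ℕ} (hq : 1 ≤ q)
    (K : EuclideanSpace ℝ (Fin q) → EuclideanSpace ℝ (Fin q) → ℂ)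
    (hcont : Continuous fun p : EuclideanSpace ℝ (Fin q) × EuclideanSpace ℝ (Fin q) =>
      K p.1 p.2)
    (hherm : ∀ x y, K y x = starRingEnd ℂ (K x y))
    (hrepr_int : ∀ x y, Integrable fun z => K x z * K z y)
    (hrepr : ∀ x y, K x y = ∫ z, K x z * K z y)
    (hIint : Integrable fun z => K z z) :
    ∀ (m : ℕ), 1 ≤ m → ∀ z : Fin m → EuclideanSpace ℝ (Fin q),
      (Integrable fun w =>
        (Matrix.of fun i j : Fin (m + 1) =>
          K ((Fin.snoc z w : Fin (m + 1) → EuclideanSpace ℝ (Fin q)) i)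
            ((Fin.snoc z w : Fin (m + 1) → EuclideanSpace ℝ (Fin q)) j)).det) ∧
      (∫ w, (Matrix.of fun i j : Fin (m + 1) =>
          K ((Fin.snoc z w : Fin (m + 1) → EuclideanSpace ℝ (Fin q)) i)
            ((Fin.snoc z w : Fin (m + 1) → EuclideanSpace ℝ (Fin q)) j)).det) =
        ((∫ z', K z' z') - (m : ℂ)) *
          (Matrix.of fun i j : Fin m => K (z i) (z j)).det := by
  intro m hm z
  obtain ⟨n, rfl⟩ : ∃ n, m = n + 1 := ⟨m - 1, by omega⟩
  set A : Matrix (Fin (n + 1)) (Fin (n + 1)) ℂ := Matrix.of fun i j => K (z i) (z j) with hA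
  have hdet : ∀ w, (Matrix.of fun i j : Fin (n + 1 + 1) =>
      K ((Fin.snoc z w : Fin (n + 1 + 1) → EuclideanSpace ℝ (Fin q)) i)
        ((Fin.snoc z w : Fin (n + 1 + 1) → EuclideanSpace ℝ (Fin q)) j)).det =
      K w w * A.det - ∑ j, ∑ i, A.adjugate j i * (K (z i) w * K w (z j)) := by
    intro w
    have hsub : (Matrix.of fun i j : Fin (n + 1 + 1) =>
      K ((Fin.snoc z w : Fin (n + 1 + 1) → EuclideanSpace ℝ (Fin q)) i)
        ((Fin.snoc z w : Fin (n + 1 + 1) → EuclideanSpace ℝ (Fin q)) j)).submatrix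
          Fin.castSucc Fin.castSucc = A := by
      ext i j
      simp [hA]
    rw [det_border, hsub]
    simp
  simp only [hdet]
  have hdiag : Integrable fun w => K w w * A.det := hIint.mul_const _
  have hterm : ∀ j i, Integrable fun w => A.adjugate j i * (K (z i) w * K w (z j)) :=
    fun j i => (hrepr_int (z i) (z j)).const_mul _
  have hrow : ∀ j, Integrable fun w => ∑ i, A.adjugate j i * (K (z i) w * K w (z j)) :=
    fun j => integrable_finsetSum _ fun i _ => hterm j i
  have hsum : Integrable fun w => ∑ j, ∑ i, A.adjugate j i * (K (z i) w * K w (z j)) :=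
    integrable_finsetSum _ fun j _ => hrow j
  refine ⟨hdiag.sub hsum, ?_⟩
  have htrace : ∑ j, ∑ i, A.adjugate j i * A i j = ((n + 1 : ℕ) : ℂ) * A.det := by
    have h := congrArg Matrix.trace (Matrix.adjugate_mul A)
    rw [Matrix.trace_smul, Matrix.trace_one, Fintype.card_fin, smul_eq_mul, mul_comm] at h
    simpa only [Matrix.trace, Matrix.diag_apply, Matrix.mul_apply] using h
  have hint : ∫ w, ∑ j, ∑ i, A.adjugate j i * (K (z i) w * K w (z j)) =
      ((n + 1 : ℕ) : ℂ) * A.det := by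
    rw [integral_finsetSum _ fun j _ => hrow j, ← htrace]
    refine Finset.sum_congr rfl fun j _ => ?_
    rw [integral_finsetSum _ fun i _ => hterm j i]
    refine Finset.sum_congr rfl fun i _ => ?_
    rw [integral_const_mul, ← hrepr]
    rfl
  rw [integral_sub hdiag hsum, hint, integral_mul_const, sub_mul]
end

section
/- Let d ≥ 1, let m be a nonnegative Borel measure on ℝ^d, and let g : ℝ^d → ℝ be continuous and satisfy: g ≥ 0 on ℝ^d; g(x) ≤ C(1+‖x‖)^{−(d+1)} for all x and some C < ∞; g(u) ≥ κ for all ‖u‖ ≤ 1 and some κ > 0; g(0) = sup_{x} g(x); γ := ∫_{ℝ^d} g(x) dx ∈ (0,∞); and ∫_{ℝ^d} g(y−x) dm(y) = γ for every x ∈ ℝ^d. Then: (a) m(B(x,1)) ≤ γ/κ for every x ∈ ℝ^d; (b) there exist R < ∞ and η > 0 such that m(B(x,R)) ≥ η for every x ∈ ℝ^d. -/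
/-!
On `B(x,1)` one has `g(· - x) ≥ κ`, so (a) is Markov's inequality.

For (b), the mass that the identity at `x` collects far away from `x` is small uniformly in `x`.
Let `H` be the majorant `C (1 + ‖·‖)^{-(d+1)}`, which is integrable and changes by a factor of at
most `K = 2^{d+1}` over distance `1`. Replacing `H(y - x)` by its average over `B(y,1)` and
exchanging the integrals by Tonelli turns the `m`-mass into `m(B(z,1))`, which (a) controls
(`lintegral_tail_le`):
`vol(B(0,1)) ∫_{‖y-x‖ ≥ R+1} H(y-x) dm(y) ≤ K (γ/κ) ∫_{‖z‖ ≥ R} H(z) dz → 0` as `R → ∞`.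
For `R` large the left-hand integral is below `γ/2`, so `B(x,R+1)` contributes at least `γ/2` to
`∫ g(y-x) dm(y) = γ`; as `g ≤ g(0)`, this forces `m(B(x,R+1)) ≥ γ/(2 g(0))`.
-/

open MeasureTheory Metric
open scoped ENNReal NNReal

/-- A measure with uniformly bounded mass on unit balls integrates the tail of a slowly varying
function no worse, up to constants, than Lebesgue measure does. -/
lemma lintegral_tail_le {d : ℕ} (m : Measure (EuclideanSpace ℝ (Fin d))) [SFinite m]
    (H : EuclideanSpace ℝ (Fin d) → ℝ≥0∞) (hH : Measurable H) (K A : ℝ≥0∞)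
    (hK : ∀ y z, dist z y < 1 → H y ≤ K * H z)
    (hA : ∀ x, m (ball x 1) ≤ A) (x : EuclideanSpace ℝ (Fin d)) (R : ℝ) :
    volume (ball (0 : EuclideanSpace ℝ (Fin d)) 1) *
      ∫⁻ y in (ball x (R + 1))ᶜ, H (y - x) ∂m ≤
      K * A * ∫⁻ z in (ball (0 : EuclideanSpace ℝ (Fin d)) R)ᶜ, H z := by
  set G : EuclideanSpace ℝ (Fin d) → ℝ≥0∞ :=
    fun z => K * ((ball (0 : EuclideanSpace ℝ (Fin d)) R)ᶜ).indicator H (z - x) with hG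
  have hGm : Measurable G :=
    ((hH.indicator measurableSet_ball.compl).comp (measurable_id.sub_const x)).const_mul K
  have hF : Measurable (fun p : EuclideanSpace ℝ (Fin d) × EuclideanSpace ℝ (Fin d) =>
      ({p | dist p.2 p.1 < 1} : Set _).indicator (fun p => G p.2) p) := by
    refine (hGm.comp measurable_snd).indicator ?_
    exact (isOpen_lt (by fun_prop) continuous_const).measurableSet
  calc volume (ball (0 : EuclideanSpace ℝ (Fin d)) 1) *
        ∫⁻ y in (ball x (R + 1))ᶜ, H (y - x) ∂m
      = ∫⁻ y in (ball x (R + 1))ᶜ,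
          volume (ball (0 : EuclideanSpace ℝ (Fin d)) 1) * H (y - x) ∂m := by
        rw [lintegral_const_mul _ (by fun_prop)]
    _ ≤ ∫⁻ y in (ball x (R + 1))ᶜ, (∫⁻ z, (ball y 1).indicator G z) ∂m := by
        refine setLIntegral_mono' measurableSet_ball.compl fun y hy => ?_
        rw [lintegral_indicator measurableSet_ball, mul_comm,
          ← Measure.addHaar_ball_center volume y 1, ← setLIntegral_const]
        refine setLIntegral_mono' measurableSet_ball fun z hz => ?_
        have hzx : z - x ∈ (ball (0 : EuclideanSpace ℝ (Fin d)) R)ᶜ := by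
          simp only [Set.mem_compl_iff, mem_ball, not_lt, dist_zero_right] at *
          rw [← dist_eq_norm]
          have := dist_triangle y z x
          rw [dist_comm y z] at this
          linarith
        simp only [hG, Set.indicator_of_mem hzx]
        exact hK _ _ (by simpa using hz)
    _ ≤ ∫⁻ y, (∫⁻ z, (ball y 1).indicator G z) ∂m := setLIntegral_le_lintegral _ _
    _ = ∫⁻ z, (∫⁻ y, (ball z 1).indicator (fun _ => G z) y ∂m) := by
        classical
        have e := lintegral_lintegral_swap (μ := m)
          (ν := (volume : Measure (EuclideanSpace ℝ (Fin d))))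
          (f := fun y z => (ball y 1).indicator G z)
          (hF.aemeasurable.congr (Filter.Eventually.of_forall fun p => by
            simp [Set.indicator_apply, Function.uncurry]))
        rw [e]
        refine lintegral_congr fun z => lintegral_congr fun y => ?_
        simp [Set.indicator_apply, dist_comm]
    _ ≤ ∫⁻ z, G z * A := by
        refine lintegral_mono fun z => ?_
        rw [lintegral_indicator measurableSet_ball, setLIntegral_const]
        gcongr
        exact hA z
    _ = K * A * ∫⁻ z in (ball (0 : EuclideanSpace ℝ (Fin d)) R)ᶜ, H z := by
        have hHx : Measurable fun z =>
            ((ball (0 : EuclideanSpace ℝ (Fin d)) R)ᶜ).indicator H (z - x) :=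
          (hH.indicator measurableSet_ball.compl).comp (measurable_id.sub_const x)
        rw [lintegral_mul_const _ hGm, hG, lintegral_const_mul _ hHx,
          lintegral_sub_right_eq_self (μ := volume)
            (fun z => ((ball (0 : EuclideanSpace ℝ (Fin d)) R)ᶜ).indicator H z) x,
          lintegral_indicator measurableSet_ball.compl]
        ring

lemma tendsto_tail {d : ℕ} (H : EuclideanSpace ℝ (Fin d) → ℝ≥0∞) (hfin : ∫⁻ z, H z ≠ ∞) :
    Filter.Tendsto
      (fun n : ℕ => ∫⁻ z in (ball (0 : EuclideanSpace ℝ (Fin d)) (n : ℝ))ᶜ, H z)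
      Filter.atTop (nhds 0) := by
  have h0 : volume.withDensity H
      (⋂ n : ℕ, (ball (0 : EuclideanSpace ℝ (Fin d)) (n : ℝ))ᶜ) = 0 := by
    rw [← Set.compl_iUnion, iUnion_ball_nat]
    simp
  have := tendsto_measure_iInter_atTop (μ := volume.withDensity H)
    (s := fun n : ℕ => (ball (0 : EuclideanSpace ℝ (Fin d)) (n : ℝ))ᶜ)
    (fun n => measurableSet_ball.compl.nullMeasurableSet)
    (fun a b hab => Set.compl_subset_compl.2 (ball_subset_ball (by exact_mod_cast hab)))
    ⟨0, ne_top_of_le_ne_top (by simpa using hfin) (measure_mono (Set.subset_univ _))⟩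
  rw [h0] at this
  refine this.congr fun n => ?_
  exact withDensity_apply _ measurableSet_ball.compl

/-- Deterministic core of Proposition 5.4 (stealthy measures): if a nonnegative measure
`m` satisfies `∫ g(y−x) dm(y) = γ = ∫ g` for all `x`, for a suitable kernel `g`, then
`m` has uniformly bounded mass on unit balls and uniformly positive mass on balls of
some fixed radius `R` (bounded holes). -/
theorem stmt17 {d : ℕ} (hd : 1 ≤ d) (m : Measure (EuclideanSpace ℝ (Fin d)))
    (g : EuclideanSpace ℝ (Fin d) → ℝ) (hcont : Continuous g)
    (hg0 : ∀ x, 0 ≤ g x)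
    (C : ℝ) (hgdecay : ∀ x, g x ≤ C * (1 + ‖x‖) ^ (-(d : ℝ) - 1))
    (κ : ℝ) (hκ : 0 < κ) (hglow : ∀ u : EuclideanSpace ℝ (Fin d), ‖u‖ ≤ 1 → κ ≤ g u)
    (hgmax : ∀ x, g x ≤ g 0)
    (hgint : Integrable g) (hγpos : 0 < ∫ x, g x)
    (hm : ∀ x : EuclideanSpace ℝ (Fin d),
      ∫⁻ y, ENNReal.ofReal (g (y - x)) ∂m = ENNReal.ofReal (∫ x', g x')) :
    (∀ x : EuclideanSpace ℝ (Fin d),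
      m (Metric.ball x 1) ≤ ENNReal.ofReal ((∫ x', g x') / κ)) ∧
    ∃ R : ℝ, ∃ η > (0 : ℝ), ∀ x : EuclideanSpace ℝ (Fin d),
      ENNReal.ofReal η ≤ m (Metric.ball x R) := by
  set γ := ∫ x, g x with hγ
  have ha : ∀ x : EuclideanSpace ℝ (Fin d), m (ball x 1) ≤ ENNReal.ofReal (γ / κ) := by
    intro x
    rw [ENNReal.ofReal_div_of_pos hκ, ENNReal.le_div_iff_mul_le (by simp [hκ]) (by simp),
      mul_comm, ← setLIntegral_const, ← hm x]
    refine (setLIntegral_mono' measurableSet_ball fun y hy => ?_).trans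
      (setLIntegral_le_lintegral (ball x 1) _)
    refine ENNReal.ofReal_le_ofReal (hglow _ ?_)
    rw [← dist_eq_norm]
    exact (mem_ball.1 hy).le
  refine ⟨ha, ?_⟩
  have : IsLocallyFiniteMeasure m := ⟨fun x =>
    ⟨ball x 1, ball_mem_nhds x one_pos, (ha x).trans_lt ENNReal.ofReal_lt_top⟩⟩
  have hκ0 : κ ≤ g 0 := hglow 0 (by simp)
  have hg00 : 0 < g 0 := hκ.trans_le hκ0
  have hC : 0 ≤ C := by
    have := hgdecay 0
    simp at this
    linarith
  set H : EuclideanSpace ℝ (Fin d) → ℝ≥0∞ :=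
    fun z => ENNReal.ofReal (C * (1 + ‖z‖) ^ (-(d : ℝ) - 1)) with hHdef
  have hHm : Measurable H := by fun_prop
  have hHfin : ∫⁻ z, H z ≠ ∞ := by
    have hint : Integrable (fun z : EuclideanSpace ℝ (Fin d) =>
        C * (1 + ‖z‖) ^ (-(d : ℝ) - 1)) := by
      have := (integrable_one_add_norm (E := EuclideanSpace ℝ (Fin d)) (μ := volume)
        (r := (d : ℝ) + 1) (by simp)).const_mul C
      simpa [neg_add, sub_eq_add_neg, add_comm] using this
    exact hint.lintegral_lt_top.ne
  set K : ℝ≥0∞ := ENNReal.ofReal ((2 : ℝ) ^ ((d : ℝ) + 1)) with hKdef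
  have hK : ∀ y z, dist z y < 1 → H y ≤ K * H z := by
    intro y z hzy
    rw [hKdef, hHdef]
    simp only
    rw [← ENNReal.ofReal_mul (by positivity)]
    refine ENNReal.ofReal_le_ofReal ?_
    have hn : (1 + ‖z‖) / 2 ≤ 1 + ‖y‖ := by
      have := norm_le_norm_add_norm_sub' z y
      rw [← dist_eq_norm] at this
      have := norm_nonneg y
      linarith
    have h1 : (1 + ‖y‖) ^ (-(d : ℝ) - 1) ≤ ((1 + ‖z‖) / 2) ^ (-(d : ℝ) - 1) :=
      Real.rpow_le_rpow_of_nonpos (by positivity) hn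
        (by have : (0 : ℝ) ≤ d := d.cast_nonneg
            linarith)
    rw [Real.div_rpow (by positivity) (by norm_num)] at h1
    have h2 : (2 : ℝ) ^ (-(d : ℝ) - 1) = ((2 : ℝ) ^ ((d : ℝ) + 1))⁻¹ := by
      rw [← Real.rpow_neg (by norm_num)]
      congr 1
      ring
    rw [h2, div_inv_eq_mul] at h1
    calc C * (1 + ‖y‖) ^ (-(d : ℝ) - 1) ≤
          C * ((1 + ‖z‖) ^ (-(d : ℝ) - 1) * 2 ^ ((d : ℝ) + 1)) := by gcongr
      _ = _ := by ring
  set V := volume (ball (0 : EuclideanSpace ℝ (Fin d)) 1) with hV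
  have hV0 : V ≠ 0 := (measure_ball_pos _ _ one_pos).ne'
  have hVt : V ≠ ∞ := measure_ball_lt_top.ne
  set A := ENNReal.ofReal (γ / κ) with hAdef
  have hlim := ENNReal.Tendsto.const_mul (a := K * A) (tendsto_tail H hHfin)
    (Or.inr (ENNReal.mul_ne_top ENNReal.ofReal_ne_top ENNReal.ofReal_ne_top))
  rw [mul_zero] at hlim
  have hγ2 : 0 < ENNReal.ofReal (γ / 2) := by simpa using hγpos
  obtain ⟨n, hn⟩ := (hlim.eventually_lt_const
    (show (0 : ℝ≥0∞) < V * ENNReal.ofReal (γ / 2) from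
      ENNReal.mul_pos hV0 hγ2.ne')).exists
  refine ⟨n + 1, γ / 2 / g 0, by positivity, fun x => ?_⟩
  have htail : ∫⁻ y in (ball x (n + 1))ᶜ, H (y - x) ∂m ≤ ENNReal.ofReal (γ / 2) := by
    have := (lintegral_tail_le m H hHm K A hK ha x n).trans hn.le
    exact (ENNReal.mul_le_mul_iff_right hV0 hVt).1 this
  have hsplit := lintegral_add_compl (μ := m) (fun y => ENNReal.ofReal (g (y - x)))
    (measurableSet_ball (x := x) (ε := (n : ℝ) + 1))
  rw [hm x] at hsplit
  have h1 : ∫⁻ y in ball x ((n : ℝ) + 1), ENNReal.ofReal (g (y - x)) ∂m ≤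
      ENNReal.ofReal (g 0) * m (ball x (n + 1)) := by
    rw [← setLIntegral_const]
    exact lintegral_mono fun y => ENNReal.ofReal_le_ofReal (hgmax _)
  have h2 : ∫⁻ y in (ball x ((n : ℝ) + 1))ᶜ, ENNReal.ofReal (g (y - x)) ∂m ≤
      ENNReal.ofReal (γ / 2) :=
    (lintegral_mono fun y => ENNReal.ofReal_le_ofReal (hgdecay _)).trans htail
  have h3 : ENNReal.ofReal (γ / 2) + ENNReal.ofReal (γ / 2) ≤
      ENNReal.ofReal (g 0) * m (ball x (n + 1)) + ENNReal.ofReal (γ / 2) := by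
    rw [← ENNReal.ofReal_add (by positivity) (by positivity), add_halves, ← hsplit]
    exact add_le_add h1 h2
  rw [ENNReal.ofReal_div_of_pos hg00]
  refine ENNReal.div_le_of_le_mul' ?_
  exact (ENNReal.add_le_add_iff_right ENNReal.ofReal_ne_top).1 h3
end
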